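/- arXiv:1104.3090 — 2 statements merged into one kernel-verified Lean document; each statement's English description precedes it below -/
import Mathlib

section
/- Let G be a connected simple graph on n ≥ 1 vertices with maximum degree at most 3 such that for every vertex v the subgraph induced on the remaining vertices is connected. Then G has a spanning closed walk of length at most 4n/3 − 2/3. (This settles the conjecture of Boyd, Sitters, van der Ster and Stougie that every 2-vertex-connected subcubic graph has a spanning Eulerian multigraph with at most 4n/3 − 2/3 edges.) -/
open SimpleGraph

/-!
Let `E` be the edge set. In a 2-edge-connected graph every cut with an odd number of edges has at
least three, so the vector equal to `1 / 3` on `E` lies in the polyhedron of the joins of the odd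
vertices: for any weights, some join `J` carries at most a third of the total weight. This follows
from Seymour's packing of cuts for conservative bipartite weights, by Sebő's argument: some star
has weights that can be moved one step towards zero without creating a negative cycle. A large
weight on the stars of the cubic vertices makes `J` use exactly one edge there.

Following Mömke and Svensson, add to `E` a second copy of `J`, but delete, rather than double, the
edges of `J` in a set `R` of removable edges. If `R` has weight `-1` and `E \ R` weight `1`, the
bound on `J` gives a tour of length at most `(4 |E| - 2 |R|) / 3`. For a depth-first search tree
with set `B` of back edges, let `R` consist of `B` and of each tree edge from a cubic vertex `u` to
a child whose subtree has a back edge to `u`. As `J` uses one edge at `u`, deletions cannot separate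
that subtree from `u`. Except for one extra edge at the root, each vertex receives at most as many
back edges from below as it has such children, so `|R| ≥ 2 |B| - 1`. With `|E| = n - 1 + |B|` the
length is at most `(4 n - 2) / 3`.
-/

namespace SubcubicTour

open Finset

lemma sum_symmDiff_add_two_nsmul_sum_inter {ι M : Type*} [DecidableEq ι] [AddCommMonoid M]
    (C D : Finset ι) (f : ι → M) :
    ∑ i ∈ symmDiff C D, f i + 2 • ∑ i ∈ C ∩ D, f i = ∑ i ∈ C, f i + ∑ i ∈ D, f i := by
  rw [symmDiff_def, sup_eq_union, sum_union disjoint_sdiff_sdiff, ← sum_inter_add_sum_sdiff C D,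
    ← sum_inter_add_sum_sdiff D C, inter_comm D C]
  abel

section Boundary

variable {V ε : Type*} [DecidableEq V] {ends : ε → Sym2 V} {C D P Q : Finset ε} {e : ε}
  {u v x y z : V}

/-- The indicator of the vertex `v`, as a vector over the field with two elements. -/
def point (v : V) : V → ZMod 2 := Pi.single v 1

lemma point_apply (u v : V) : point u v = if v = u then 1 else 0 := Pi.single_apply u 1 v

lemma sum_point (S : Finset V) (u : V) : ∑ v ∈ S, point u v = if u ∈ S then 1 else 0 := by
  simp [point_apply]

lemma point_injective : Function.Injective (point : V → V → ZMod 2) := by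
  intro u v h
  simpa [point_apply] using congrFun h u

lemma point_add_point_eq_zero_iff : point x + point y = 0 ↔ x = y := by
  rw [← ZModModule.sub_eq_add, sub_eq_zero, point_injective.eq_iff]

/-- The mod 2 boundary of an unordered pair. It vanishes on the diagonal, so loops are harmless. -/
def edgeBoundary : Sym2 V → V → ZMod 2 :=
  Sym2.lift ⟨fun x y ↦ point x + point y, fun _ _ ↦ add_comm _ _⟩

@[simp] lemma edgeBoundary_mk (x y : V) : edgeBoundary s(x, y) = point x + point y := rfl

/-- The mod 2 boundary of a set of edges of the multigraph with edges `ε` and endpoint map `ends`: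
it records at each vertex the parity of the degree. The even sets of edges are those with
boundary `0`. -/
def boundary (ends : ε → Sym2 V) (C : Finset ε) : V → ZMod 2 := ∑ e ∈ C, edgeBoundary (ends e)

@[simp] lemma boundary_empty : boundary ends ∅ = 0 := sum_empty

lemma boundary_singleton (h : ends e = s(x, y)) : boundary ends {e} = point x + point y := by
  rw [boundary, sum_singleton, h, edgeBoundary_mk]

section DecidableEq

variable [DecidableEq ε]

lemma boundary_symmDiff (C D : Finset ε) :
    boundary ends (symmDiff C D) = boundary ends C + boundary ends D := by
  have h := sum_symmDiff_add_two_nsmul_sum_inter C D (fun e ↦ edgeBoundary (ends e))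
  rwa [ZModModule.char_nsmul_eq_zero, add_zero] at h

lemma boundary_sdiff (h : D ⊆ C) : boundary ends (C \ D) = boundary ends C + boundary ends D := by
  rw [← symmDiff_of_ge h, boundary_symmDiff]

end DecidableEq

/-- `P` is an `{x, y}`-join: exactly `x` and `y` have odd degree in `P` (no vertex if `x = y`). -/
def IsJoin (ends : ε → Sym2 V) (P : Finset ε) (x y : V) : Prop :=
  boundary ends P = point x + point y

lemma isJoin_self_iff : IsJoin ends P x x ↔ boundary ends P = 0 := by
  rw [IsJoin, ZModModule.add_self]

lemma isJoin_empty_iff : IsJoin ends ∅ x y ↔ x = y := by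
  rw [IsJoin, boundary_empty, eq_comm, point_add_point_eq_zero_iff]

lemma isJoin_singleton (h : ends e = s(x, y)) : IsJoin ends {e} x y := boundary_singleton h

namespace IsJoin

protected lemma symm (h : IsJoin ends P x y) : IsJoin ends P y x := by rwa [IsJoin, add_comm]

protected lemma nonempty (h : IsJoin ends P x y) (hxy : x ≠ y) : P.Nonempty := by
  rw [nonempty_iff_ne_empty]
  rintro rfl
  exact hxy (isJoin_empty_iff.mp h)

variable [DecidableEq ε]

protected lemma symmDiff (hP : IsJoin ends P x y) (hQ : IsJoin ends Q y z) :
    IsJoin ends (symmDiff P Q) x z := by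
  rw [IsJoin, boundary_symmDiff, hP, hQ, ZModModule.add_add_add_cancel]

protected lemma union (hP : IsJoin ends P x y) (hQ : IsJoin ends Q y z) (hPQ : Disjoint P Q) :
    IsJoin ends (P ∪ Q) x z := by
  rw [← sup_eq_union, ← hPQ.symmDiff_eq_sup]
  exact hP.symmDiff hQ

protected lemma sdiff (hP : IsJoin ends P x y) (hQ : IsJoin ends Q y z) (hQP : Q ⊆ P) :
    IsJoin ends (P \ Q) x z := by
  rw [← symmDiff_of_ge hQP]
  exact hP.symmDiff hQ

protected lemma insert (hP : IsJoin ends P x y) (he : ends e = s(y, z)) (heP : e ∉ P) :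
    IsJoin ends (insert e P) x z := by
  rw [insert_eq, union_comm]
  exact hP.union (isJoin_singleton he) (disjoint_singleton_right.mpr heP)

protected lemma erase (hP : IsJoin ends P x y) (he : ends e = s(y, z)) (heP : e ∈ P) :
    IsJoin ends (P.erase e) x z := by
  rw [erase_eq]
  exact hP.sdiff (isJoin_singleton he) (singleton_subset_iff.mpr heP)

end IsJoin

end Boundary

section Cut

variable {V ε : Type*} {ends : ε → Sym2 V} {C D E : Finset ε} {S : Finset V} {e : ε} {s t x y : V}

open Classical in
/-- The edges of `E` with exactly one end in `S`. The star of a vertex `t` is `cut ends E {t}`. -/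
noncomputable def cut (ends : ε → Sym2 V) (E : Finset ε) (S : Finset V) : Finset ε :=
  {e ∈ E | ∃ x ∈ S, ∃ y ∉ S, ends e = s(x, y)}

lemma mem_cut : e ∈ cut ends E S ↔ e ∈ E ∧ ∃ x ∈ S, ∃ y ∉ S, ends e = s(x, y) := by
  simp only [cut, mem_filter]

lemma exists_mem_notMem_eq_mk_iff :
    (∃ u ∈ S, ∃ v ∉ S, s(x, y) = s(u, v)) ↔ ¬(x ∈ S ↔ y ∈ S) := by
  constructor
  · rintro ⟨u, hu, v, hv, huv⟩
    obtain ⟨rfl, rfl⟩ | ⟨rfl, rfl⟩ := Sym2.eq_iff.mp huv <;> simp [hu, hv]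
  · intro h
    by_cases hx : x ∈ S
    · exact ⟨x, hx, y, by simpa [hx] using h, rfl⟩
    · exact ⟨y, by simpa [hx] using h, x, hx, Sym2.eq_swap⟩

lemma mem_cut_iff (he : ends e = s(x, y)) : e ∈ cut ends E S ↔ e ∈ E ∧ ¬(x ∈ S ↔ y ∈ S) := by
  rw [mem_cut, he, exists_mem_notMem_eq_mk_iff]

lemma mem_cut_singleton : e ∈ cut ends E {t} ↔ e ∈ E ∧ ∃ y ≠ t, ends e = s(t, y) := by
  simp [mem_cut]

lemma cut_subset : cut ends E S ⊆ E := fun _ he ↦ (mem_cut.mp he).1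

lemma mem_cut_of_subset (hCE : C ⊆ E) : e ∈ cut ends C S ↔ e ∈ cut ends E S ∧ e ∈ C := by
  grind [mem_cut]

lemma cut_sdiff [DecidableEq ε] : cut ends (C \ D) S = cut ends C S \ D := by
  ext e
  grind [mem_cut]

lemma sum_card_cut_singleton [DecidableEq ε] (hCE : C ⊆ E) (A : Finset V) :
    ∑ v ∈ A, ((cut ends C {v}).card : ℤ) =
      ∑ e ∈ C, ∑ v ∈ A, if e ∈ cut ends E {v} then 1 else 0 := by
  rw [sum_comm]
  refine sum_congr rfl fun v _ ↦ ?_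
  rw [sum_boole, Nat.cast_inj]
  congr 1
  ext e
  rw [mem_filter, mem_cut_of_subset hCE, and_comm]

variable [DecidableEq V]

lemma card_cut (ends : ε → Sym2 V) (C : Finset ε) (S : Finset V) :
    ((cut ends C S).card : ZMod 2) = ∑ v ∈ S, boundary ends C v := by
  simp only [cut, natCast_card_filter, boundary, Finset.sum_apply]
  rw [sum_comm]
  refine sum_congr rfl fun e _ ↦ ?_
  induction ends e with | _ x y
  simp only [exists_mem_notMem_eq_mk_iff, edgeBoundary_mk, Pi.add_apply, sum_add_distrib, sum_point]
  by_cases hx : x ∈ S <;> by_cases hy : y ∈ S <;> simp [hx, hy, CharTwo.add_self_eq_zero]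

lemma card_cut_modEq (h : boundary ends C = boundary ends D) (S : Finset V) :
    (cut ends C S).card ≡ (cut ends D S).card [MOD 2] := by
  rw [← ZMod.natCast_eq_natCast_iff, card_cut, card_cut, h]

lemma even_card_cut (h : boundary ends C = 0) (S : Finset V) : Even (cut ends C S).card := by
  rw [← ZMod.natCast_eq_zero_iff_even, card_cut, h]
  simp

lemma IsJoin.odd_card_cut_iff (h : IsJoin ends C s t) :
    Odd (cut ends C S).card ↔ ¬(s ∈ S ↔ t ∈ S) := by
  rw [← ZMod.natCast_eq_one_iff_odd, card_cut, h]
  simp only [Pi.add_apply, sum_add_distrib, sum_point]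
  by_cases hs : s ∈ S <;> by_cases ht : t ∈ S <;> simp [hs, ht, CharTwo.add_self_eq_zero]

lemma boundary_apply (ends : ε → Sym2 V) (C : Finset ε) (v : V) :
    boundary ends C v = (cut ends C {v}).card := by
  rw [card_cut, sum_singleton]

end Cut

section Reach

variable {V ε : Type*} [Finite V] [DecidableEq V] {ends : ε → Sym2 V} {C P Q Z : Finset ε}
  {s t v x y : V}

/-- The vertices that a subset of `Z` joins to `x`: the connected component of `x` in `Z`. -/
noncomputable def reach (ends : ε → Sym2 V) (Z : Finset ε) (x : V) : Finset V :=
  (Set.toFinite {v | ∃ P ⊆ Z, IsJoin ends P x v}).toFinset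

lemma mem_reach : v ∈ reach ends Z x ↔ ∃ P ⊆ Z, IsJoin ends P x v := by simp [reach]

lemma self_mem_reach : x ∈ reach ends Z x :=
  mem_reach.mpr ⟨∅, empty_subset Z, isJoin_empty_iff.mpr rfl⟩

lemma cut_reach : cut ends Z (reach ends Z x) = ∅ := by
  classical
  refine eq_empty_of_forall_notMem fun e he ↦ ?_
  obtain ⟨heZ, u, hu, v, hv, huv⟩ := mem_cut.mp he
  obtain ⟨P, hPZ, hP⟩ := mem_reach.mp hu
  exact hv (mem_reach.mpr ⟨symmDiff P {e},
    (symmDiff_subset_union).trans (union_subset hPZ (singleton_subset_iff.mpr heZ)),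
    hP.symmDiff (isJoin_singleton huv)⟩)

lemma cut_reach_sdiff_subset [DecidableEq ε] (C Q : Finset ε) :
    cut ends Q (reach ends (Q \ C) x) ⊆ C := by
  rw [← sdiff_eq_empty_iff_subset, ← cut_sdiff, cut_reach]

end Reach

section Cycle

variable {V ε : Type*} [DecidableEq V] {ends : ε → Sym2 V} {C D E P Q : Finset ε}
  {w : ε → ℤ} {e : ε} {s t u x y : V}

lemma IsJoin.exists_subset_card_cut_eq_one [Finite V] (hQ : IsJoin ends Q s t) (hst : s ≠ t) :
    ∃ P ⊆ Q, IsJoin ends P s t ∧ (cut ends P {t}).card = 1 := by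
  classical
  set X := reach ends (Q \ cut ends Q {t}) s
  have ht : t ∉ X := by
    intro ht
    obtain ⟨P, hPQ, hP⟩ := mem_reach.mp ht
    have hodd : Odd (cut ends P {t}).card := hP.odd_card_cut_iff.mpr (by simp [hst])
    obtain ⟨e, he⟩ := card_pos.mp hodd.pos
    obtain ⟨heP, y, hy⟩ := mem_cut_singleton.mp he
    have heQ := mem_sdiff.mp (hPQ heP)
    exact heQ.2 (mem_cut_singleton.mpr ⟨heQ.1, y, hy⟩)
  have hodd : Odd (cut ends Q X).card :=
    hQ.odd_card_cut_iff.mpr (by simp [X, ht, self_mem_reach])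
  obtain ⟨f, hf⟩ := card_pos.mp hodd.pos
  have hft : f ∈ cut ends Q {t} := cut_reach_sdiff_subset _ _ hf
  obtain ⟨hfQ, u, hu, v, hv, huv⟩ := mem_cut.mp hf
  have hut : u ≠ t := fun h ↦ ht (h ▸ hu)
  obtain rfl : v = t := by simpa [mem_cut_iff huv, hfQ, hut] using hft
  obtain ⟨P, hPQ, hP⟩ := mem_reach.mp hu
  have hP' (e) (he : e ∈ P) : e ∉ cut ends Q {v} := (mem_sdiff.mp (hPQ he)).2
  refine ⟨insert f P, insert_subset hfQ (hPQ.trans sdiff_subset),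
    hP.insert huv fun hfP ↦ hP' f hfP hft, card_eq_one.mpr ⟨f, ?_⟩⟩
  ext e
  grind [mem_cut]

/-- A cycle is a minimal nonempty even set of edges. -/
abbrev IsCycle (ends : ε → Sym2 V) (C : Finset ε) : Prop :=
  Minimal (fun C ↦ C.Nonempty ∧ boundary ends C = 0) C

lemma exists_isCycle_subset (hC : C.Nonempty) (hC₀ : boundary ends C = 0) :
    ∃ D ⊆ C, IsCycle ends D :=
  exists_minimal_le_of_wellFoundedLT _ C ⟨hC, hC₀⟩

lemma IsCycle.exists_cut_singleton_eq [Finite V] [DecidableEq ε] (hC : IsCycle ends C)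
    (he : e ∈ cut ends C {t}) : ∃ f ≠ e, cut ends C {t} = {e, f} := by
  obtain ⟨heC, y, hyt, hey⟩ := mem_cut_singleton.mp he
  rw [Sym2.eq_swap] at hey
  have hCe : IsJoin ends (C.erase e) y t := (isJoin_self_iff.mpr hC.prop.2).erase hey heC
  obtain ⟨P, hPC, hP, hPt⟩ := hCe.exists_subset_card_cut_eq_one hyt
  have heP : e ∉ P := fun h ↦ notMem_erase e C (hPC h)
  obtain rfl : insert e P = C := by
    refine hC.eq_of_le ⟨insert_nonempty e P, ?_⟩
      (insert_subset heC (hPC.trans (erase_subset e C)))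
    exact isJoin_self_iff.mp (hP.symm.insert hey heP).symm
  obtain ⟨f, hf⟩ := card_eq_one.mp hPt
  have hfP : f ∈ P := cut_subset (hf ▸ mem_singleton_self f)
  refine ⟨f, fun h ↦ heP (h ▸ hfP), ?_⟩
  rw [← hf]
  ext e'
  grind [mem_cut]

lemma IsCycle.exists_isJoin [Finite V] (hC : IsCycle ends C) (ht : (cut ends C {t}).Nonempty)
    (hu : (cut ends C {u}).Nonempty) : ∃ P ⊆ C, IsJoin ends P t u := by
  classical
  set X := reach ends C t
  set D := {e ∈ C | ∀ v ∈ ends e, v ∈ X}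
  have hmem {e x y} (heC : e ∈ C) (he : ends e = s(x, y)) : x ∈ X ↔ y ∈ X := by
    by_contra h
    simpa [X, cut_reach] using (mem_cut_iff he).mpr ⟨heC, h⟩
  have hcut (v) (hv : v ∈ X) : cut ends D {v} = cut ends C {v} := by
    ext e
    rw [mem_cut_singleton, mem_cut_singleton, mem_filter]
    refine ⟨fun h ↦ ⟨h.1.1, h.2⟩, fun ⟨heC, y, hyv, hey⟩ ↦ ⟨⟨heC, ?_⟩, y, hyv, hey⟩⟩
    rw [hey, Sym2.ball]
    exact ⟨hv, (hmem heC hey).mp hv⟩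
  have hD₀ : boundary ends D = 0 := by
    ext v
    by_cases hv : v ∈ X
    · rw [boundary_apply, hcut v hv, ← boundary_apply, hC.prop.2]
    · have : cut ends D {v} = ∅ := eq_empty_of_forall_notMem fun e he ↦ by
        grind [mem_cut_singleton, Sym2.mem_mk_left]
      rw [boundary_apply, this, card_empty, Nat.cast_zero, Pi.zero_apply]
  have hDC : D = C := by
    refine hC.eq_of_le ⟨?_, hD₀⟩ (filter_subset _ C)
    rw [← hcut t self_mem_reach] at ht
    exact ht.mono cut_subset
  obtain ⟨e, he⟩ := hu
  obtain ⟨heC, y, -, hey⟩ := mem_cut_singleton.mp he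
  rw [← hDC] at heC
  exact mem_reach.mp ((mem_filter.mp heC).2 u (hey ▸ Sym2.mem_mk_left u y))

/-- The weight `w` is conservative on `E` if no even subset of `E` has negative weight. -/
def IsConservative (ends : ε → Sym2 V) (E : Finset ε) (w : ε → ℤ) : Prop :=
  ∀ C ⊆ E, boundary ends C = 0 → 0 ≤ ∑ e ∈ C, w e

lemma isConservative_of_isCycle (h : ∀ C ⊆ E, IsCycle ends C → 0 ≤ ∑ e ∈ C, w e) :
    IsConservative ends E w := by
  classical
  intro C
  induction C using Finset.strongInduction with
  | H C ih =>
    intro hCE hC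
    obtain rfl | hne := C.eq_empty_or_nonempty
    · simp
    obtain ⟨D, hDC, hD⟩ := exists_isCycle_subset hne hC
    have hrest : 0 ≤ ∑ e ∈ C \ D, w e := by
      refine ih _ (sdiff_ssubset hDC hD.prop.1) (sdiff_subset.trans hCE) ?_
      rw [boundary_sdiff hDC, hC, hD.prop.2, add_zero]
    rw [← sum_sdiff hDC]
    exact add_nonneg hrest (h D (hDC.trans hCE) hD)

end Cycle

section ReduceStar

variable {V ε : Type*} {ends : ε → Sym2 V} {C E : Finset ε} {w : ε → ℤ} {t : V}

open Classical in
/-- The weight `w` moved one step towards zero on the edges of the star of `t`. -/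
noncomputable def reduceStar (ends : ε → Sym2 V) (E : Finset ε) (t : V) (w : ε → ℤ) (e : ε) : ℤ :=
  w e - if e ∈ cut ends E {t} then (w e).sign else 0

lemma sum_reduceStar (hCE : C ⊆ E) :
    ∑ e ∈ C, reduceStar ends E t w e = ∑ e ∈ C, w e - ∑ e ∈ cut ends C {t}, (w e).sign := by
  classical
  simp only [reduceStar, sum_sub_distrib, ← sum_filter]
  congr 2
  ext e
  rw [mem_filter, mem_cut_of_subset hCE, and_comm]

lemma sum_abs_mul_eq_sum_abs_reduceStar_mul_add (hne : ∀ e ∈ E, w e ≠ 0) (g : ε → ℤ) (t : V) :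
    ∑ e ∈ E, |w e| * g e =
      ∑ e ∈ E, |reduceStar ends E t w e| * g e + ∑ e ∈ cut ends E {t}, g e := by
  classical
  rw [← inter_eq_right.mpr (cut_subset (ends := ends) (E := E) (S := {t})), ← filter_mem_eq_inter,
    sum_filter, ← sum_add_distrib]
  refine sum_congr rfl fun e he ↦ ?_
  have habs (z : ℤ) (hz : z ≠ 0) : |z| = |z - z.sign| + 1 := by
    rcases hz.lt_or_gt with hz | hz
    · rw [Int.sign_eq_neg_one_of_neg hz, abs_of_neg hz, abs_of_nonpos (by omega)]
      ring
    · rw [Int.sign_eq_one_of_pos hz, abs_of_pos hz, abs_of_nonneg (by omega)]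
      ring
  rw [reduceStar]
  split_ifs with het
  · rw [habs (w e) (hne e he)]
    ring
  · simp

lemma sum_abs_reduceStar_lt (hne : ∀ e ∈ E, w e ≠ 0) (ht : (cut ends E {t}).Nonempty) :
    ∑ e ∈ E, |reduceStar ends E t w e| < ∑ e ∈ E, |w e| := by
  have h := sum_abs_mul_eq_sum_abs_reduceStar_mul_add (ends := ends) hne 1 t
  simp only [Pi.one_apply, mul_one, sum_const, nsmul_one] at h
  have := card_pos.mpr ht
  omega

lemma even_sum_reduceStar [DecidableEq V] (hCE : C ⊆ E) (hC : boundary ends C = 0)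
    (hne : ∀ e ∈ E, w e ≠ 0) (heven : Even (∑ e ∈ C, w e)) :
    Even (∑ e ∈ C, reduceStar ends E t w e) := by
  have hsign : Even (∑ e ∈ cut ends C {t}, ((w e).sign + 1)) := by
    refine even_sum _ fun e he ↦ ?_
    rcases (hne e (hCE (cut_subset he))).lt_or_gt with h | h
    · simp [Int.sign_eq_neg_one_of_neg h]
    · simp [Int.sign_eq_one_of_pos h]
  have hcard : Even ((cut ends C {t}).card : ℤ) := (Int.even_coe_nat _).mpr (even_card_cut hC {t})
  rw [sum_add_distrib, sum_const, nsmul_one, Int.even_add] at hsign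
  rw [sum_reduceStar hCE]
  exact heven.sub (hsign.mpr hcard)

lemma reduceStar_nonneg_of_nonneg {e : ε} (h : 0 ≤ w e) : 0 ≤ reduceStar ends E t w e := by
  rw [reduceStar]
  rcases Int.sign_trichotomy (w e) with hs | hs | hs <;> split_ifs <;>
    grind [Int.sign_eq_one_iff_pos]

lemma reduceStar_nonpos_of_nonpos {e : ε} (h : w e ≤ 0) : reduceStar ends E t w e ≤ 0 := by
  rw [reduceStar]
  rcases Int.sign_trichotomy (w e) with hs | hs | hs <;> split_ifs <;>
    grind [Int.sign_eq_neg_one_iff_neg]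

end ReduceStar

section OptimalJoin

variable {V ε : Type*} [DecidableEq V] {ends : ε → Sym2 V} {C E P Q : Finset ε}
  {w : ε → ℤ} {e : ε} {s t v : V}

/-- `Q` is an `{s, t}`-join of minimum weight among all `{s, v}`-joins in `E` for all `v`, and of
minimum size among those. For a fixed root `s`, the end `t` is where Sebő's argument reduces the
weight. -/
structure IsOptimalJoin (ends : ε → Sym2 V) (E : Finset ε) (w : ε → ℤ) (s t : V)
    (Q : Finset ε) : Prop where
  subset : Q ⊆ E
  isJoin : IsJoin ends Q s t
  sum_le : ∀ ⦃P⦄, P ⊆ E → ∀ ⦃v⦄, IsJoin ends P s v → ∑ e ∈ Q, w e ≤ ∑ e ∈ P, w e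
  card_le : ∀ ⦃P⦄, P ⊆ E → ∀ ⦃v⦄, IsJoin ends P s v → ∑ e ∈ P, w e = ∑ e ∈ Q, w e →
    Q.card ≤ P.card

lemma exists_isOptimalJoin (ends : ε → Sym2 V) (E : Finset ε) (w : ε → ℤ) (s : V) :
    ∃ t Q, IsOptimalJoin ends E w s t Q := by
  classical
  have hne : ({P ∈ E.powerset | ∃ v, IsJoin ends P s v}).Nonempty :=
    ⟨∅, by simpa using ⟨s, isJoin_empty_iff.mpr rfl⟩⟩
  obtain ⟨Q, hQ, hmin⟩ := exists_min_image _ (fun P ↦ toLex (∑ e ∈ P, w e, P.card)) hne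
  simp only [mem_filter, mem_powerset, Prod.Lex.toLex_le_toLex] at hQ hmin
  obtain ⟨hQE, t, hQ⟩ := hQ
  refine ⟨t, Q, hQE, hQ, fun P hPE v hP ↦ ?_, fun P hPE v hP hw ↦ ?_⟩
  · exact (hmin P ⟨hPE, v, hP⟩).elim le_of_lt fun h ↦ h.1.le
  · exact ((hmin P ⟨hPE, v, hP⟩).resolve_left hw.not_gt).2

namespace IsOptimalJoin

lemma eq_empty_of_subset (h : IsOptimalJoin ends E w s t Q) (hw : IsConservative ends E w)
    (hCQ : C ⊆ Q) (hC : boundary ends C = 0) : C = ∅ := by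
  classical
  have hjoin : IsJoin ends (Q \ C) s t := h.isJoin.sdiff (isJoin_self_iff.mpr hC) hCQ
  have hsub : Q \ C ⊆ E := sdiff_subset.trans h.subset
  have hsum := sum_sdiff (f := w) hCQ
  have hle := h.sum_le hsub hjoin
  have hcard := h.card_le hsub hjoin (by linarith [hw C (hCQ.trans h.subset) hC])
  rw [card_sdiff_of_subset hCQ] at hcard
  rw [← card_eq_zero]
  have := card_le_card hCQ
  by_contra hne
  omega

lemma sum_neg_of_subset (h : IsOptimalJoin ends E w s t Q) (hPQ : P ⊆ Q) (hP : P.Nonempty)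
    (hjoin : IsJoin ends P t v) : ∑ e ∈ P, w e < 0 := by
  classical
  have hsub : Q \ P ⊆ E := sdiff_subset.trans h.subset
  have hsum := sum_sdiff (f := w) hPQ
  have hle := h.sum_le hsub (h.isJoin.sdiff hjoin hPQ)
  refine lt_of_le_of_ne (by linarith) fun h0 ↦ ?_
  have hcard := h.card_le hsub (h.isJoin.sdiff hjoin hPQ) (by linarith)
  exact hcard.not_gt (card_lt_card (sdiff_ssubset hPQ hP))

lemma mem_iff_neg (h : IsOptimalJoin ends E w s t Q) (he : e ∈ cut ends E {t}) :
    e ∈ Q ↔ w e < 0 := by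
  classical
  obtain ⟨heE, y, -, hey⟩ := mem_cut_singleton.mp he
  refine ⟨fun heQ ↦ ?_, fun hneg ↦ ?_⟩
  · simpa using h.sum_neg_of_subset (singleton_subset_iff.mpr heQ) (singleton_nonempty e)
      (isJoin_singleton hey)
  · by_contra heQ
    have hle := h.sum_le (insert_subset heE h.subset) (h.isJoin.insert hey heQ)
    rw [sum_insert heQ] at hle
    linarith

lemma card_filter_neg_eq_one [Finite V] (h : IsOptimalJoin ends E w s t Q)
    (hw : IsConservative ends E w) (hst : s ≠ t) : {e ∈ cut ends E {t} | w e < 0}.card = 1 := by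
  classical
  obtain ⟨P, hPQ, hP, hPt⟩ := h.isJoin.exists_subset_card_cut_eq_one hst
  have hsdiff : Q \ P = ∅ := h.eq_empty_of_subset hw sdiff_subset
    (isJoin_self_iff.mp (h.isJoin.sdiff hP.symm hPQ))
  obtain rfl : P = Q := hPQ.antisymm (sdiff_eq_empty_iff_subset.mp hsdiff)
  rw [← hPt]
  congr 1
  ext e
  rw [mem_filter, mem_cut_of_subset h.subset]
  exact and_congr_right fun he ↦ (h.mem_iff_neg he).symm

lemma not_disjoint_of_isCycle (h : IsOptimalJoin ends E w s t Q) (hC : IsCycle ends C)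
    (hCE : C ⊆ E) (he : e ∈ cut ends C {t}) (hpos : 0 < w e) (hC₀ : ∑ e ∈ C, w e = 0) :
    ¬Disjoint Q C := by
  classical
  intro hdisj
  obtain ⟨heC, y, -, hey⟩ := mem_cut_singleton.mp he
  have hCe : IsJoin ends (C.erase e) t y := (isJoin_self_iff.mpr hC.prop.2).erase hey heC
  have hdisj' := disjoint_of_subset_right (erase_subset e C) hdisj
  have hle := h.sum_le (union_subset h.subset ((erase_subset e C).trans hCE))
    (h.isJoin.union hCe hdisj')
  rw [sum_union hdisj'] at hle
  linarith [add_sum_erase C w heC]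

lemma notMem_reach_sdiff [Finite V] [DecidableEq ε] (h : IsOptimalJoin ends E w s t Q)
    (hw : IsConservative ends E w) (hQC : ¬Disjoint Q C) : s ∉ reach ends (Q \ C) t := by
  intro hs
  obtain ⟨P, hPQ, hP⟩ := mem_reach.mp hs
  have hsub : P ⊆ Q := hPQ.trans sdiff_subset
  have hsdiff : Q \ P = ∅ := h.eq_empty_of_subset hw sdiff_subset
    (isJoin_self_iff.mp (h.isJoin.sdiff hP hsub))
  exact hQC (disjoint_of_subset_left
    ((sdiff_eq_empty_iff_subset.mp hsdiff).trans hPQ) sdiff_disjoint)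

/-- If a zero-weight cycle passed through `t` on positive edges, then starting from `t` one could
follow `Q` until it meets the cycle at `u`; the negative initial piece of `Q` would close up with
one of the two halves of the cycle to a negative even set. -/
lemma sum_pos_of_isCycle [Finite V] (h : IsOptimalJoin ends E w s t Q)
    (hw : IsConservative ends E w) (hC : IsCycle ends C) (hCE : C ⊆ E)
    (ht : (cut ends C {t}).Nonempty) (hpos : ∀ e ∈ cut ends C {t}, 0 < w e) : 0 < ∑ e ∈ C, w e := by
  classical
  refine lt_of_le_of_ne (hw C hCE hC.prop.2) fun hC₀ ↦ ?_
  have hdisj : ¬Disjoint Q C := by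
    obtain ⟨e, he⟩ := ht
    exact h.not_disjoint_of_isCycle hC hCE he (hpos e he) hC₀.symm
  set X := reach ends (Q \ C) t
  have hs : s ∉ X := h.notMem_reach_sdiff hw hdisj
  have hodd : Odd (cut ends Q X).card :=
    h.isJoin.odd_card_cut_iff.mpr (by simp [X, hs, self_mem_reach])
  obtain ⟨f, hf⟩ := card_pos.mp hodd.pos
  have hfC : f ∈ C := cut_reach_sdiff_subset _ _ hf
  obtain ⟨hfQ, u, hu, v, hv, huv⟩ := mem_cut.mp hf
  have hvu : v ≠ u := fun h ↦ hv (h ▸ hu)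
  obtain ⟨P, hPQC, hP⟩ := mem_reach.mp hu
  have hut : u ≠ t := by
    rintro rfl
    have hfneg := (h.mem_iff_neg (mem_cut_singleton.mpr ⟨h.subset hfQ, v, hvu, huv⟩)).mp hfQ
    exact hfneg.not_gt (hpos f (mem_cut_singleton.mpr ⟨hfC, v, hvu, huv⟩))
  obtain ⟨hPQ, hPC⟩ := subset_sdiff.mp hPQC
  have hPneg := h.sum_neg_of_subset hPQ (hP.nonempty hut.symm) hP
  obtain ⟨C₁, hC₁, hjoin⟩ := hC.exists_isJoin ht ⟨f, mem_cut_singleton.mpr ⟨hfC, v, hvu, huv⟩⟩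
  have hnonneg (D) (hD : D ⊆ C) (hDjoin : IsJoin ends D t u) :
      0 ≤ ∑ e ∈ P, w e + ∑ e ∈ D, w e := by
    have hdisj' := disjoint_of_subset_right hD hPC
    rw [← sum_union hdisj']
    exact hw _ (union_subset (hPQ.trans h.subset) (hD.trans hCE))
      (isJoin_self_iff.mp (hP.union hDjoin.symm hdisj'))
  have h₁ := hnonneg C₁ hC₁ hjoin
  have h₂ := hnonneg (C \ C₁) sdiff_subset ((isJoin_self_iff.mpr hC.prop.2).sdiff hjoin hC₁)
  linarith [sum_sdiff (f := w) hC₁]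

end IsOptimalJoin

lemma exists_isConservative_reduceStar [Finite V] (hw : IsConservative ends E w)
    (heven : ∀ C ⊆ E, boundary ends C = 0 → Even (∑ e ∈ C, w e)) (hne : ∀ e ∈ E, w e ≠ 0)
    (hneg : ∃ e ∈ E, w e < 0) :
    ∃ t, {e ∈ cut ends E {t} | w e < 0}.card = 1 ∧
      IsConservative ends E (reduceStar ends E t w) := by
  classical
  obtain ⟨e₀, he₀, hneg⟩ := hneg
  obtain ⟨s, y, hsy⟩ : ∃ s y, ends e₀ = s(s, y) := Sym2.exists.mp ⟨_, rfl⟩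
  obtain ⟨t, Q, hQ⟩ := exists_isOptimalJoin ends E w s
  have hst : s ≠ t := by
    rintro rfl
    have hle := hQ.sum_le (singleton_subset_iff.mpr he₀) (isJoin_singleton hsy)
    rw [sum_singleton] at hle
    linarith [hw Q hQ.subset (isJoin_self_iff.mp hQ.isJoin)]
  refine ⟨t, hQ.card_filter_neg_eq_one hw hst, isConservative_of_isCycle fun C hCE hC ↦ ?_⟩
  have hnonneg := hw C hCE hC.prop.2
  rw [sum_reduceStar hCE, sub_nonneg]
  obtain h₀ | ⟨e, he⟩ := (cut ends C {t}).eq_empty_or_nonempty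
  · simpa [h₀] using hnonneg
  obtain ⟨f, hfe, hef⟩ := hC.exists_cut_singleton_eq he
  rw [hef, sum_pair hfe.symm]
  by_cases hpos : ∀ e ∈ cut ends C {t}, 0 < w e
  · have hsum := hQ.sum_pos_of_isCycle hw hC hCE ⟨e, he⟩ hpos
    obtain ⟨k, hk⟩ := heven C hCE hC.prop.2
    rw [Int.sign_eq_one_of_pos (hpos e he), Int.sign_eq_one_of_pos (hpos f (by simp [hef]))]
    omega
  · push Not at hpos
    obtain ⟨a, ha, hneg⟩ := hpos
    have haneg : w a < 0 := lt_of_le_of_ne hneg (hne a (hCE (cut_subset ha)))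
    have hsign_le (z : ℤ) : z.sign ≤ 1 := by
      rcases Int.sign_trichotomy z with h | h | h <;> omega
    have hsign := Int.sign_eq_neg_one_of_neg haneg
    rw [hef, mem_insert, mem_singleton] at ha
    rcases ha with rfl | rfl
    · linarith [hsign_le (w f)]
    · linarith [hsign_le (w e)]

end OptimalJoin

section Contraction

variable {V ε : Type*} [DecidableEq V] {ends : ε → Sym2 V} {C D E : Finset ε} {w : ε → ℤ}
  {S : Finset V} {e : ε} {x y : V}

/-- The endpoint map of the multigraph in which `y` is identified with `x`. -/
def contract (ends : ε → Sym2 V) (x y : V) (e : ε) : Sym2 V :=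
  (ends e).map (Function.update id y x)

lemma edgeBoundary_add_edgeBoundary_map (z : Sym2 V) (x y : V) :
    edgeBoundary z + edgeBoundary (z.map (Function.update id y x)) =
      edgeBoundary z y • (point x + point y) := by
  have hpoint (a : V) :
      point a + point (Function.update id y x a) = point a y • (point x + point y) := by
    obtain rfl | hay := eq_or_ne a y
    · simp [point_apply, add_comm]
    · simp [point_apply, hay, hay.symm, ZModModule.add_self]
  induction z with | _ a b
  rw [Sym2.map_mk, edgeBoundary_mk, edgeBoundary_mk, Pi.add_apply, add_smul, ← hpoint, ← hpoint]
  abel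

lemma boundary_add_boundary_contract (ends : ε → Sym2 V) (C : Finset ε) (x y : V) :
    boundary ends C + boundary (contract ends x y) C = boundary ends C y • (point x + point y) := by
  simp only [boundary, contract, Finset.sum_apply, sum_smul, ← sum_add_distrib,
    edgeBoundary_add_edgeBoundary_map]

/-- An even set of the contraction lifts to an even set, after inserting the contracted edge if
need be. -/
lemma prop_sum_of_boundary_contract_eq_zero [DecidableEq ε] {p : ℤ → Prop}
    (h : ∀ C ⊆ E, boundary ends C = 0 → p (∑ f ∈ C, w f)) (he : ends e = s(x, y)) (heE : e ∈ E)
    (hw : w e = 0) (hCE : C ⊆ E.erase e) (hC : boundary (contract ends x y) C = 0) :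
    p (∑ f ∈ C, w f) := by
  have hCE' : C ⊆ E := hCE.trans (erase_subset e E)
  have heC : e ∉ C := fun h ↦ notMem_erase e E (hCE h)
  have hbd := boundary_add_boundary_contract ends C x y
  rw [hC, add_zero] at hbd
  obtain h0 | h1 : boundary ends C y = 0 ∨ boundary ends C y = 1 := by
    generalize boundary ends C y = a
    revert a
    decide
  · exact h C hCE' (by rw [hbd, h0, zero_smul])
  · rw [h1, one_smul] at hbd
    have hjoin : IsJoin ends C x y := hbd
    have heven := isJoin_self_iff.mp (hjoin.insert (he.trans Sym2.eq_swap) heC)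
    simpa [sum_insert heC, hw] using h _ (insert_subset heE hCE') heven

lemma cut_contract [DecidableEq ε] (he : ends e = s(x, y)) (S : Finset V) :
    ∃ T, cut ends E T = cut (contract ends x y) (E.erase e) S := by
  refine ⟨if x ∈ S then insert y S else S.erase y, ?_⟩
  ext f
  obtain ⟨a, b, hab⟩ : ∃ a b, ends f = s(a, b) := Sym2.exists.mp ⟨_, rfl⟩
  have hab' : contract ends x y f = s(Function.update id y x a, Function.update id y x b) := by
    rw [contract, hab, Sym2.map_mk]
  have hmem (v : V) : v ∈ (if x ∈ S then insert y S else S.erase y) ↔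
      Function.update id y x v ∈ S := by
    rw [Function.update_apply]
    split_ifs <;> simp_all
  rw [mem_cut_iff hab, mem_cut_iff hab', hmem, hmem, mem_erase]
  refine ⟨fun h ↦ ⟨⟨?_, h.1⟩, h.2⟩, fun h ↦ ⟨h.1.2, h.2⟩⟩
  rintro rfl
  rw [he] at hab
  obtain ⟨rfl, rfl⟩ | ⟨rfl, rfl⟩ := Sym2.eq_iff.mp hab <;> simp [Function.update_apply] at h

end Contraction

/-- Weak duality for Seymour's theorem: a bipartite conservative weight is a packing of cuts that
meet the negative edges exactly once, so a function that is nonnegative on these cuts has a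
nonnegative sum against `|w|`. Zero edges, which may be counted in `F` or not, get contracted. -/
theorem sum_abs_mul_nonneg_of_isConservative {V ε : Type*} [Finite V] [DecidableEq V]
    [DecidableEq ε] {ends : ε → Sym2 V} {E F : Finset ε} {w g : ε → ℤ}
    (hw : IsConservative ends E w)
    (heven : ∀ C ⊆ E, boundary ends C = 0 → Even (∑ e ∈ C, w e))
    (hneg : ∀ e ∈ E, e ∈ F → w e ≤ 0) (hpos : ∀ e ∈ E, e ∉ F → 0 ≤ w e)
    (hg : ∀ e ∈ E, e ∉ F → 0 ≤ g e)
    (hcut : ∀ S, (cut ends E S ∩ F).card = 1 → 0 ≤ ∑ e ∈ cut ends E S, g e) :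
    0 ≤ ∑ e ∈ E, |w e| * g e := by
  induction hn : E.card + (∑ e ∈ E, |w e|).toNat using Nat.strong_induction_on
    generalizing ends E w with | _ n ih
  by_cases hzero : ∃ e ∈ E, w e = 0
  · obtain ⟨e, heE, he⟩ := hzero
    obtain ⟨x, y, hxy⟩ : ∃ x y, ends e = s(x, y) := Sym2.exists.mp ⟨_, rfl⟩
    have hsum (f : ε → ℤ) : ∑ e ∈ E.erase e, |w e| * f e = ∑ e ∈ E, |w e| * f e :=
      sum_erase E (by simp [he])
    have hsum_one := hsum 1
    simp only [Pi.one_apply, mul_one] at hsum_one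
    rw [← hsum]
    refine ih _ ?_ (ends := contract ends x y)
      (fun C ↦ prop_sum_of_boundary_contract_eq_zero hw hxy heE he)
      (fun C ↦ prop_sum_of_boundary_contract_eq_zero heven hxy heE he)
      (fun f hf ↦ hneg f (mem_of_mem_erase hf)) (fun f hf ↦ hpos f (mem_of_mem_erase hf))
      (fun f hf ↦ hg f (mem_of_mem_erase hf)) (fun S hS ↦ ?_) rfl
    · rw [hsum_one, ← hn]
      have := card_erase_lt_of_mem heE
      omega
    · obtain ⟨T, hT⟩ := cut_contract (E := E) hxy S
      rw [← hT] at hS ⊢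
      exact hcut T hS
  push Not at hzero
  by_cases hex : ∃ e ∈ E, w e < 0
  · obtain ⟨t, ht, hw'⟩ := exists_isConservative_reduceStar hw heven hzero hex
    have hfilter : {e ∈ cut ends E {t} | w e < 0} = cut ends E {t} ∩ F := by
      ext e
      grind [mem_cut]
    rw [hfilter] at ht
    have hne : (cut ends E {t}).Nonempty := (card_pos.mp (ht.symm ▸ one_pos)).mono inter_subset_left
    rw [sum_abs_mul_eq_sum_abs_reduceStar_mul_add (ends := ends) hzero g t]
    refine add_nonneg (ih _ ?_ hw' (fun C hC hC₀ ↦ ?_) ?_ ?_ hg hcut rfl) (hcut {t} ht)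
    · have hlt := sum_abs_reduceStar_lt hzero hne
      have := sum_nonneg fun e (_ : e ∈ E) ↦ abs_nonneg (reduceStar ends E t w e)
      omega
    · exact even_sum_reduceStar hC hC₀ hzero (heven C hC hC₀)
    · exact fun e he heF ↦ reduceStar_nonpos_of_nonpos (hneg e he heF)
    · exact fun e he heF ↦ reduceStar_nonneg_of_nonneg (hpos e he heF)
  · push Not at hex
    refine sum_nonneg fun e he ↦ mul_nonneg (abs_nonneg _) (hg e he fun heF ↦ ?_)
    exact hzero e he ((hneg e he heF).antisymm (hex e he))

section ThirdJoin

variable {V ε : Type*} [DecidableEq V] {ends : ε → Sym2 V} {D E F J : Finset ε}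

/-- The cost of the change from `J` to the symmetric difference of `J` and `{e}`. -/
def flipWeight [DecidableEq ε] (J : Finset ε) (w : ε → ℤ) (e : ε) : ℤ :=
  if e ∈ J then -w e else w e

lemma exists_isConservative_flipWeight [DecidableEq ε] (ends : ε → Sym2 V) (E : Finset ε)
    (w : ε → ℤ) :
    ∃ J ⊆ E, boundary ends J = boundary ends E ∧ IsConservative ends E (flipWeight J w) := by
  classical
  obtain ⟨J, hJ, hmin⟩ := exists_min_image {J ∈ E.powerset | boundary ends J = boundary ends E}
    (fun J ↦ ∑ e ∈ J, w e) ⟨E, by simp⟩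
  simp only [mem_filter, mem_powerset] at hJ hmin
  refine ⟨J, hJ.1, hJ.2, fun C hCE hC ↦ ?_⟩
  have hle := hmin (symmDiff J C) ⟨symmDiff_subset_union.trans (union_subset hJ.1 hCE), by
    rw [boundary_symmDiff, hC, add_zero, hJ.2]⟩
  have hflip : ∑ e ∈ C, flipWeight J w e = ∑ e ∈ symmDiff J C, w e - ∑ e ∈ J, w e := by
    have hJC := sum_symmDiff_add_two_nsmul_sum_inter J C w
    have hC : ∑ e ∈ C, flipWeight J w e + 2 • ∑ e ∈ J ∩ C, w e = ∑ e ∈ C, w e := by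
      rw [inter_comm, ← filter_mem_eq_inter, sum_filter, ← sum_nsmul, ← sum_add_distrib]
      refine sum_congr rfl fun e _ ↦ ?_
      unfold flipWeight
      split_ifs <;> grind
    linarith
  rw [hflip]
  linarith

/-- The test function for the duality: it takes value `±2` on `J` and `±1` off `J`, negative exactly
on `F`. -/
def testWeight [DecidableEq ε] (J F : Finset ε) (e : ε) : ℤ :=
  (if e ∈ J then 2 else 1) * if e ∈ F then -1 else 1

lemma sum_testWeight_nonneg [DecidableEq ε] (hDF : (D ∩ F).card = 1) (hD : D.card ≠ 1)
    (hDJ : D.card ≡ (D ∩ J).card [MOD 2]) : 0 ≤ ∑ e ∈ D, testWeight J F e := by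
  obtain ⟨f, hf⟩ := card_eq_one.mp hDF
  have hfD : f ∈ D := mem_of_mem_inter_left (hf ▸ mem_singleton_self f)
  have hsum : ∑ e ∈ D, testWeight J F e =
      D.card + (D ∩ J).card - 2 * (1 + ({f} ∩ J).card) := by
    have hvalue (A : Finset ε) : ∑ e ∈ A, (if e ∈ J then 2 else 1 : ℤ) = A.card + (A ∩ J).card := by
      rw [← filter_mem_eq_inter, card_filter, card_eq_sum_ones]
      push_cast
      rw [← sum_add_distrib]
      exact sum_congr rfl fun e _ ↦ by split_ifs <;> rfl
    have hsplit : ∑ e ∈ D, testWeight J F e = ∑ e ∈ D, (if e ∈ J then 2 else 1 : ℤ) -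
        2 * ∑ e ∈ D ∩ F, (if e ∈ J then 2 else 1 : ℤ) := by
      rw [← filter_mem_eq_inter, sum_filter, mul_sum, ← sum_sub_distrib]
      exact sum_congr rfl fun e _ ↦ by unfold testWeight; split_ifs <;> rfl
    rw [hsplit, hvalue, hf, hvalue, card_singleton, Nat.cast_one]
  have hpos : 0 < D.card := card_pos.mpr ⟨f, hfD⟩
  rw [hsum]
  by_cases hfJ : f ∈ J
  · have : 0 < (D ∩ J).card := card_pos.mpr ⟨f, mem_inter.mpr ⟨hfD, hfJ⟩⟩
    rw [inter_eq_left.mpr (singleton_subset_iff.mpr hfJ), card_singleton]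
    grind [Nat.ModEq]
  · rw [singleton_inter_of_notMem hfJ, card_empty]
    grind

/-- The vector equal to `1 / 3` everywhere lies in the corresponding join polyhedron. -/
theorem exists_boundary_eq_three_mul_sum_le [Finite V] (hE : ∀ S, (cut ends E S).card ≠ 1)
    (w : ε → ℤ) :
    ∃ J ⊆ E, boundary ends J = boundary ends E ∧ 3 * ∑ e ∈ J, w e ≤ ∑ e ∈ E, w e := by
  classical
  obtain ⟨J, hJE, hJ, hw⟩ := exists_isConservative_flipWeight ends E w
  refine ⟨J, hJE, hJ, ?_⟩
  set F := {e ∈ E | flipWeight J w e < 0}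
  have hF (e) (he : e ∈ E) : e ∈ F ↔ flipWeight J w e < 0 := by simp [F, he]
  have hdual : 0 ≤ ∑ e ∈ E, |2 * flipWeight J w e| * testWeight J F e := by
    refine sum_abs_mul_nonneg_of_isConservative (ends := ends) (F := F) (fun C hCE hC ↦ ?_)
      (fun C _ _ ↦ ?_) (fun e he heF ↦ ?_) (fun e he heF ↦ ?_) (fun e _ heF ↦ ?_) fun S hS ↦ ?_
    · rw [← mul_sum]
      exact mul_nonneg two_pos.le (hw C hCE hC)
    · rw [← mul_sum]
      exact even_two_mul _
    · linarith [(hF e he).mp heF]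
    · linarith [not_lt.mp (mt (hF e he).mpr heF)]
    · unfold testWeight
      split_ifs <;> decide
    · have hSJ : cut ends E S ∩ J = cut ends J S := by
        ext e
        rw [mem_inter, mem_cut_of_subset hJE]
      exact sum_testWeight_nonneg hS (hE S) (hSJ ▸ card_cut_modEq hJ.symm S)
  have hterm (e) (he : e ∈ E) : |2 * flipWeight J w e| * testWeight J F e =
      2 * (w e - 3 * if e ∈ J then w e else 0) := by
    have habs : |2 * flipWeight J w e| * (if e ∈ F then -1 else 1) = 2 * flipWeight J w e := by
      split_ifs with heF
      · rw [abs_of_neg (by linarith [(hF e he).mp heF])]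
        ring
      · rw [abs_of_nonneg (by linarith [not_lt.mp (mt (hF e he).mpr heF)]), mul_one]
    rw [testWeight, mul_left_comm, habs]
    unfold flipWeight
    split_ifs <;> ring
  rw [sum_congr rfl hterm, ← mul_sum, sum_sub_distrib, ← mul_sum, ← sum_filter,
    filter_mem_eq_inter, inter_eq_right.mpr hJE] at hdual
  linarith

/-- A large extra cost on the edges at a cubic vertex forces exactly one of them into `J`: the
average number is one and it is odd. -/
theorem exists_boundary_eq_three_mul_sum_le_card_cut_eq_one [Finite V]
    (hE : ∀ S, (cut ends E S).card ≠ 1) (w : ε → ℤ) (D : Finset V)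
    (hD : ∀ v ∈ D, (cut ends E {v}).card = 3) :
    ∃ J ⊆ E, boundary ends J = boundary ends E ∧ 3 * ∑ e ∈ J, w e ≤ ∑ e ∈ E, w e ∧
      ∀ v ∈ D, (cut ends J {v}).card = 1 := by
  classical
  set M := ∑ e ∈ E, |w e|
  obtain ⟨J, hJE, hJ, hle⟩ := exists_boundary_eq_three_mul_sum_le hE fun e ↦
    w e + (4 * M + 1) * ∑ v ∈ D, if e ∈ cut ends E {v} then 1 else 0
  have hodd (v) (hv : v ∈ D) : 0 < (cut ends J {v}).card := by
    have h := card_cut_modEq hJ {v}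
    rw [hD v hv] at h
    grind [Nat.ModEq]
  set x := ∑ v ∈ D, (((cut ends J {v}).card : ℤ) - 1) with hx
  have hterm_nonneg (v) (hv : v ∈ D) : 0 ≤ ((cut ends J {v}).card : ℤ) - 1 := by
    linarith [Int.natCast_pos.mpr (hodd v hv)]
  have hx_nonneg : 0 ≤ x := sum_nonneg hterm_nonneg
  have hcardJ : ∑ v ∈ D, ((cut ends J {v}).card : ℤ) = D.card + x := by simp [hx]
  have hcardE : ∑ v ∈ D, ((cut ends E {v}).card : ℤ) = 3 * D.card := by
    rw [sum_congr rfl fun v hv ↦ congrArg Nat.cast (hD v hv)]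
    simp [mul_comm]
  simp only [sum_add_distrib, ← mul_sum] at hle
  rw [← sum_card_cut_singleton hJE, ← sum_card_cut_singleton Subset.rfl, hcardJ, hcardE] at hle
  have hwE : ∑ e ∈ E, w e ≤ M := sum_le_sum fun e _ ↦ le_abs_self (w e)
  have hwJ : -M ≤ ∑ e ∈ J, w e := by
    refine neg_le_of_neg_le (le_trans (neg_le_abs _) ((abs_sum_le_sum_abs w J).trans ?_))
    exact sum_le_sum_of_subset_of_nonneg hJE fun e _ _ ↦ abs_nonneg (w e)
  have hM : 0 ≤ M := sum_nonneg fun e _ ↦ abs_nonneg (w e)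
  have hx_le : 3 * ((4 * M + 1) * x) ≤ 4 * M := by linarith
  have hx_zero : x = 0 := by
    refine le_antisymm ?_ hx_nonneg
    by_contra! hx_pos
    nlinarith
  refine ⟨J, hJE, hJ, ?_, fun v hv ↦ ?_⟩
  · rw [hx_zero] at hle
    linarith
  · linarith [(sum_eq_zero_iff_of_nonneg hterm_nonneg).mp hx_zero v hv]

end ThirdJoin

section Euler

variable {V ε : Type*} [DecidableEq V] {G : SimpleGraph V} {ends : ε → Sym2 V} {E H J R : Finset ε}
  {x z : V}

lemma IsJoin.exists_mem_ends (hH : IsJoin ends H x z) (hxz : x ≠ z) : ∃ e ∈ H, x ∈ ends e := by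
  have hodd : Odd (cut ends H {x}).card := hH.odd_card_cut_iff.mpr (by simp [hxz.symm])
  obtain ⟨e, he⟩ := card_pos.mp hodd.pos
  obtain ⟨heH, y, -, hy⟩ := mem_cut_singleton.mp he
  exact ⟨e, heH, hy ▸ Sym2.mem_mk_left x y⟩

/-- Hierholzer: after a walk has left `x` through an edge `e`, the unused edges form an even set,
and a closed walk through them from `x` can be put in front. -/
theorem exists_walk_of_isJoin (hadj : ∀ e ∈ H, ends e ∈ G.edgeSet) (hH : IsJoin ends H x z) :
    ∃ (p : G.Walk x z) (U : Finset ε), U ⊆ H ∧ IsJoin ends U x z ∧ p.length = U.card ∧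
      (∀ e ∈ U, ∀ v ∈ ends e, v ∈ p.support) ∧ ∀ e ∈ H, e ∉ U → ∀ v ∈ ends e, v ∉ p.support := by
  classical
  induction H using Finset.strongInduction generalizing x z with | H H ih
  by_cases hx : ∃ e ∈ H, x ∈ ends e
  · obtain ⟨e, heH, y, hy⟩ := hx
    have hHe : H.erase e ⊂ H := erase_ssubset heH
    obtain ⟨p, U, hUH, hU, hp, hcov, havoid⟩ := ih (H.erase e) hHe
      (fun d hd ↦ hadj d (mem_of_mem_erase hd)) (hH.symm.erase hy heH).symm
    have heU : e ∉ U := fun h ↦ notMem_erase e H (hUH h)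
    have hins : insert e U ⊆ H := insert_subset heH (hUH.trans (erase_subset e H))
    have hUins : IsJoin ends (insert e U) x z := (hU.symm.insert (hy.trans Sym2.eq_swap) heU).symm
    obtain ⟨q, W, hWH, hW, hq, hqcov, hqavoid⟩ := ih (H \ insert e U)
      (sdiff_ssubset hins (insert_nonempty e U)) (fun d hd ↦ hadj d (mem_sdiff.mp hd).1)
      (hH.sdiff hUins.symm hins)
    have hxy : G.Adj x y := by simpa [hy] using hadj e heH
    have hdisj : Disjoint W (insert e U) := disjoint_of_subset_left hWH sdiff_disjoint
    refine ⟨q.append (p.cons hxy), W ∪ insert e U, union_subset (hWH.trans sdiff_subset) hins,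
      hW.union hUins hdisj, ?_, ?_, ?_⟩
    · rw [Walk.length_append, Walk.length_cons, card_union_of_disjoint hdisj,
        card_insert_of_notMem heU, hp, hq]
    · have hsupport : x ∈ q.support ∧ y ∈ p.support := ⟨q.start_mem_support, p.start_mem_support⟩
      simp only [Walk.mem_support_append_iff, Walk.support_cons, List.mem_cons, mem_union,
        mem_insert]
      rintro d (hd | rfl | hd) v hv
      · exact .inl (hqcov d hd v hv)
      · obtain rfl | rfl := Sym2.mem_iff.mp (hy ▸ hv)
        exacts [.inl hsupport.1, .inr (.inr hsupport.2)]
      · exact .inr (.inr (hcov d hd v hv))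
    · grind [Walk.mem_support_append_iff, Walk.support_cons, Walk.start_mem_support]
  · obtain rfl : x = z := by
      by_contra hxz
      exact hx (hH.exists_mem_ends hxz)
    refine ⟨.nil, ∅, empty_subset H, isJoin_empty_iff.mpr rfl, rfl, by simp, fun e he _ v hv ↦ ?_⟩
    rw [Walk.support_nil, List.mem_singleton]
    rintro rfl
    exact hx ⟨e, he, hv⟩

theorem exists_spanning_closed_walk_of_boundary_eq_zero (hadj : ∀ e ∈ H, ends e ∈ G.edgeSet)
    (hH : boundary ends H = 0) (hconn : (fromEdgeSet (ends '' H)).Preconnected) (r : V) :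
    ∃ p : G.Walk r r, (∀ u, u ∈ p.support) ∧ p.length ≤ H.card := by
  obtain ⟨p, U, hUH, -, hp, hcov, havoid⟩ := exists_walk_of_isJoin hadj (isJoin_self_iff.mpr hH)
  refine ⟨p, fun u ↦ ?_, hp.trans_le (card_le_card hUH)⟩
  by_contra hu
  obtain ⟨q⟩ := hconn r u
  obtain ⟨⟨⟨x, y⟩, hxy⟩, -, hx, hy⟩ :=
    q.exists_boundary_dart {v | v ∈ p.support} p.start_mem_support hu
  obtain ⟨e, he, hexy⟩ := ((fromEdgeSet_adj _).mp hxy).1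
  by_cases heU : e ∈ U
  · exact hy (hcov e heU y (hexy ▸ Sym2.mem_mk_right x y))
  · exact havoid e he heU x (hexy ▸ Sym2.mem_mk_left x y) hx

/-- Mömke and Svensson: an edge of `J` is either doubled or, if it lies in `R`, deleted. -/
theorem exists_spanning_closed_walk_of_boundary_eq (hadj : ∀ e ∈ E, ends e ∈ G.edgeSet)
    (hJE : J ⊆ E) (hJ : boundary ends J = boundary ends E) (hRJ : R ⊆ J)
    (hconn : (fromEdgeSet (ends '' {e ∈ E | e ∉ R})).Preconnected) (r : V) :
    ∃ p : G.Walk r r, (∀ u, u ∈ p.support) ∧ p.length + 2 * R.card ≤ E.card + J.card := by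
  classical
  set H : Finset (ε ⊕ ε) := (E \ R).disjSum (J \ R)
  have hH : boundary (Sum.elim ends ends) H = 0 := by
    rw [boundary, sum_disjSum]
    change boundary ends (E \ R) + boundary ends (J \ R) = 0
    rw [boundary_sdiff (hRJ.trans hJE), boundary_sdiff hRJ, hJ, ZModModule.add_self]
  have hadjH : ∀ e ∈ H, Sum.elim ends ends e ∈ G.edgeSet := by
    rintro (e | e) he
    · exact hadj e (mem_sdiff.mp (inl_mem_disjSum.mp he)).1
    · exact hadj e (hJE (mem_sdiff.mp (inr_mem_disjSum.mp he)).1)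
  have hconnH : (fromEdgeSet (Sum.elim ends ends '' H)).Preconnected := by
    refine hconn.mono (fromEdgeSet_mono ?_)
    rintro _ ⟨e, he, rfl⟩
    exact ⟨.inl e, inl_mem_disjSum.mpr (mem_sdiff.mpr he), rfl⟩
  obtain ⟨p, hp, hle⟩ := exists_spanning_closed_walk_of_boundary_eq_zero hadjH hH hconnH r
  refine ⟨p, hp, ?_⟩
  rw [card_disjSum, card_sdiff_of_subset (hRJ.trans hJE), card_sdiff_of_subset hRJ] at hle
  have := card_le_card hRJ
  have := card_le_card hJE
  omega

end Euler

section RootedSpanningTree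

variable {V : Type*} {G : SimpleGraph V} {r u v x y : V}

/-- A spanning tree of `G` with root `r`, encoded by the parent and the depth of each vertex. The
parent of the root is a junk value. -/
structure RootedSpanningTree (G : SimpleGraph V) (r : V) where
  parent : V → V
  depth : V → ℕ
  depth_root : depth r = 0
  adj_parent : ∀ v ≠ r, G.Adj v (parent v)
  depth_eq : ∀ v ≠ r, depth v = depth (parent v) + 1

namespace RootedSpanningTree

/-- The tree order: `v` lies on the way from `x` to the root. -/
def IsAncestor (T : RootedSpanningTree G r) (v x : V) : Prop :=
  Relation.ReflTransGen (fun x y ↦ x ≠ r ∧ T.parent x = y) x v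

variable {T : RootedSpanningTree G r}

lemma IsAncestor.refl (x : V) : T.IsAncestor x x := Relation.ReflTransGen.refl

lemma isAncestor_iff : T.IsAncestor v x ↔ x = v ∨ x ≠ r ∧ T.IsAncestor v (T.parent x) := by
  rw [IsAncestor, Relation.ReflTransGen.cases_head_iff]
  simp only [and_assoc, exists_and_left, exists_eq_left', IsAncestor]

lemma IsAncestor.exists_child (h : T.IsAncestor v x) (hvx : v ≠ x) :
    ∃ c ≠ r, T.parent c = v ∧ T.IsAncestor c x := by
  obtain rfl | ⟨c, hc, hcr, hcv⟩ := Relation.ReflTransGen.cases_tail h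
  · exact absurd rfl hvx
  · exact ⟨c, hcr, hcv, hc⟩

lemma depth_eq_zero_iff (T : RootedSpanningTree G r) : T.depth x = 0 ↔ x = r := by
  refine ⟨fun hx ↦ ?_, fun hx ↦ hx ▸ T.depth_root⟩
  by_contra hxr
  exact absurd (T.depth_eq x hxr) (by omega)

lemma isAncestor_root (T : RootedSpanningTree G r) (x : V) : T.IsAncestor r x := by
  induction hd : T.depth x generalizing x with
  | zero => exact isAncestor_iff.mpr (.inl (T.depth_eq_zero_iff.mp hd))
  | succ n ih =>
    have hx : x ≠ r := mt T.depth_eq_zero_iff.mpr (by omega)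
    refine isAncestor_iff.mpr (.inr ⟨hx, ih _ ?_⟩)
    have := T.depth_eq x hx
    omega

lemma exists_depth_eq (T : RootedSpanningTree G r) (x : V) {k : ℕ} (hk : k ≤ T.depth x) :
    ∃ v, T.depth v = k := by
  induction hd : T.depth x generalizing x with
  | zero => exact ⟨x, by omega⟩
  | succ n ih =>
    obtain hk | rfl : k ≤ n ∨ k = n + 1 := by omega
    · have hx : x ≠ r := mt T.depth_eq_zero_iff.mpr (by omega)
      have := T.depth_eq x hx
      exact ih (T.parent x) (by omega) (by omega)
    · exact ⟨x, hd⟩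

lemma depth_lt_card [Fintype V] (T : RootedSpanningTree G r) (x : V) :
    T.depth x < Fintype.card V := by
  classical
  have hsub : range (T.depth x + 1) ⊆ univ.image T.depth := fun k hk ↦ by
    obtain ⟨v, hv⟩ := T.exists_depth_eq x (mem_range_succ_iff.mp hk)
    exact mem_image.mpr ⟨v, mem_univ v, hv⟩
  simpa using (card_le_card hsub).trans card_image_le

lemma nonempty_of_connected (hG : G.Connected) (r : V) : Nonempty (RootedSpanningTree G r) := by
  have hparent (v) (hv : v ≠ r) : ∃ u, G.Adj v u ∧ G.dist v r = G.dist u r + 1 := by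
    obtain ⟨p, hp⟩ := hG.exists_walk_length_eq_dist v r
    cases p with
    | nil => exact absurd rfl hv
    | @cons _ u _ hadj q =>
      have hle := hG.dist_triangle (u := v) (v := u) (w := r)
      rw [dist_eq_one_iff_adj.mpr hadj] at hle
      have := dist_le q
      rw [Walk.length_cons] at hp
      exact ⟨u, hadj, by omega⟩
  choose! f hadj hdist using hparent
  exact ⟨⟨f, (G.dist · r), dist_self, hadj, hdist⟩⟩

/-- Hanging the subtree at `v` below its neighbour `u` moves the whole subtree down. -/
lemma exists_sum_depth_lt [Fintype V] (T : RootedSpanningTree G r) (hadj : G.Adj u v)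
    (huv : ¬T.IsAncestor u v) (hvu : ¬T.IsAncestor v u) (hd : T.depth v ≤ T.depth u) :
    ∃ T' : RootedSpanningTree G r, ∑ x, T.depth x < ∑ x, T'.depth x := by
  classical
  have hvr : v ≠ r := by
    rintro rfl
    exact hvu (T.isAncestor_root u)
  have hr : ¬T.IsAncestor v r := fun h ↦ by simpa [hvr.symm] using isAncestor_iff.mp h
  refine ⟨{
    parent := Function.update T.parent v u
    depth x := if T.IsAncestor v x then T.depth x + (T.depth u + 1 - T.depth v) else T.depth x
    depth_root := by rw [if_neg hr, T.depth_root]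
    adj_parent x hx := ?_
    depth_eq x hx := ?_ }, sum_lt_sum (fun x _ ↦ ?_) ⟨v, mem_univ v, ?_⟩⟩
  · obtain rfl | hxv := eq_or_ne x v
    · simpa using hadj.symm
    · simpa [hxv] using T.adj_parent x hx
  · obtain rfl | hxv := eq_or_ne x v
    · rw [Function.update_self, if_pos (.refl x), if_neg hvu]
      omega
    · have hiff : T.IsAncestor v x ↔ T.IsAncestor v (T.parent x) := by
        rw [isAncestor_iff]
        simp [hxv, hx]
      rw [Function.update_of_ne hxv, hiff, T.depth_eq x hx]
      split_ifs <;> omega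
  · dsimp only
    split_ifs <;> omega
  · dsimp only
    rw [if_pos (.refl v)]
    omega

/-- A depth-first search tree: the ends of each edge of `G` are comparable in the tree order. -/
def IsNormal (T : RootedSpanningTree G r) : Prop :=
  ∀ ⦃x y⦄, G.Adj x y → T.IsAncestor x y ∨ T.IsAncestor y x

theorem exists_isNormal [Finite V] (hG : G.Connected) (r : V) :
    ∃ T : RootedSpanningTree G r, T.IsNormal := by
  have := Fintype.ofFinite V
  have := nonempty_of_connected hG r
  set S := Set.range fun T : RootedSpanningTree G r ↦ ∑ x, T.depth x
  have hS : BddAbove S := by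
    refine ⟨∑ _x : V, Fintype.card V, ?_⟩
    rintro _ ⟨T, rfl⟩
    exact sum_le_sum fun x _ ↦ (T.depth_lt_card x).le
  obtain ⟨T, hT⟩ := Nat.sSup_mem (Set.range_nonempty _) hS
  have hmax (T' : RootedSpanningTree G r) : ∑ x, T'.depth x ≤ ∑ x, T.depth x :=
    (le_csSup hS ⟨T', rfl⟩).trans hT.ge
  refine ⟨T, fun u v huv ↦ ?_⟩
  by_contra! hncomp
  obtain ⟨T', hT'⟩ : ∃ T' : RootedSpanningTree G r, ∑ x, T.depth x < ∑ x, T'.depth x := by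
    obtain hd | hd := le_total (T.depth v) (T.depth u)
    · exact T.exists_sum_depth_lt huv hncomp.1 hncomp.2 hd
    · exact T.exists_sum_depth_lt huv.symm hncomp.2 hncomp.1 hd
  exact (hmax T').not_gt hT'

/-- Induction from the leaves up: each subtree lies in one component, and `y` attaches it to the
parent. -/
lemma preconnected_of_forall_exists_adj [Finite V] (T : RootedSpanningTree G r)
    {K : SimpleGraph V} (hK : ∀ v ≠ r, ∃ y, T.IsAncestor v y ∧ K.Adj (T.parent v) y) :
    K.Preconnected := by
  have := Fintype.ofFinite V
  have hsub (n : ℕ) (c x) (hn : Fintype.card V - T.depth c = n) (hx : T.IsAncestor c x) :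
      K.Reachable c x := by
    induction n using Nat.strong_induction_on generalizing c x with | _ n ih
    obtain rfl | hcx := eq_or_ne c x
    · rfl
    · obtain ⟨v, hvr, rfl, hvx⟩ := hx.exists_child hcx
      obtain ⟨y, hvy, hy⟩ := hK v hvr
      have hlt : Fintype.card V - T.depth v < n := by
        have := T.depth_lt_card v
        have := T.depth_eq v hvr
        omega
      exact hy.reachable.trans ((ih _ hlt v y rfl hvy).symm.trans (ih _ hlt v x rfl hvx))
  exact fun x y ↦ (hsub _ r x rfl (T.isAncestor_root x)).symm.trans
    (hsub _ r y rfl (T.isAncestor_root y))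

end RootedSpanningTree

end RootedSpanningTree

section Removable

variable {V : Type*} [Fintype V] {G : SimpleGraph V} [DecidableRel G.Adj]

lemma cut_edgeFinset_singleton [DecidableEq V] (v : V) :
    cut id G.edgeFinset {v} = G.incidenceFinset v := by
  ext e
  induction e with | _ x y
  simp only [mem_cut_iff (ends := id) rfl, mem_edgeFinset, mem_edgeSet, mem_singleton,
    mem_incidenceFinset, mk'_mem_incidenceSet_iff]
  grind [SimpleGraph.Adj.ne]

lemma card_cut_edgeFinset_ne_one (hG : G.IsEdgeConnected 2) (S : Finset V) :
    (cut id G.edgeFinset S).card ≠ 1 := by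
  intro hcut
  obtain ⟨e, he⟩ := card_eq_one.mp hcut
  obtain ⟨-, x, hx, y, hy, -⟩ := mem_cut.mp (he ▸ mem_singleton_self e)
  obtain ⟨p⟩ := isEdgeConnected_two.mp hG e x y
  obtain ⟨⟨⟨u, v⟩, huv⟩, -, hu, hv⟩ := p.exists_boundary_dart S hx hy
  obtain ⟨huv, hne⟩ := deleteEdges_adj.mp huv
  refine hne ?_
  rw [Set.mem_singleton_iff, ← mem_singleton, ← he]
  exact mem_cut.mpr ⟨mem_edgeFinset.mpr huv, u, hu, v, hv, rfl⟩

variable [DecidableEq V]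

theorem exists_spanning_closed_walk_of_removable (hG : G.IsEdgeConnected 2)
    {R : Finset (Sym2 V)} (hR : R ⊆ G.edgeFinset)
    (hconn : ∀ J ⊆ G.edgeFinset, (∀ v, G.degree v = 3 → (cut id J {v}).card = 1) →
      (fromEdgeSet {e ∈ G.edgeSet | e ∉ J ∩ R}).Preconnected) (r : V) :
    ∃ p : G.Walk r r, (∀ u, u ∈ p.support) ∧
      3 * p.length + 2 * R.card ≤ 4 * G.edgeFinset.card := by
  obtain ⟨J, hJE, hJ, hle, hone⟩ := exists_boundary_eq_three_mul_sum_le_card_cut_eq_one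
    (card_cut_edgeFinset_ne_one hG) (fun e ↦ if e ∈ R then -1 else 1) {v | G.degree v = 3}
    fun v hv ↦ by
      rw [cut_edgeFinset_singleton, card_incidenceFinset_eq_degree]
      exact (mem_filter.mp hv).2
  obtain ⟨p, hp, hlen⟩ := exists_spanning_closed_walk_of_boundary_eq (G := G) (ends := id)
    (fun e he ↦ mem_edgeFinset.mp he) hJE hJ (inter_subset_left (s₂ := R))
    (by simpa using hconn J hJE fun v hv ↦ hone v (by simpa using hv)) r
  refine ⟨p, hp, ?_⟩
  have hsum (C : Finset (Sym2 V)) :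
      ∑ e ∈ C, (if e ∈ R then -1 else 1 : ℤ) = C.card - 2 * (C ∩ R).card := by
    have := card_sdiff_add_card_inter C R
    rw [← sum_inter_add_sum_sdiff C R, sum_congr rfl fun e he ↦ if_pos (mem_inter.mp he).2,
      sum_congr rfl fun e he ↦ if_neg (mem_sdiff.mp he).2]
    simp only [sum_neg_distrib, sum_const, nsmul_one]
    omega
  rw [hsum, hsum, inter_eq_right.mpr hR] at hle
  omega

end Removable

namespace RootedSpanningTree

variable {V : Type*} {G : SimpleGraph V} {r u v y : V}

/-- The tree edge between `v` and its parent. -/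
abbrev parentEdge (T : RootedSpanningTree G r) (v : V) : Sym2 V := s(T.parent v, v)

lemma injOn_parentEdge (T : RootedSpanningTree G r) : Set.InjOn T.parentEdge {r}ᶜ := by
  intro u hu v hv huv
  obtain ⟨-, h⟩ | ⟨h, h'⟩ := Sym2.eq_iff.mp huv
  · exact h
  · have hu := T.depth_eq u hu
    have hv := T.depth_eq v hv
    rw [h] at hu
    rw [← h'] at hv
    omega

variable [Fintype V] [DecidableEq V]

/-- The edges of a rooted spanning tree. -/
def edges (T : RootedSpanningTree G r) : Finset (Sym2 V) := (univ.erase r).image T.parentEdge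

lemma parentEdge_mem_edges (T : RootedSpanningTree G r) (hv : v ≠ r) : T.parentEdge v ∈ T.edges :=
  mem_image_of_mem _ (mem_erase.mpr ⟨hv, mem_univ v⟩)

lemma card_edges (T : RootedSpanningTree G r) : T.edges.card = Fintype.card V - 1 := by
  rw [edges, card_image_of_injOn (T.injOn_parentEdge.mono (by simp)),
    card_erase_of_mem (mem_univ r), card_univ]

variable [DecidableRel G.Adj]

/-- The edges of the graph outside a rooted spanning tree. -/
def backEdges (T : RootedSpanningTree G r) : Finset (Sym2 V) := G.edgeFinset \ T.edges

lemma edges_subset (T : RootedSpanningTree G r) : T.edges ⊆ G.edgeFinset := by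
  intro e he
  obtain ⟨v, hv, rfl⟩ := mem_image.mp he
  exact mem_edgeFinset.mpr (T.adj_parent v (mem_erase.mp hv).1).symm

lemma card_backEdges (T : RootedSpanningTree G r) :
    G.edgeFinset.card + 1 = Fintype.card V + T.backEdges.card := by
  have hcard := card_sdiff_add_card_eq_card T.edges_subset
  have hpos : 0 < Fintype.card V := Fintype.card_pos_iff.mpr ⟨r⟩
  rw [card_edges] at hcard
  rw [backEdges]
  omega

open Classical in
/-- The vertices `v` for which the tree edge from `v` to its parent may be removed: the parent is a
cubic vertex and sends a back edge into the subtree at `v`. -/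
noncomputable def coveredChildren (T : RootedSpanningTree G r) : Finset V :=
  {v | v ≠ r ∧ G.degree (T.parent v) = 3 ∧
    ∃ y, T.IsAncestor v y ∧ s(T.parent v, y) ∈ T.backEdges}

/-- The removable edges of Mömke and Svensson: the back edges and the tree edges above the covered
children. -/
noncomputable def removableEdges (T : RootedSpanningTree G r) : Finset (Sym2 V) :=
  T.backEdges ∪ T.coveredChildren.image T.parentEdge

lemma mem_coveredChildren {T : RootedSpanningTree G r} : v ∈ T.coveredChildren ↔
    v ≠ r ∧ G.degree (T.parent v) = 3 ∧
      ∃ y, T.IsAncestor v y ∧ s(T.parent v, y) ∈ T.backEdges := by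
  simp [coveredChildren]

lemma image_coveredChildren_subset (T : RootedSpanningTree G r) :
    T.coveredChildren.image T.parentEdge ⊆ T.edges :=
  image_subset_image fun _ hv ↦ mem_erase.mpr ⟨(mem_coveredChildren.mp hv).1, mem_univ _⟩

lemma removableEdges_subset (T : RootedSpanningTree G r) : T.removableEdges ⊆ G.edgeFinset :=
  union_subset sdiff_subset (T.image_coveredChildren_subset.trans T.edges_subset)

lemma card_removableEdges (T : RootedSpanningTree G r) :
    T.removableEdges.card = T.backEdges.card + T.coveredChildren.card := by
  rw [removableEdges, card_union_of_disjoint, card_image_of_injOn]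
  · exact T.injOn_parentEdge.mono fun v hv ↦ (mem_coveredChildren.mp hv).1
  · exact disjoint_of_subset_right T.image_coveredChildren_subset sdiff_disjoint

lemma parentEdge_mem_removableEdges_iff (T : RootedSpanningTree G r) (hv : v ≠ r) :
    T.parentEdge v ∈ T.removableEdges ↔ v ∈ T.coveredChildren := by
  rw [removableEdges, mem_union, backEdges, mem_sdiff]
  simp only [T.parentEdge_mem_edges hv, not_true_eq_false, and_false, false_or]
  refine ⟨fun h ↦ ?_, mem_image_of_mem _⟩
  obtain ⟨u, hu, huv⟩ := mem_image.mp h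
  exact T.injOn_parentEdge (mem_coveredChildren.mp hu).1 hv huv ▸ hu

/-- Of the two edges at the cubic parent, `J` contains at most one. -/
lemma preconnected_sdiff_removableEdges (T : RootedSpanningTree G r) {J : Finset (Sym2 V)}
    (hJ : ∀ v, G.degree v = 3 → (cut id J {v}).card = 1) :
    (fromEdgeSet {e ∈ G.edgeSet | e ∉ J ∩ T.removableEdges}).Preconnected := by
  refine T.preconnected_of_forall_exists_adj fun v hv ↦ ?_
  by_cases hmem : T.parentEdge v ∈ J ∩ T.removableEdges
  · obtain ⟨hvJ, hvR⟩ := mem_inter.mp hmem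
    obtain ⟨-, hdeg, y, hvy, hy⟩ := mem_coveredChildren.mp
      ((T.parentEdge_mem_removableEdges_iff hv).mp hvR)
    obtain ⟨hyE, hyT⟩ := mem_sdiff.mp hy
    have hyG : G.Adj (T.parent v) y := mem_edgeFinset.mp hyE
    refine ⟨y, hvy, (fromEdgeSet_adj _).mpr ⟨⟨hyG, fun hyJ ↦ hyT ?_⟩, hyG.ne⟩⟩
    have heq : s(T.parent v, y) = T.parentEdge v := card_le_one.mp (hJ _ hdeg).le _
      (mem_cut_singleton.mpr ⟨(mem_inter.mp hyJ).1, y, hyG.ne', rfl⟩) _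
      (mem_cut_singleton.mpr ⟨hvJ, v, (T.adj_parent v hv).ne, rfl⟩)
    exact heq ▸ T.parentEdge_mem_edges hv
  · have hadj := (T.adj_parent v hv).symm
    exact ⟨v, .refl v, (fromEdgeSet_adj _).mpr ⟨⟨hadj, hmem⟩, hadj.ne⟩⟩

open Classical in
/-- The back edges from `u` down to its descendants. -/
noncomputable def downEdges (T : RootedSpanningTree G r) (u : V) : Finset (Sym2 V) :=
  {e ∈ T.backEdges | ∃ y, T.IsAncestor u y ∧ e = s(u, y)}

lemma mem_downEdges {T : RootedSpanningTree G r} {e : Sym2 V} :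
    e ∈ T.downEdges u ↔ e ∈ T.backEdges ∧ ∃ y, T.IsAncestor u y ∧ e = s(u, y) := by
  simp [downEdges]

lemma IsNormal.backEdges_subset {T : RootedSpanningTree G r} (hT : T.IsNormal) :
    T.backEdges ⊆ univ.biUnion T.downEdges := by
  intro e he
  induction e with | _ x y
  obtain h | h := hT (mem_edgeFinset.mp (mem_sdiff.mp he).1)
  · exact mem_biUnion.mpr ⟨x, mem_univ x, mem_downEdges.mpr ⟨he, y, h, rfl⟩⟩
  · exact mem_biUnion.mpr ⟨y, mem_univ y, mem_downEdges.mpr ⟨he, x, h, Sym2.eq_swap⟩⟩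

/-- Besides the back edges, the tree edge to a child and, unless `u` is the root, the tree edge to
the parent of `u` are edges at `u`. -/
lemma card_downEdges_le (T : RootedSpanningTree G r) (hdeg : G.degree u ≤ 3) :
    (T.downEdges u).card ≤
      {v ∈ T.coveredChildren | T.parent v = u}.card + if u = r then 1 else 0 := by
  obtain hempty | ⟨e, he⟩ := (T.downEdges u).eq_empty_or_nonempty
  · simp [hempty]
  obtain ⟨heB, y, huy, rfl⟩ := mem_downEdges.mp he
  have hadj : G.Adj u y := mem_edgeFinset.mp (mem_sdiff.mp heB).1
  obtain ⟨c, hcr, rfl, hcy⟩ := huy.exists_child hadj.ne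
  have hcovered (h : G.degree (T.parent c) = 3) :
      0 < {v ∈ T.coveredChildren | T.parent v = T.parent c}.card :=
    card_pos.mpr ⟨c, mem_filter.mpr ⟨mem_coveredChildren.mpr ⟨hcr, h, y, hcy, heB⟩, rfl⟩⟩
  have hdown : T.downEdges (T.parent c) ⊆ G.incidenceFinset (T.parent c) \ T.edges := by
    intro e he
    obtain ⟨heB, y, -, rfl⟩ := mem_downEdges.mp he
    obtain ⟨heE, heT⟩ := mem_sdiff.mp heB
    exact mem_sdiff.mpr ⟨by simpa using heE, heT⟩
  have hchild : T.parentEdge c ∈ G.incidenceFinset (T.parent c) ∩ T.edges :=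
    mem_inter.mpr ⟨by simpa using (T.adj_parent c hcr).symm, T.parentEdge_mem_edges hcr⟩
  have hcard := card_sdiff_add_card_inter (G.incidenceFinset (T.parent c)) T.edges
  have hle := card_le_card hdown
  have hdown_pos : 0 < (T.downEdges (T.parent c)).card := card_pos.mpr ⟨_, he⟩
  have hchild_pos := card_pos.mpr ⟨_, hchild⟩
  rw [card_incidenceFinset_eq_degree] at hcard
  split_ifs with hroot
  · omega
  · have hparent : T.parentEdge (T.parent c) ∈ G.incidenceFinset (T.parent c) ∩ T.edges :=
      mem_inter.mpr ⟨by simpa [parentEdge, Sym2.eq_swap] using T.adj_parent _ hroot,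
        T.parentEdge_mem_edges hroot⟩
    have hne : T.parentEdge (T.parent c) ≠ T.parentEdge c :=
      T.injOn_parentEdge.ne hroot hcr (T.adj_parent c hcr).ne'
    have := one_lt_card.mpr ⟨_, hparent, _, hchild, hne⟩
    omega

lemma IsNormal.card_backEdges_le {T : RootedSpanningTree G r} (hT : T.IsNormal)
    (hdeg : ∀ v, G.degree v ≤ 3) : T.backEdges.card ≤ T.coveredChildren.card + 1 := calc
  T.backEdges.card ≤ ∑ u, (T.downEdges u).card :=
    (card_le_card hT.backEdges_subset).trans card_biUnion_le
  _ ≤ ∑ u, ({v ∈ T.coveredChildren | T.parent v = u}.card + if u = r then 1 else 0) :=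
    sum_le_sum fun u _ ↦ T.card_downEdges_le (hdeg u)
  _ = T.coveredChildren.card + 1 := by
    rw [sum_add_distrib, sum_ite_eq' univ r, if_pos (mem_univ r),
      card_eq_sum_card_fiberwise fun v _ ↦ mem_univ (T.parent v)]

end RootedSpanningTree

section SpanningClosedWalk

variable {V : Type*} {G : SimpleGraph V}

theorem exists_spanning_closed_walk_of_isEdgeConnected_two [Fintype V] [DecidableRel G.Adj]
    (hG : G.IsEdgeConnected 2) (hdeg : ∀ v, G.degree v ≤ 3) (r : V) :
    ∃ p : G.Walk r r, (∀ u, u ∈ p.support) ∧ 3 * p.length + 2 ≤ 4 * Fintype.card V := by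
  classical
  have : Nonempty V := ⟨r⟩
  have hconn : G.Connected := hG.connected two_ne_zero
  obtain ⟨T, hT⟩ := RootedSpanningTree.exists_isNormal hconn r
  obtain ⟨p, hp, hlen⟩ := exists_spanning_closed_walk_of_removable hG T.removableEdges_subset
    (fun J _ hJ ↦ T.preconnected_sdiff_removableEdges hJ) r
  refine ⟨p, hp, ?_⟩
  have hremovable := T.card_removableEdges
  have hback := T.card_backEdges
  have hcovered := hT.card_backEdges_le hdeg
  omega

lemma isEdgeConnected_two_of_forall_preconnected_induce (hn : 3 ≤ ENat.card V)
    (hG : ∀ v, (G.induce {u | u ≠ v}).Preconnected) : G.IsEdgeConnected 2 := by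
  refine isEdgeConnected_two.mpr fun e ↦ ?_
  have hreach {c x y : V} (hc : e ∈ G.edgeSet → c ∈ e) (hx : x ≠ c) (hy : y ≠ c) :
      (G.deleteEdges {e}).Reachable x y := by
    refine (hG c ⟨x, hx⟩ ⟨y, hy⟩).map ⟨Subtype.val, fun {a b} hab ↦ deleteEdges_adj.mpr
      ⟨hab, fun (h : s(a.1, b.1) = e) ↦ ?_⟩⟩
    obtain hca | hcb := Sym2.mem_iff.mp (h ▸ hc (h ▸ hab))
    exacts [a.2 hca.symm, b.2 hcb.symm]
  by_cases he : e ∈ G.edgeSet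
  · induction e with | _ u v
    obtain ⟨z, hzu, hzv⟩ := ENat.exists_ne_ne_of_three_le hn u v
    have hz (x : V) : (G.deleteEdges {s(u, v)}).Reachable x z := by
      obtain rfl | hxu := eq_or_ne x u
      · exact hreach (fun _ ↦ Sym2.mem_mk_right x v) (G.ne_of_adj he) hzv
      · exact hreach (fun _ ↦ Sym2.mem_mk_left u v) hxu hzu
    exact fun x y ↦ (hz x).trans (hz y).symm
  · intro x y
    obtain ⟨z, hzx, hzy⟩ := ENat.exists_ne_ne_of_three_le hn x y
    exact hreach (fun h ↦ absurd h he) hzx.symm hzy.symm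

lemma exists_spanning_closed_walk_of_card_eq_two [Fintype V] (hG : G.Preconnected)
    (hcard : Fintype.card V = 2) (x : V) :
    ∃ p : G.Walk x x, (∀ u, u ∈ p.support) ∧ p.length = 2 := by
  classical
  have : Nontrivial V := Fintype.one_lt_card_iff_nontrivial.mp (by omega)
  obtain ⟨y, hxy⟩ := hG.exists_adj_of_nontrivial x
  have huniv : ({x, y} : Finset V) = univ :=
    eq_univ_of_card _ (by rw [card_pair hxy.ne, hcard])
  refine ⟨.cons hxy (.cons hxy.symm .nil), fun u ↦ ?_, rfl⟩
  have hu : u ∈ ({x, y} : Finset V) := huniv ▸ mem_univ u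
  simp only [mem_insert, mem_singleton] at hu
  obtain rfl | rfl := hu <;> simp

end SpanningClosedWalk

end SubcubicTour

/-- Every 2-vertex-connected subcubic simple graph on `n ≥ 1` vertices
has a spanning closed walk of length at most `4n/3 − 2/3`. -/
theorem spanning_closed_walk_subcubic_two_connected
    {V : Type*} [Fintype V] [DecidableEq V]
    (G : SimpleGraph V) [DecidableRel G.Adj]
    (hn : 1 ≤ Fintype.card V)
    (hconn : G.Connected)
    (hdeg : ∀ v : V, G.degree v ≤ 3)
    (h2vc : ∀ v : V, (G.induce {u : V | u ≠ v}).Connected) :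
    ∃ (v : V) (w : G.Walk v v), (∀ u : V, u ∈ w.support) ∧
      (w.length : ℝ) ≤ 4 * Fintype.card V / 3 - 2 / 3 := by
  obtain ⟨r⟩ := hconn.nonempty
  obtain ⟨p, hp, hlen⟩ : ∃ p : G.Walk r r, (∀ u, u ∈ p.support) ∧
      3 * p.length + 2 ≤ 4 * Fintype.card V := by
    obtain hcard | hcard := le_or_gt 3 (Fintype.card V)
    · refine SubcubicTour.exists_spanning_closed_walk_of_isEdgeConnected_two
        (SubcubicTour.isEdgeConnected_two_of_forall_preconnected_induce ?_
          fun v ↦ (h2vc v).preconnected) hdeg r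
      simpa using hcard
    · obtain ⟨⟨u, hu⟩⟩ := (h2vc r).nonempty
      have : 1 < Fintype.card V := Fintype.one_lt_card_iff.mpr ⟨u, r, hu⟩
      obtain ⟨p, hp, hlen⟩ := SubcubicTour.exists_spanning_closed_walk_of_card_eq_two
        hconn.preconnected (by omega) r
      exact ⟨p, hp, by omega⟩
  refine ⟨r, p, hp, ?_⟩
  have : (3 * p.length + 2 : ℝ) ≤ 4 * Fintype.card V := by exact_mod_cast hlen
  linarith
end

section
/- Let G be a connected claw-free simple graph on n ≥ 1 vertices such that for every vertex v the subgraph induced on the remaining vertices is connected. Then G has a spanning closed walk of length at most 4n/3 − 2/3. -/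
open SimpleGraph

/-!
Read `G` as the relation “adjacent or equal” on its vertices. Ryjáček’s local completion, applied at
the centre `x` of an induced diamond, preserves claw-freeness, and a closed sequence covering the
completion can be rearranged into one covering the original: cut it into segments inside which no
completion edge is used; claw-freeness leaves at most two of them, and the diamond splices these
together. So one may assume that there is no induced diamond. Then the graph is the line graph of a
multigraph `H` whose edges are the `n` vertices and whose nodes are the maximal cliques, and `H` is
bridgeless by 2-connectivity. Let `J` be a minimum edge set of `H` whose removal leaves all degrees
even. After subdividing every edge `H` is bipartite, and there (Seymour) the edges of a minimum join
lie in pairwise disjoint cuts; each such cut has at least three edges, so `3 |J| ≤ n`. Doubling all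
edges of `J` but one, which becomes a loop, makes `H` Eulerian with at most `n + |J| - 1` edges, and
an Euler tour of it is the desired closed sequence.
-/

section EdgeSpace

variable {E N : Type*}

/-- The sum of the two ends of an edge in the vertex space over `𝔽₂`; it vanishes for a loop. -/
noncomputable def endpointSum : Sym2 N → N →₀ ZMod 2 :=
  Sym2.lift ⟨fun p q => .single p 1 + .single q 1, fun _ _ => add_comm _ _⟩

lemma endpointSum_mk (p q : N) :
    endpointSum s(p, q) = .single p (1 : ZMod 2) + .single q 1 := rfl

lemma endpointSum_of_isDiag {s : Sym2 N} (hs : s.IsDiag) : endpointSum s = 0 := by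
  induction s with | _ p q
  obtain rfl := Sym2.mk_isDiag_iff.1 hs
  exact ZModModule.add_self _

@[simp] lemma endpointSum_diag (p : N) : endpointSum s(p, p) = 0 := endpointSum_of_isDiag rfl

lemma endpointSum_add_endpointSum (p q r : N) :
    endpointSum s(p, q) + endpointSum s(q, r) = endpointSum s(p, r) :=
  ZModModule.add_add_add_cancel _ _ _

lemma endpointSum_apply_ne_zero {p q x : N} (hpq : p ≠ q) :
    endpointSum s(p, q) x ≠ 0 ↔ x = p ∨ x = q := by
  classical
  simp only [endpointSum_mk, Finsupp.add_apply, Finsupp.single_apply]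
  grind

lemma endpointSum_apply_eq_zero {p q x : N} (hp : x ≠ p) (hq : x ≠ q) :
    endpointSum s(p, q) x = 0 := by
  rw [endpointSum_mk, Finsupp.add_apply, Finsupp.single_eq_of_ne hp, Finsupp.single_eq_of_ne hq,
    add_zero]

lemma exists_ne_of_endpointSum_apply_ne_zero {s : Sym2 N} {x : N} (h : endpointSum s x ≠ 0) :
    ∃ y ≠ x, s = s(x, y) := by
  induction s with | _ p q
  obtain rfl | hpq := eq_or_ne p q
  · simp at h
  · obtain rfl | rfl := (endpointSum_apply_ne_zero hpq).1 h
    exacts [⟨q, hpq.symm, rfl⟩, ⟨p, hpq, Sym2.eq_swap⟩]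

lemma endpointSum_ne_zero {p q : N} (hpq : p ≠ q) : endpointSum s(p, q) ≠ 0 :=
  fun h => (endpointSum_apply_ne_zero hpq).2 (.inl rfl) (by rw [h, Finsupp.zero_apply])

/-- The boundary over `𝔽₂` of an edge set of the multigraph on `N` in which the edge `e : E` joins
the two members of `ends e`; loops and parallel edges are allowed. -/
noncomputable def edgeBoundary (ends : E → Sym2 N) (S : Finset E) : N →₀ ZMod 2 :=
  ∑ e ∈ S, endpointSum (ends e)

variable {ends : E → Sym2 N}

@[simp] lemma edgeBoundary_empty : edgeBoundary ends ∅ = 0 := Finset.sum_empty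

@[simp] lemma edgeBoundary_singleton (e : E) :
    edgeBoundary ends {e} = endpointSum (ends e) := Finset.sum_singleton _ _

lemma exists_mem_of_edgeBoundary_apply_ne_zero {S : Finset E} {p : N}
    (h : edgeBoundary ends S p ≠ 0) : ∃ e ∈ S, ∃ x ≠ p, ends e = s(p, x) := by
  rw [edgeBoundary, Finsupp.finsetSum_apply] at h
  obtain ⟨e, he, hne⟩ := Finset.exists_ne_zero_of_sum_ne_zero h
  exact ⟨e, he, exists_ne_of_endpointSum_apply_ne_zero hne⟩

lemma edgeBoundary_insert [DecidableEq E] {S : Finset E} {e : E} (he : e ∉ S) :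
    edgeBoundary ends (insert e S) = endpointSum (ends e) + edgeBoundary ends S :=
  Finset.sum_insert he

lemma edgeBoundary_union [DecidableEq E] {S T : Finset E} (h : Disjoint S T) :
    edgeBoundary ends (S ∪ T) = edgeBoundary ends S + edgeBoundary ends T :=
  Finset.sum_union h

lemma edgeBoundary_sdiff [DecidableEq E] {S T : Finset E} (h : T ⊆ S) :
    edgeBoundary ends (S \ T) = edgeBoundary ends S + edgeBoundary ends T := by
  rw [← ZModModule.sub_eq_add, eq_sub_iff_add_eq]
  exact Finset.sum_sdiff h

lemma edgeBoundary_erase [DecidableEq E] {S : Finset E} {e : E} (h : e ∈ S) :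
    edgeBoundary ends (S.erase e) = edgeBoundary ends S + endpointSum (ends e) := by
  rw [Finset.erase_eq, edgeBoundary_sdiff (by simpa using h), edgeBoundary_singleton]

/-- The handshake lemma inside the component of `p` in `S`. -/
lemma exists_subset_edgeBoundary_eq {S : Finset E} {p : N} (hp : edgeBoundary ends S p ≠ 0) :
    ∃ q ≠ p, edgeBoundary ends S q ≠ 0 ∧ ∃ Z ⊆ S, edgeBoundary ends Z = endpointSum s(p, q) := by
  classical
  induction S using Finset.strongInduction generalizing p with | H S ih
  obtain ⟨e, he, x, hxp, hex⟩ := exists_mem_of_edgeBoundary_apply_ne_zero hp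
  by_cases hx : edgeBoundary ends S x = 0
  · have herase (y : N) : edgeBoundary ends (S.erase e) y =
        edgeBoundary ends S y + endpointSum s(p, x) y := by
      rw [edgeBoundary_erase he, hex, Finsupp.add_apply]
    obtain ⟨q, hqx, hq, Z, hZS, hZ⟩ := ih _ (Finset.erase_ssubset he) (p := x) <| by
      rw [herase, hx, zero_add]
      exact (endpointSum_apply_ne_zero hxp.symm).2 (.inr rfl)
    have hqp : q ≠ p := by
      rintro rfl
      have h1 (y : ZMod 2) : y ≠ 0 → y = 1 := by revert y; decide
      rw [herase, h1 _ hp, h1 _ ((endpointSum_apply_ne_zero hxp.symm).2 (.inl rfl))] at hq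
      exact hq (by decide)
    refine ⟨q, hqp, ?_, insert e Z, ?_, ?_⟩
    · rwa [herase, endpointSum_apply_eq_zero hqp hqx, add_zero] at hq
    · exact Finset.insert_subset he (hZS.trans (Finset.erase_subset _ _))
    · rw [edgeBoundary_insert fun h => Finset.notMem_erase e S (hZS h), hex, hZ,
        endpointSum_add_endpointSum]
  · exact ⟨x, hxp, hx, {e}, by simpa using he, by rw [edgeBoundary_singleton, hex]⟩

/-- No nonempty subset of `S` has zero boundary, i.e. `S` is a forest. -/
def IsEdgeForest (ends : E → Sym2 N) (S : Finset E) : Prop :=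
  ∀ X ⊆ S, edgeBoundary ends X = 0 → X = ∅

lemma IsEdgeForest.mono {S T : Finset E} (hS : IsEdgeForest ends S) (hTS : T ⊆ S) :
    IsEdgeForest ends T := fun X hX => hS X (hX.trans hTS)

lemma IsEdgeForest.not_isDiag {S : Finset E} (hS : IsEdgeForest ends S) {e : E} (he : e ∈ S) :
    ¬(ends e).IsDiag := fun hdiag => Finset.singleton_ne_empty e <|
  hS {e} (by simpa using he) (by rw [edgeBoundary_singleton, endpointSum_of_isDiag hdiag])

/-- A forest with boundary `u + u'` is a path, so it contains a path from `u` to each of its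
vertices. -/
lemma IsEdgeForest.exists_subset_edgeBoundary_eq {C : Finset E} (hC : IsEdgeForest ends C)
    {u u' q : N} (hCu : edgeBoundary ends C = endpointSum s(u, u')) {f : E} (hf : f ∈ C)
    (hq : q ∈ ends f) : ∃ Z ⊆ C, edgeBoundary ends Z = endpointSum s(u, q) := by
  classical
  obtain ⟨x, hfx⟩ := Sym2.mem_iff_exists.1 hq
  have hqx : q ≠ x := by simpa [hfx] using hC.not_isDiag hf
  have huu' : u ≠ u' := by
    rintro rfl
    rw [hC C subset_rfl (by rw [hCu, endpointSum_diag])] at hf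
    simp at hf
  obtain rfl | hqu := eq_or_ne q u
  · exact ⟨∅, by simp⟩
  obtain rfl | hqu' := eq_or_ne q u'
  · exact ⟨C, subset_rfl, hCu⟩
  have herase (y : N) : edgeBoundary ends (C.erase f) y =
      endpointSum s(u, u') y + endpointSum s(q, x) y := by
    rw [edgeBoundary_erase hf, hfx, hCu, Finsupp.add_apply]
  obtain ⟨r, hrq, hr, Z, hZC, hZ⟩ := _root_.exists_subset_edgeBoundary_eq (ends := ends)
    (S := C.erase f) (p := q) <| by
      rw [herase, endpointSum_apply_eq_zero hqu hqu', zero_add]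
      exact (endpointSum_apply_ne_zero hqx).2 (.inl rfl)
  have hfZ : f ∉ Z := fun h => Finset.notMem_erase f C (hZC h)
  replace hZC := hZC.trans (Finset.erase_subset _ _)
  have hrx : r ≠ x := by
    rintro rfl
    have hempty := hC (insert f Z) (Finset.insert_subset hf hZC) <| by
      rw [edgeBoundary_insert hfZ, hfx, hZ, ZModModule.add_self]
    exact Finset.insert_ne_empty f Z hempty
  obtain rfl | rfl : r = u ∨ r = u' := by
    by_contra! hne
    rw [herase, endpointSum_apply_eq_zero hne.1 hne.2, endpointSum_apply_eq_zero hrq hrx,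
      add_zero] at hr
    exact hr rfl
  · exact ⟨Z, hZC, by rw [hZ, Sym2.eq_swap]⟩
  · refine ⟨C \ Z, Finset.sdiff_subset, ?_⟩
    rw [edgeBoundary_sdiff hZC, hCu, hZ, Sym2.eq_swap (a := q), endpointSum_add_endpointSum]

/-- The edges leaving the vertex set `X`. -/
noncomputable def edgeCut [Fintype E] (ends : E → Sym2 N) (X : Set N) : Finset E :=
  open scoped Classical in Finset.univ.filter fun e => ∃ p ∈ X, ∃ q ∉ X, ends e = s(p, q)

lemma mem_edgeCut [Fintype E] {X : Set N} {e : E} {p q : N} (he : ends e = s(p, q)) :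
    e ∈ edgeCut ends X ↔ (p ∈ X ↔ q ∉ X) := by
  simp only [edgeCut, Finset.mem_filter, Finset.mem_univ, true_and, he, Sym2.eq_iff]
  grind

lemma even_card_inter_edgeCut [Fintype E] [DecidableEq E] {S : Finset E}
    (hS : edgeBoundary ends S = 0) (X : Set N) : Even (S ∩ edgeCut ends X).card := by
  classical
  let parity : (N →₀ ZMod 2) →+ ZMod 2 :=
    Finsupp.liftAddHom fun p => if p ∈ X then AddMonoidHom.id _ else 0
  have hparity (e : E) :
      parity (endpointSum (ends e)) = if e ∈ edgeCut ends X then 1 else 0 := by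
    obtain ⟨p, q, hpq⟩ := Sym2.exists.1 ⟨ends e, rfl⟩
    simp only [mem_edgeCut hpq, hpq, endpointSum_mk, map_add, parity,
      Finsupp.liftAddHom_apply_single]
    by_cases hp : p ∈ X <;> by_cases hq : q ∈ X <;> simp [hp, hq, ZModModule.add_self]
  rw [← ZMod.natCast_eq_zero_iff_even, ← Finset.filter_mem_eq_inter, Finset.natCast_card_filter,
    ← Finset.sum_congr rfl fun e _ => hparity e, ← map_sum]
  exact (congrArg parity hS).trans (map_zero parity)

/-- `A` and its complement are the classes of a proper 2-colouring; loops are allowed. -/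
def IsEdgeBipartition (ends : E → Sym2 N) (A : Set N) : Prop :=
  ∀ ⦃e p q⦄, ends e = s(p, q) → p ≠ q → (p ∈ A ↔ q ∉ A)

lemma IsEdgeBipartition.even_card [Finite E] {A : Set N} (hA : IsEdgeBipartition ends A)
    {S : Finset E} (hS : edgeBoundary ends S = 0) (hloop : ∀ e ∈ S, ¬(ends e).IsDiag) :
    Even S.card := by
  classical
  have := Fintype.ofFinite E
  have hcut : S ⊆ edgeCut ends A := by
    intro e he
    obtain ⟨p, q, hpq⟩ := Sym2.exists.1 ⟨ends e, rfl⟩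
    exact (mem_edgeCut hpq).2 (hA hpq (by simpa [hpq] using hloop e he))
  simpa only [Finset.inter_eq_left.2 hcut] using even_card_inter_edgeCut hS A

section Weight

variable [DecidableEq E] {J : Finset E}

/-- The `±1`-weight of an edge set in which the edges of `J` are the negative ones. -/
def signedCard (J S : Finset E) : ℤ := ∑ e ∈ S, if e ∈ J then -1 else 1

@[simp] lemma signedCard_empty : signedCard J ∅ = 0 := Finset.sum_empty

lemma signedCard_insert {S : Finset E} {e : E} (he : e ∉ S) :
    signedCard J (insert e S) = (if e ∈ J then -1 else 1) + signedCard J S :=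
  Finset.sum_insert he

lemma signedCard_erase {S : Finset E} {e : E} (he : e ∈ S) :
    signedCard J (S.erase e) = signedCard J S - if e ∈ J then -1 else 1 :=
  Finset.sum_erase_eq_sub he

lemma signedCard_union {S T : Finset E} (h : Disjoint S T) :
    signedCard J (S ∪ T) = signedCard J S + signedCard J T := Finset.sum_union h

lemma signedCard_sdiff {S T : Finset E} (h : T ⊆ S) :
    signedCard J (S \ T) = signedCard J S - signedCard J T :=
  eq_sub_of_add_eq (Finset.sum_sdiff h)

lemma signedCard_eq (J S : Finset E) : signedCard J S = S.card - 2 * (S ∩ J).card := by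
  rw [← Finset.filter_mem_eq_inter, Finset.card_eq_sum_ones, Finset.card_filter, Nat.cast_sum,
    Nat.cast_sum, Finset.mul_sum, ← Finset.sum_sub_distrib]
  exact Finset.sum_congr rfl fun e _ => by split_ifs <;> simp

/-- Every cycle has nonnegative weight when the edges of `J` count negatively; equivalently `J` is
a minimum join for its boundary. -/
def IsConservative (ends : E → Sym2 N) (J : Finset E) : Prop :=
  ∀ S, edgeBoundary ends S = 0 → 0 ≤ signedCard J S

/-- `D` is a path from `a` to `t` that minimises first the weight and then the number of edges
among all paths of the multigraph, whatever their ends. -/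
structure IsMinPath (ends : E → Sym2 N) (J D : Finset E) (a t : N) : Prop where
  boundary_eq : edgeBoundary ends D = endpointSum s(a, t)
  le_of_boundary_eq : ∀ S p q, edgeBoundary ends S = endpointSum s(p, q) →
    signedCard J D < signedCard J S ∨ signedCard J D = signedCard J S ∧ D.card ≤ S.card

namespace IsMinPath

variable {D : Finset E} {a t : N}

lemma exists_of_nonempty [Finite E] (hJ : IsConservative ends J) (hne : J.Nonempty) :
    ∃ D a t, a ≠ t ∧ IsMinPath ends J D a t := by
  classical
  have := Fintype.ofFinite E
  obtain ⟨e, he⟩ := hne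
  obtain ⟨p, q, hpq⟩ := Sym2.exists.1 ⟨ends e, rfl⟩
  have hJe : edgeBoundary ends {e} = endpointSum s(p, q) := by rw [edgeBoundary_singleton, hpq]
  obtain ⟨D, hD, hmin⟩ := (Finset.univ.filter fun S : Finset E =>
      ∃ p q, edgeBoundary ends S = endpointSum s(p, q)).exists_min_image
    (fun S => toLex (signedCard J S, S.card))
    ⟨{e}, Finset.mem_filter.2 ⟨Finset.mem_univ _, p, q, hJe⟩⟩
  simp only [Finset.mem_filter, Finset.mem_univ, true_and, forall_exists_index,
    Prod.Lex.toLex_le_toLex] at hD hmin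
  obtain ⟨a, t, hat⟩ := hD
  refine ⟨D, a, t, ?_, hat, hmin⟩
  rintro rfl
  have hD0 := hJ D (by rw [hat, endpointSum_diag])
  have hDe := hmin {e} p q hJe
  simp only [signedCard, Finset.sum_singleton, if_pos he] at hDe hD0
  omega

lemma signedCard_le (hD : IsMinPath ends J D a t) {S : Finset E} {p q : N}
    (hS : edgeBoundary ends S = endpointSum s(p, q)) : signedCard J D ≤ signedCard J S :=
  (hD.le_of_boundary_eq S p q hS).elim le_of_lt fun h => h.1.le

/-- Otherwise deleting `X` would give a better path. -/
lemma signedCard_neg_of_subset (hD : IsMinPath ends J D a t) {X : Finset E} (hXD : X ⊆ D)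
    (hX : X.Nonempty) {p q : N}
    (h : edgeBoundary ends (D \ X) = endpointSum s(p, q)) : signedCard J X < 0 := by
  have hmin := hD.le_of_boundary_eq _ p q h
  have hcard := Finset.card_sdiff_add_card_eq_card hXD
  have hpos := hX.card_pos
  rw [signedCard_sdiff hXD] at hmin
  omega

lemma isEdgeForest (hD : IsMinPath ends J D a t) (hJ : IsConservative ends J) :
    IsEdgeForest ends D := by
  intro X hXD hX
  by_contra hne
  have hneg := hD.signedCard_neg_of_subset hXD (Finset.nonempty_iff_ne_empty.2 hne) (p := a)
    (q := t) (by rw [edgeBoundary_sdiff hXD, hD.boundary_eq, hX, add_zero])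
  exact hneg.not_ge (hJ X hX)

lemma mem_iff_of_ends_eq (hD : IsMinPath ends J D a t) {e : E} {u : N} (he : ends e = s(t, u)) :
    e ∈ D ↔ e ∈ J := by
  refine ⟨fun heD => ?_, fun heJ => ?_⟩ <;> by_contra hne
  · have h := hD.signedCard_le (S := D.erase e) (p := a) (q := u) <| by
      rw [edgeBoundary_erase heD, hD.boundary_eq, he, endpointSum_add_endpointSum]
    rw [signedCard_erase heD, if_neg hne] at h
    omega
  · have h := hD.signedCard_le (S := insert e D) (p := a) (q := u) <| by
      rw [edgeBoundary_insert hne, hD.boundary_eq, he, add_comm, endpointSum_add_endpointSum]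
    rw [signedCard_insert hne, if_pos heJ] at h
    omega

lemma exists_mem_ends_eq (hD : IsMinPath ends J D a t) (hat : a ≠ t) :
    ∃ e ∈ J, ∃ u ≠ t, ends e = s(t, u) := by
  obtain ⟨e, he, u, hut, heu⟩ := exists_mem_of_edgeBoundary_apply_ne_zero (ends := ends) (S := D)
    (p := t) (by rw [hD.boundary_eq]; exact (endpointSum_apply_ne_zero hat).2 (.inr rfl))
  exact ⟨e, (hD.mem_iff_of_ends_eq heu).1 he, u, hut, heu⟩

lemma eq_of_mem_of_mem_ends (hD : IsMinPath ends J D a t) (hJ : IsConservative ends J) {e f : E}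
    (he : e ∈ J) (hf : f ∈ J) (hte : t ∈ ends e) (htf : t ∈ ends f) : f = e := by
  obtain ⟨u, hu⟩ := Sym2.mem_iff_exists.1 hte
  obtain ⟨v, hv⟩ := Sym2.mem_iff_exists.1 htf
  have heD := (hD.mem_iff_of_ends_eq hu).2 he
  have hfD := (hD.mem_iff_of_ends_eq hv).2 hf
  have hforest := hD.isEdgeForest hJ
  by_contra hfe
  obtain ⟨Z, hZ, hZb⟩ :=
    (hforest.mono (D.erase_subset e)).exists_subset_edgeBoundary_eq (u := u) (u' := a) (by
      rw [edgeBoundary_erase heD, hD.boundary_eq, hu, endpointSum_add_endpointSum, Sym2.eq_swap])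
      (Finset.mem_erase.2 ⟨hfe, hfD⟩) htf
  have heZ : e ∉ Z := fun h => Finset.notMem_erase e D (hZ h)
  refine Finset.insert_ne_empty e Z
    (hforest _ (Finset.insert_subset heD (hZ.trans (D.erase_subset e))) ?_)
  rw [edgeBoundary_insert heZ, hu, hZb, endpointSum_add_endpointSum, endpointSum_diag]

variable {C : Finset E} {e e' : E} {u u' : N}

/-- `Z` is the part of `D` between `t` and a vertex `q` of `C`. -/
lemma exists_subset_sdiff_of_not_disjoint (hD : IsMinPath ends J D a t)
    (hJ : IsConservative ends J) (hat : a ≠ t) (hCt : ∀ f ∈ C, t ∉ ends f)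
    (hDC : ¬Disjoint D C) : ∃ q, ∃ f ∈ C, q ∈ ends f ∧
      ∃ Z ⊆ D \ C, edgeBoundary ends Z = endpointSum s(t, q) ∧ signedCard J Z < 0 := by
  have hsplit (y : N) : edgeBoundary ends (D \ C) y =
      endpointSum s(a, t) y + edgeBoundary ends (D ∩ C) y := by
    rw [← Finset.sdiff_inter_self_left, edgeBoundary_sdiff Finset.inter_subset_left,
      hD.boundary_eq, Finsupp.add_apply]
  have hDCt : edgeBoundary ends (D ∩ C) t = 0 := by
    by_contra hne
    obtain ⟨f, hf, x, -, hfx⟩ := exists_mem_of_edgeBoundary_apply_ne_zero hne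
    exact hCt f (Finset.mem_inter.1 hf).2 (hfx ▸ Sym2.mem_mk_left t x)
  obtain ⟨q, hqt, hq, Z, hZ, hZb⟩ := exists_subset_edgeBoundary_eq (ends := ends) (S := D \ C)
    (p := t) (by rw [hsplit, hDCt, add_zero]; exact (endpointSum_apply_ne_zero hat).2 (.inr rfl))
  have hZD : Z ⊆ D := hZ.trans Finset.sdiff_subset
  have hDZ : edgeBoundary ends (D \ Z) = endpointSum s(a, q) := by
    rw [edgeBoundary_sdiff hZD, hD.boundary_eq, hZb, endpointSum_add_endpointSum]
  have hqa : q ≠ a := by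
    rintro rfl
    have hempty := hD.isEdgeForest hJ _ (Finset.sdiff_subset (t := Z)) (by
      rw [hDZ, endpointSum_diag])
    exact hDC (Finset.disjoint_of_subset_left
      ((Finset.sdiff_eq_empty_iff_subset.1 hempty).trans hZ) Finset.sdiff_disjoint)
  obtain ⟨f, hf, x, -, hfx⟩ := exists_mem_of_edgeBoundary_apply_ne_zero (ends := ends)
    (S := D ∩ C) (p := q) (by
      rwa [hsplit, endpointSum_apply_eq_zero hqa hqt, zero_add] at hq)
  refine ⟨q, f, (Finset.mem_inter.1 hf).2, hfx ▸ Sym2.mem_mk_left q x, Z, hZ, hZb,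
    hD.signedCard_neg_of_subset hZD (Finset.nonempty_iff_ne_empty.2 ?_) hDZ⟩
  rintro rfl
  exact endpointSum_ne_zero hqt.symm (hZb.symm.trans edgeBoundary_empty)

/-- At a common vertex `q` of `D` and `C`, the part of `D` from `t` to `q` is negative, and closing
it up with one of the two arcs `t - u - q` and `t - u' - q` of the circuit `C + e + e'`, which has
weight at most `0`, would give a negative cycle. -/
lemma disjoint_of_signedCard_le (hD : IsMinPath ends J D a t) (hJ : IsConservative ends J)
    (hat : a ≠ t) (hC : IsEdgeForest ends C) (hCu : edgeBoundary ends C = endpointSum s(u, u'))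
    (hCt : ∀ f ∈ C, t ∉ ends f) (he : ends e = s(t, u)) (he' : ends e' = s(t, u'))
    (heJ : e ∉ J) (heJ' : e' ∉ J) (hw : signedCard J C ≤ -2) : Disjoint D C := by
  by_contra hDC
  obtain ⟨q, f, hf, hqf, Z, hZ, hZb, hZneg⟩ :=
    hD.exists_subset_sdiff_of_not_disjoint hJ hat hCt hDC
  obtain ⟨Y, hYC, hY⟩ := hC.exists_subset_edgeBoundary_eq hCu hf hqf
  have harc {g : E} {v : N} {W : Finset E} (hg : ends g = s(t, v)) (hgJ : g ∉ J) (hWC : W ⊆ C)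
      (hW : edgeBoundary ends W = endpointSum s(v, q)) :
      0 ≤ 1 + signedCard J W + signedCard J Z := by
    have hgD := mt (hD.mem_iff_of_ends_eq hg).1 hgJ
    have hdisj : Disjoint (insert g W) Z := Finset.disjoint_insert_left.2
      ⟨fun h => hgD (Finset.mem_sdiff.1 (hZ h)).1,
        Finset.disjoint_of_subset_left hWC (Finset.disjoint_of_subset_right hZ
          Finset.disjoint_sdiff)⟩
    have hgW : g ∉ W := fun h => hCt g (hWC h) (hg ▸ Sym2.mem_mk_left t v)
    have hcycle := hJ (insert g W ∪ Z) <| by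
      rw [edgeBoundary_union hdisj, edgeBoundary_insert hgW, hg, hW,
        endpointSum_add_endpointSum, hZb, ZModModule.add_self]
    rwa [signedCard_union hdisj, signedCard_insert hgW, if_neg hgJ] at hcycle
  have hu := harc he heJ hYC hY
  have hu' := harc he' heJ' Finset.sdiff_subset <| by
    rw [edgeBoundary_sdiff hYC, hCu, hY, Sym2.eq_swap (a := u), endpointSum_add_endpointSum]
  rw [signedCard_sdiff hYC] at hu'
  omega

/-- Two edges at `t` closing up `C` give an even cycle, so a negative `C` would have weight `-2`,
avoid `D` and yield the better path `D + C + e'` from `a` to `u`. -/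
lemma signedCard_nonneg_of_boundary_eq [Finite E] {A : Set N} (hA : IsEdgeBipartition ends A)
    (hD : IsMinPath ends J D a t) (hJ : IsConservative ends J) (hat : a ≠ t)
    (hC : IsEdgeForest ends C) (hCu : edgeBoundary ends C = endpointSum s(u, u'))
    (hCt : ∀ f ∈ C, t ∉ ends f) (hut : u ≠ t) (hut' : u' ≠ t) (huu' : u ≠ u')
    (he : ends e = s(t, u)) (he' : ends e' = s(t, u')) : 0 ≤ signedCard J C := by
  have heC : e ∉ C := fun h => hCt e h (he ▸ Sym2.mem_mk_left t u)
  have heC' : e' ∉ C := fun h => hCt e' h (he' ▸ Sym2.mem_mk_left t u')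
  have hee' : e ∉ insert e' C := by
    rw [Finset.mem_insert, not_or]
    refine ⟨?_, heC⟩
    rintro rfl
    exact huu' (Sym2.congr_right.1 (he.symm.trans he'))
  have hcycle : edgeBoundary ends (insert e (insert e' C)) = 0 := by
    rw [edgeBoundary_insert hee', edgeBoundary_insert heC', hCu, he, he', add_left_comm,
      endpointSum_add_endpointSum, ZModModule.add_self]
  have heven : Even C.card := by
    have h := hA.even_card hcycle <| by
      simp only [Finset.forall_mem_insert, he, he', Sym2.mk_isDiag_iff]
      exact ⟨hut.symm, hut'.symm, fun f hf => hC.not_isDiag hf⟩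
    rw [Finset.card_insert_of_notMem hee', Finset.card_insert_of_notMem heC'] at h
    simpa [add_assoc, Nat.even_add] using h
  by_contra! hneg
  have hnonneg := hJ _ hcycle
  rw [signedCard_insert hee', signedCard_insert heC'] at hnonneg
  have hparity := signedCard_eq J C
  obtain ⟨k, hk⟩ := heven
  obtain ⟨heJ, heJ', hw⟩ : e ∉ J ∧ e' ∉ J ∧ signedCard J C = -2 := by grind
  have hDC := hD.disjoint_of_signedCard_le hJ hat hC hCu hCt he he' heJ heJ' hw.le
  have heDC' : e' ∉ D ∪ C := by simp [heC', mt (hD.mem_iff_of_ends_eq he').1 heJ']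
  have hbetter := hD.signedCard_le (S := insert e' (D ∪ C)) (p := a) (q := u) <| by
    rw [edgeBoundary_insert heDC', edgeBoundary_union hDC, hD.boundary_eq, hCu, he', add_left_comm,
      Sym2.eq_swap (a := u), endpointSum_add_endpointSum, endpointSum_add_endpointSum]
  rw [signedCard_insert heDC', if_neg heJ', signedCard_union hDC] at hbetter
  omega

/-- Take for `X` a cycle in `S`, or else a path between two neighbours of `t`. -/
lemma exists_subset_signedCard_nonneg [Finite E] {A : Set N} (hA : IsEdgeBipartition ends A)
    (hD : IsMinPath ends J D a t) (hJ : IsConservative ends J) (hat : a ≠ t) {S : Finset E}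
    (hne : S.Nonempty) (hSt : ∀ f ∈ S, t ∉ ends f)
    (hS : ∀ q, edgeBoundary ends S q ≠ 0 → ∃ e, ends e = s(t, q)) :
    ∃ X ⊆ S, X.Nonempty ∧ 0 ≤ signedCard J X ∧
      ∀ q, edgeBoundary ends X q ≠ 0 → ∃ e, ends e = s(t, q) := by
  by_cases hforest : IsEdgeForest ends S
  · obtain ⟨u, hu⟩ : ∃ u, edgeBoundary ends S u ≠ 0 := by
      by_contra! h
      exact hne.ne_empty (hforest S subset_rfl (Finsupp.ext h))
    obtain ⟨u', huu', hu', Z, hZS, hZ⟩ := exists_subset_edgeBoundary_eq hu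
    have hyt {y : N} (hy : edgeBoundary ends S y ≠ 0) : y ≠ t := by
      rintro rfl
      obtain ⟨f, hf, x, -, hfx⟩ := exists_mem_of_edgeBoundary_apply_ne_zero hy
      exact hSt f hf (hfx ▸ Sym2.mem_mk_left y x)
    obtain ⟨e, he⟩ := hS u hu
    obtain ⟨e', he'⟩ := hS u' hu'
    refine ⟨Z, hZS, Finset.nonempty_iff_ne_empty.2 ?_,
      hD.signedCard_nonneg_of_boundary_eq hA hJ hat (hforest.mono hZS) hZ
        (fun f hf => hSt f (hZS hf)) (hyt hu) (hyt hu') huu'.symm he he', fun q hq => ?_⟩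
    · rintro rfl
      exact endpointSum_ne_zero huu'.symm (hZ.symm.trans edgeBoundary_empty)
    · rw [hZ, endpointSum_apply_ne_zero huu'.symm] at hq
      obtain rfl | rfl := hq
      exacts [⟨e, he⟩, ⟨e', he'⟩]
  · simp only [IsEdgeForest, not_forall] at hforest
    obtain ⟨X, hXS, hX, hXne⟩ := hforest
    exact ⟨X, hXS, Finset.nonempty_iff_ne_empty.2 hXne, hJ X hX, fun q hq => by simp [hX] at hq⟩

lemma signedCard_nonneg_of_boundary_adjacent [Finite E] {A : Set N}
    (hA : IsEdgeBipartition ends A) (hD : IsMinPath ends J D a t) (hJ : IsConservative ends J)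
    (hat : a ≠ t) {S : Finset E} (hSt : ∀ f ∈ S, t ∉ ends f)
    (hS : ∀ q, edgeBoundary ends S q ≠ 0 → ∃ e, ends e = s(t, q)) : 0 ≤ signedCard J S := by
  induction S using Finset.strongInduction with | H S ih
  obtain rfl | hne := S.eq_empty_or_nonempty
  · rw [signedCard_empty]
  obtain ⟨X, hXS, hX, hXw, hXb⟩ := hD.exists_subset_signedCard_nonneg hA hJ hat hne hSt hS
  have hrest := ih (S \ X) (Finset.sdiff_ssubset hXS hX)
    (fun f hf => hSt f (Finset.mem_sdiff.1 hf).1) fun q hq => by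
      rw [edgeBoundary_sdiff hXS, Finsupp.add_apply] at hq
      by_cases hqS : edgeBoundary ends S q = 0
      · exact hXb q (by rwa [hqS, zero_add] at hq)
      · exact hS q hqS
  rw [signedCard_sdiff hXS] at hrest
  omega

end IsMinPath

end Weight

section Contraction

/-- The map contracting `t` and its neighbours to the single vertex `t`. -/
noncomputable def contractStar (ends : E → Sym2 N) (t p : N) : N :=
  open scoped Classical in if ∃ e, ends e = s(t, p) then t else p

variable {t : N}

lemma contractStar_self (ends : E → Sym2 N) (t : N) : contractStar ends t t = t := ite_self _

lemma contractStar_of_adj {e : E} {p : N} (he : ends e = s(t, p)) : contractStar ends t p = t :=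
  if_pos ⟨e, he⟩

lemma contractStar_of_not_adj {p : N} (hp : ¬∃ e, ends e = s(t, p)) : contractStar ends t p = p :=
  if_neg hp

lemma edgeBoundary_map_apply {M : Type*} {c : N → M} {m : M} {q : N} (hc : ∀ x, c x = m ↔ x = q)
    (S : Finset E) : edgeBoundary (Sym2.map c ∘ ends) S m = edgeBoundary ends S q := by
  classical
  have hmap (s : Sym2 N) : endpointSum (s.map c) m = endpointSum s q := by
    induction s with | _ x y
    simp [endpointSum_mk, Finsupp.single_apply, hc]
  simp only [edgeBoundary, Finsupp.finsetSum_apply, Function.comp_apply, hmap]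

lemma edgeCut_map [Fintype E] {M : Type*} (c : N → M) (X : Set M) :
    edgeCut (Sym2.map c ∘ ends) X = edgeCut ends (c ⁻¹' X) := by
  ext e
  obtain ⟨p, q, hpq⟩ := Sym2.exists.1 ⟨ends e, rfl⟩
  rw [mem_edgeCut hpq, mem_edgeCut (p := c p) (q := c q) (by simp [hpq])]
  rfl

lemma isDiag_map_contractStar {e : E} (he : t ∈ ends e) :
    (Sym2.map (contractStar ends t) (ends e)).IsDiag := by
  obtain ⟨p, hp⟩ := Sym2.mem_iff_exists.1 he
  simp [hp, contractStar_self, contractStar_of_adj hp]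

lemma mem_of_mem_edgeCut_singleton [Fintype E] {e : E} (he : e ∈ edgeCut ends {t}) :
    t ∈ ends e := by
  obtain ⟨p, q, hpq⟩ := Sym2.exists.1 ⟨ends e, rfl⟩
  have := (mem_edgeCut hpq).1 he
  simp only [Set.mem_singleton_iff] at this
  rw [hpq, Sym2.mem_iff]
  tauto

lemma notMem_of_mem_edgeCut_preimage_contractStar [Fintype E] {X : Set N} {e : E}
    (he : e ∈ edgeCut ends (contractStar ends t ⁻¹' X)) : t ∉ ends e := by
  intro ht
  obtain ⟨p, hp⟩ := Sym2.mem_iff_exists.1 ht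
  have := (mem_edgeCut hp).1 he
  simp only [Set.mem_preimage, contractStar_self, contractStar_of_adj hp] at this
  tauto

lemma disjoint_edgeCut_singleton [Fintype E] (X : Set N) :
    Disjoint (edgeCut ends {t}) (edgeCut ends (contractStar ends t ⁻¹' X)) :=
  Finset.disjoint_left.2 fun _ he he' =>
    notMem_of_mem_edgeCut_preimage_contractStar he' (mem_of_mem_edgeCut_singleton he)

lemma IsMinPath.exists_inter_edgeCut_singleton_eq [Fintype E] [DecidableEq E] {J D : Finset E}
    {a : N} (hD : IsMinPath ends J D a t) (hJ : IsConservative ends J) (hat : a ≠ t) :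
    ∃ e, J ∩ edgeCut ends {t} = {e} := by
  obtain ⟨e, he, u, hut, hu⟩ := hD.exists_mem_ends_eq hat
  refine ⟨e, Finset.eq_singleton_iff_unique_mem.2 ⟨Finset.mem_inter.2 ⟨he, ?_⟩, fun f hf => ?_⟩⟩
  · simpa [mem_edgeCut hu] using hut
  · exact hD.eq_of_mem_of_mem_ends hJ he (Finset.mem_inter.1 hf).1 (hu ▸ Sym2.mem_mk_left t u)
      (mem_of_mem_edgeCut_singleton (Finset.mem_inter.1 hf).2)

lemma IsEdgeBipartition.map_contractStar {A : Set N} (hA : IsEdgeBipartition ends A) (t : N) :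
    IsEdgeBipartition (Sym2.map (contractStar ends t) ∘ ends) (symmDiff A {t}) := by
  have hmem {x : N} (hx : x ≠ t) : contractStar ends t x ∈ symmDiff A {t} ↔ x ∈ A := by
    by_cases hadj : ∃ e, ends e = s(t, x)
    · obtain ⟨e, he⟩ := hadj
      have := hA he hx.symm
      simp only [contractStar_of_adj he, Set.mem_symmDiff, Set.mem_singleton_iff]
      tauto
    · simp [contractStar_of_not_adj hadj, Set.mem_symmDiff, hx]
  intro e p' q' he hne
  obtain ⟨p, q, hpq⟩ := Sym2.exists.1 ⟨ends e, rfl⟩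
  have hdiag : ¬(Sym2.map (contractStar ends t) (ends e)).IsDiag := by
    rwa [← Function.comp_apply (f := Sym2.map _), he, Sym2.mk_isDiag_iff]
  have ht : t ∉ ends e := mt isDiag_map_contractStar hdiag
  have hmap : s(contractStar ends t p, contractStar ends t q) = s(p', q') := by
    rw [← he, Function.comp_apply, hpq, Sym2.map_mk]
  rw [hpq, Sym2.mem_iff, not_or] at ht
  have hpqA := hA hpq fun h => hdiag (by simp [hpq, h])
  obtain ⟨rfl, rfl⟩ | ⟨rfl, rfl⟩ := Sym2.eq_iff.1 hmap <;>
    rw [hmem (Ne.symm ht.1), hmem (Ne.symm ht.2)] <;> tauto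

lemma IsMinPath.isConservative_map_contractStar [Finite E] [DecidableEq E] {J D : Finset E} {a : N}
    {A : Set N} (hA : IsEdgeBipartition ends A) (hJ : IsConservative ends J)
    (hD : IsMinPath ends J D a t) (hat : a ≠ t) {e₀ : E} (he₀ : e₀ ∈ J) (ht : t ∈ ends e₀) :
    IsConservative (Sym2.map (contractStar ends t) ∘ ends) (J.erase e₀) := by
  classical
  intro S hS
  have hrest : edgeBoundary (Sym2.map (contractStar ends t) ∘ ends) (S.filter (t ∉ ends ·)) = 0 :=
    (Finset.sum_filter_of_ne fun e _ => mt fun hte =>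
      endpointSum_of_isDiag (isDiag_map_contractStar hte)).trans hS
  have hnonneg : 0 ≤ signedCard J (S.filter (t ∉ ends ·)) := by
    refine hD.signedCard_nonneg_of_boundary_adjacent hA hJ hat
      (fun f hf => (Finset.mem_filter.1 hf).2) fun q hq => ?_
    by_contra hadj
    have hqt : q ≠ t := by
      rintro rfl
      obtain ⟨f, hf, x, -, hfx⟩ := exists_mem_of_edgeBoundary_apply_ne_zero hq
      exact (Finset.mem_filter.1 hf).2 (hfx ▸ Sym2.mem_mk_left q x)
    refine hq ?_
    rw [← edgeBoundary_map_apply (c := contractStar ends t) (m := q) fun x => ?_, hrest,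
      Finsupp.zero_apply]
    by_cases hx : ∃ e, ends e = s(t, x)
    · rw [contractStar, if_pos hx]
      exact ⟨fun h => absurd h.symm hqt, fun h => absurd (h ▸ hx) hadj⟩
    · rw [contractStar_of_not_adj hx]
  refine hnonneg.trans ?_
  rw [signedCard, signedCard, Finset.sum_filter]
  refine Finset.sum_le_sum fun e _ => ?_
  have hunique := hD.eq_of_mem_of_mem_ends hJ (e := e₀) (f := e) he₀
  split_ifs <;> grind

/-- Contracting the star of an end `t` of a minimal path removes exactly one edge of `J`, whose cut
is the star of `t`; cuts of the contracted multigraph pull back to cuts avoiding that star. -/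
theorem exists_disjoint_edgeCuts [Fintype E] [DecidableEq E] {J : Finset E} {A : Set N}
    (hA : IsEdgeBipartition ends A) (hJ : IsConservative ends J) : ∃ X : E → Set N,
      (∀ e ∈ J, J ∩ edgeCut ends (X e) = {e}) ∧
      (J : Set E).PairwiseDisjoint fun e => edgeCut ends (X e) := by
  induction hcard : J.card generalizing J ends A with
  | zero => exact ⟨fun _ => ∅, by simp [Finset.card_eq_zero.1 hcard]⟩
  | succ k ih =>
    obtain ⟨D, a, t, hat, hD⟩ := IsMinPath.exists_of_nonempty hJ (Finset.card_pos.1 (by omega))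
    obtain ⟨e₀, hcut₀⟩ := hD.exists_inter_edgeCut_singleton_eq hJ hat
    obtain ⟨he₀, hcut₀'⟩ := Finset.mem_inter.1 (hcut₀.ge (Finset.mem_singleton_self e₀))
    have ht₀ := mem_of_mem_edgeCut_singleton hcut₀'
    obtain ⟨X, hX, hdisj⟩ := ih (hA.map_contractStar t)
      (hD.isConservative_map_contractStar hA hJ hat he₀ ht₀)
      (by rw [Finset.card_erase_of_mem he₀, hcard, Nat.add_sub_cancel])
    simp only [edgeCut_map] at hX hdisj
    refine ⟨fun e => if e = e₀ then {t} else contractStar ends t ⁻¹' X e, fun e he => ?_, ?_⟩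
    · obtain rfl | hne := eq_or_ne e e₀
      · simpa only [reduceIte] using hcut₀
      · simp only [if_neg hne]
        rw [← hX e (Finset.mem_erase.2 ⟨hne, he⟩), Finset.erase_inter]
        refine (Finset.erase_eq_of_notMem fun h => ?_).symm
        exact notMem_of_mem_edgeCut_preimage_contractStar (Finset.mem_inter.1 h).2 ht₀
    · intro e he f hf hef
      have hXef (hne : e ≠ e₀) (hnf : f ≠ e₀) := hdisj (Finset.mem_erase.2 ⟨hne, he⟩)
        (Finset.mem_erase.2 ⟨hnf, hf⟩) hef
      simp only [Function.onFun]
      split_ifs with hne hnf hnf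
      · exact absurd (hne.trans hnf.symm) hef
      · exact disjoint_edgeCut_singleton _
      · exact (disjoint_edgeCut_singleton _).symm
      · exact hXef hne hnf

end Contraction

theorem IsConservative.three_mul_card_le [Fintype E] [DecidableEq E] {J : Finset E} {A : Set N}
    (hJ : IsConservative ends J) (hA : IsEdgeBipartition ends A)
    (hcut : ∀ X, Odd (J ∩ edgeCut ends X).card → 3 ≤ (edgeCut ends X).card) :
    3 * J.card ≤ Fintype.card E := by
  obtain ⟨X, hX, hdisj⟩ := exists_disjoint_edgeCuts hA hJ
  calc 3 * J.card = ∑ _e ∈ J, 3 := by rw [Finset.sum_const, smul_eq_mul, mul_comm]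
    _ ≤ ∑ e ∈ J, (edgeCut ends (X e)).card :=
      Finset.sum_le_sum fun e he => hcut _ (by rw [hX e he, Finset.card_singleton]; exact odd_one)
    _ = (J.biUnion fun e => edgeCut ends (X e)).card := (Finset.card_biUnion hdisj).symm
    _ ≤ Fintype.card E := Finset.card_le_univ _

section Subdivision

/-- The multigraph obtained by inserting a new vertex `Sum.inl e` in the middle of every edge `e`;
the two halves of `e` are `(e, false)` and `(e, true)`. -/
noncomputable def edgeSubdivision (ends : E → Sym2 N) (e : E × Bool) : Sym2 (E ⊕ N) :=
  s(.inl e.1, .inr (cond e.2 (Quot.out (ends e.1)).1 (Quot.out (ends e.1)).2))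

lemma exists_edgeSubdivision_eq (ends : E → Sym2 N) (e : E) : ∃ p q, ends e = s(p, q) ∧
    edgeSubdivision ends (e, true) = s(.inl e, .inr p) ∧
    edgeSubdivision ends (e, false) = s(.inl e, .inr q) :=
  ⟨_, _, (Quot.out_eq (ends e)).symm, rfl, rfl⟩

lemma isEdgeBipartition_edgeSubdivision (ends : E → Sym2 N) :
    IsEdgeBipartition (edgeSubdivision ends) (Set.range Sum.inl) := by
  intro e p q he _
  obtain ⟨rfl, rfl⟩ | ⟨rfl, rfl⟩ := Sym2.eq_iff.1 he <;> simp

lemma edgeBoundary_edgeSubdivision (S : Finset E) :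
    edgeBoundary (edgeSubdivision ends) (S ×ˢ Finset.univ) =
      (edgeBoundary ends S).mapDomain Sum.inr := by
  rw [edgeBoundary, Finset.sum_product, edgeBoundary, Finsupp.mapDomain_finsetSum]
  refine Finset.sum_congr rfl fun e _ => ?_
  obtain ⟨p, q, hpq, hp, hq⟩ := exists_edgeSubdivision_eq ends e
  rw [Fintype.sum_bool, hp, hq, hpq, Sym2.eq_swap (a := Sum.inl e), endpointSum_add_endpointSum]
  simp [endpointSum_mk, Finsupp.mapDomain_add]

lemma edgeBoundary_edgeSubdivision_eq_zero {S : Finset E} :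
    edgeBoundary (edgeSubdivision ends) (S ×ˢ Finset.univ) = 0 ↔ edgeBoundary ends S = 0 := by
  rw [edgeBoundary_edgeSubdivision, ← Finsupp.mapDomain_zero (f := Sum.inr),
    (Finsupp.mapDomain_injective Sum.inr_injective).eq_iff]

lemma exists_eq_product_of_edgeBoundary_eq_zero [Finite E] {S : Finset (E × Bool)}
    (hS : edgeBoundary (edgeSubdivision ends) S = 0) : ∃ T : Finset E, S = T ×ˢ Finset.univ := by
  classical
  have := Fintype.ofFinite E
  refine ⟨S.image Prod.fst, Finset.ext fun ⟨e, i⟩ => ?_⟩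
  simp only [Finset.mem_product, Finset.mem_image, Prod.exists, Finset.mem_univ, and_true]
  refine ⟨fun h => ⟨e, i, h, rfl⟩, ?_⟩
  rintro ⟨e, j, hj, rfl⟩
  by_contra hi
  have hsingle : S ∩ edgeCut (edgeSubdivision ends) {.inl e} = {(e, j)} := by
    ext ⟨f, k⟩
    rw [Finset.mem_inter, mem_edgeCut (ends := edgeSubdivision ends) (p := .inl f) rfl]
    simp only [Set.mem_singleton_iff, Sum.inl.injEq, reduceCtorEq, not_false_eq_true, iff_true,
      Finset.mem_singleton, Prod.mk.injEq]
    cases i <;> cases j <;> cases k <;> grind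
  have := even_card_inter_edgeCut hS {.inl e}
  simp [hsingle] at this

lemma IsConservative.edgeSubdivision [Finite E] [DecidableEq E] {J : Finset E}
    (hJ : IsConservative ends J) :
    IsConservative (edgeSubdivision ends) (J ×ˢ Finset.univ) := by
  intro S hS
  obtain ⟨T, rfl⟩ := exists_eq_product_of_edgeBoundary_eq_zero hS
  have hT := hJ T (edgeBoundary_edgeSubdivision_eq_zero.1 hS)
  have hdouble : signedCard (J ×ˢ Finset.univ) (T ×ˢ (Finset.univ : Finset Bool)) =
      2 * signedCard J T := by
    simp only [signedCard, Finset.sum_product, Finset.mem_product, Finset.mem_univ, and_true,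
      Fintype.sum_bool, Finset.mul_sum, two_mul]
  omega

variable [Fintype E]

lemma mem_edgeCut_preimage_inr {X : Set (E ⊕ N)} {e : E} :
    e ∈ edgeCut ends (Sum.inr ⁻¹' X) ↔ ((e, true) ∈ edgeCut (edgeSubdivision ends) X ↔
      (e, false) ∉ edgeCut (edgeSubdivision ends) X) := by
  obtain ⟨p, q, hpq, hp, hq⟩ := exists_edgeSubdivision_eq ends e
  rw [mem_edgeCut hpq, mem_edgeCut hp, mem_edgeCut hq, Set.mem_preimage, Set.mem_preimage]
  tauto

lemma card_edgeCut_edgeSubdivision_ne_one (hbridge : ∀ X, (edgeCut ends X).card ≠ 1)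
    (X : Set (E ⊕ N)) : (edgeCut (edgeSubdivision ends) X).card ≠ 1 := by
  intro hcard
  obtain ⟨⟨e, i⟩, he⟩ := Finset.card_eq_one.1 hcard
  refine hbridge (Sum.inr ⁻¹' X) (Finset.card_eq_one.2 ⟨e, ?_⟩)
  ext f
  rw [mem_edgeCut_preimage_inr, he]
  cases i <;> simp

end Subdivision

section ParityJoin

variable [Fintype E] [DecidableEq E]

lemma exists_isConservative_edgeBoundary_compl (ends : E → Sym2 N) :
    ∃ J : Finset E, edgeBoundary ends Jᶜ = 0 ∧ IsConservative ends J := by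
  classical
  obtain ⟨J, hJ, hmin⟩ := (Finset.univ.filter fun J : Finset E =>
    edgeBoundary ends Jᶜ = 0).exists_min_image Finset.card ⟨Finset.univ, by simp⟩
  simp only [Finset.mem_filter, Finset.mem_univ, true_and] at hJ hmin
  refine ⟨J, hJ, fun S hS => ?_⟩
  have hexchange : (J \ S ∪ S \ J)ᶜ = Jᶜ \ (S \ J) ∪ S ∩ J := by grind [Finset.mem_compl]
  have hcard := hmin (J \ S ∪ S \ J) <| by
    rw [hexchange, edgeBoundary_union (by grind [Finset.disjoint_left, Finset.mem_compl]),
      edgeBoundary_sdiff (by grind [Finset.mem_compl]), hJ, zero_add, ← edgeBoundary_union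
      (Finset.disjoint_sdiff_inter S J), Finset.sdiff_union_inter, hS]
  rw [Finset.card_union_of_disjoint disjoint_sdiff_sdiff] at hcard
  have h1 := Finset.card_sdiff_add_card_inter S J
  have h2 := Finset.card_sdiff_add_card_inter J S
  rw [Finset.inter_comm] at h2
  have := signedCard_eq J S
  omega

lemma three_le_card_edgeCut {J : Finset E} (hJ : edgeBoundary ends Jᶜ = 0)
    (hbridge : ∀ X, (edgeCut ends X).card ≠ 1) {X : Set N} (hX : Odd (J ∩ edgeCut ends X).card) :
    3 ≤ (edgeCut ends X).card := by
  have heven := even_card_inter_edgeCut hJ X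
  have hne := hbridge X
  have hsplit := Finset.card_sdiff_add_card_inter (edgeCut ends X) J
  rw [Finset.sdiff_eq_inter_compl, Finset.inter_comm, Finset.inter_comm _ J] at hsplit
  grind

theorem exists_parityJoin_three_mul_card_le (hbridge : ∀ X, (edgeCut ends X).card ≠ 1) :
    ∃ J : Finset E, edgeBoundary ends Jᶜ = 0 ∧ 3 * J.card ≤ Fintype.card E := by
  obtain ⟨J, hJ, hcons⟩ := exists_isConservative_edgeBoundary_compl ends
  have hcompl : (J ×ˢ (Finset.univ : Finset Bool))ᶜ = Jᶜ ×ˢ Finset.univ := by ext; simp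
  have hle := hcons.edgeSubdivision.three_mul_card_le (isEdgeBipartition_edgeSubdivision ends)
    fun X => three_le_card_edgeCut
      (by rwa [hcompl, edgeBoundary_edgeSubdivision_eq_zero])
      (card_edgeCut_edgeSubdivision_ne_one hbridge)
  rw [Finset.card_product, Fintype.card_prod, Finset.card_univ, Fintype.card_bool] at hle
  exact ⟨J, hJ, by omega⟩

end ParityJoin

end EdgeSpace

section Bridgeless

variable {E N : Type*} {ends : E → Sym2 N}

/-- The edges `u` and `w` have a common end; every edge meets itself. -/
def Meets (ends : E → Sym2 N) (u w : E) : Prop := ∃ q, q ∈ ends u ∧ q ∈ ends w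

/-- The set `A` is connected with respect to the relation `R`: whenever a set `P` splits it into two
nonempty parts, some related pair crosses over. The empty set is connected. -/
def ConnectedOn {V : Type*} (R : V → V → Prop) (A : Set V) : Prop :=
  ∀ P : Set V, (A ∩ P).Nonempty → (A \ P).Nonempty → ∃ u ∈ A ∩ P, ∃ w ∈ A \ P, R u w

lemma mem_edgeCut_of_mem_ends [Fintype E] {X : Set N} {e : E} {p q : N} (hp : p ∈ ends e)
    (hq : q ∈ ends e) (hpX : p ∈ X) (hqX : q ∉ X) : e ∈ edgeCut ends X := by
  have he : ends e = s(p, q) := (Sym2.mem_and_mem_iff (by rintro rfl; exact hqX hpX)).1 ⟨hp, hq⟩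
  exact (mem_edgeCut he).2 (by simp [hpX, hqX])

lemma card_edgeCut_ne_one [Fintype E] (hends : ∀ v, ∀ q ∈ ends v, ∃ y ≠ v, q ∈ ends y)
    (hconn : ∀ v, ConnectedOn (Meets ends) {v}ᶜ) (X : Set N) : (edgeCut ends X).card ≠ 1 := by
  intro hcard
  obtain ⟨v, hv⟩ := Finset.card_eq_one.1 hcard
  have hcut {e p q} (hp : p ∈ ends e) (hq : q ∈ ends e) (hpX : p ∈ X) (hqX : q ∉ X) : e = v := by
    simpa [hv] using mem_edgeCut_of_mem_ends hp hq hpX hqX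
  obtain ⟨p, hpX, q, hqX, hvpq⟩ : ∃ p ∈ X, ∃ q ∉ X, ends v = s(p, q) := by
    simpa [edgeCut] using hv.ge (Finset.mem_singleton_self v)
  obtain ⟨y, hyv, hy⟩ := hends v p (hvpq ▸ Sym2.mem_mk_left p q)
  obtain ⟨z, hzv, hz⟩ := hends v q (hvpq ▸ Sym2.mem_mk_right p q)
  obtain ⟨u, ⟨-, hu⟩, w, ⟨hwv, hw⟩, r, hru, hrw⟩ := hconn v {e | ∀ r ∈ ends e, r ∈ X}
    ⟨y, hyv, fun r hr => by_contra fun hrX => hyv (hcut hy hr hpX hrX)⟩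
    ⟨z, hzv, fun hzX => hqX (hzX q hz)⟩
  exact hw fun r' hr' => by_contra fun hrX' => hwv (hcut hrw hr' (hu r hru) hrX')

end Bridgeless

section EulerTour

variable {E N : Type*} {ends : E → Sym2 N}

/-- `L` is the list of edges of a walk from the first to the last vertex. -/
inductive IsEdgeWalk (ends : E → Sym2 N) : N → List E → N → Prop
  | nil (p : N) : IsEdgeWalk ends p [] p
  | cons {p q r : N} {e : E} {L : List E} (he : ends e = s(p, q)) (hL : IsEdgeWalk ends q L r) :
      IsEdgeWalk ends p (e :: L) r

namespace IsEdgeWalk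

lemma append {p q r : N} {L M : List E} (hL : IsEdgeWalk ends p L q) (hM : IsEdgeWalk ends q M r) :
    IsEdgeWalk ends p (L ++ M) r := by
  induction hL with
  | nil => exact hM
  | cons he _ ih => exact cons he (ih hM)

lemma exists_of_append {p r : N} {L M : List E} (h : IsEdgeWalk ends p (L ++ M) r) :
    ∃ q, IsEdgeWalk ends p L q ∧ IsEdgeWalk ends q M r := by
  induction L generalizing p with
  | nil => exact ⟨p, nil p, h⟩
  | cons e L ih =>
    obtain ⟨⟩ | ⟨he, h⟩ := h
    obtain ⟨q, hL, hM⟩ := ih h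
    exact ⟨q, cons he hL, hM⟩

lemma edgeBoundary_toFinset [DecidableEq E] {p q : N} {L : List E} (h : IsEdgeWalk ends p L q)
    (hL : L.Nodup) : edgeBoundary ends L.toFinset = endpointSum s(p, q) := by
  induction h with
  | nil => simp
  | cons he _ ih =>
    rw [List.nodup_cons] at hL
    rw [List.toFinset_cons, edgeBoundary_insert (by simpa using hL.1), he, ih hL.2,
      endpointSum_add_endpointSum]

lemma isChain_meets {q r : N} {e f : E} {L : List E} (h : IsEdgeWalk ends q L r)
    (he : q ∈ ends e) (hf : r ∈ ends f) : (e :: (L ++ [f])).IsChain (Meets ends) := by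
  induction h generalizing e with
  | nil q => exact List.isChain_pair.2 ⟨q, he, hf⟩
  | @cons q _ _ g _ hg _ ih =>
    exact List.isChain_cons_cons.2
      ⟨⟨q, he, hg ▸ Sym2.mem_mk_left _ _⟩, ih (hg ▸ Sym2.mem_mk_right _ _) hf⟩

lemma chain_meets {p : N} {L : List E} (h : IsEdgeWalk ends p L p) :
    (L : Cycle E).Chain (Meets ends) := by
  obtain ⟨⟩ | ⟨he, hL⟩ := h
  · exact Cycle.Chain.nil _
  · exact Cycle.chain_coe_cons _ _ _ |>.2 <|
      hL.isChain_meets (he ▸ Sym2.mem_mk_right _ _) (he ▸ Sym2.mem_mk_left _ _)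

lemma exists_perm_of_mem_ends {p q : N} {e : E} {L : List E} (h : IsEdgeWalk ends p L p)
    (he : e ∈ L) (hq : q ∈ ends e) : ∃ L', L'.Perm L ∧ IsEdgeWalk ends q L' q := by
  obtain ⟨A, B, rfl⟩ := List.append_of_mem he
  obtain ⟨x, hA, hB⟩ := h.exists_of_append
  obtain ⟨⟩ | @⟨_, y, _, _, _, hxy, hB⟩ := hB
  obtain rfl | rfl := Sym2.mem_iff.1 (hxy ▸ hq)
  · exact ⟨e :: B ++ A, List.perm_append_comm, (cons hxy hB).append hA⟩
  · refine ⟨B ++ (A ++ [e]), ?_, hB.append (hA.append (cons hxy (nil q)))⟩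
    simpa using List.perm_append_comm (l₁ := B) (l₂ := A ++ [e])

end IsEdgeWalk

lemma exists_longest_isEdgeWalk [Finite E] [Nonempty N] (ends : E → Sym2 N) :
    ∃ p L q, IsEdgeWalk ends p L q ∧ L.Nodup ∧
      ∀ p' L' q', IsEdgeWalk ends p' L' q' → L'.Nodup → L'.length ≤ L.length := by
  classical
  have := Fintype.ofFinite E
  let p₀ := Classical.arbitrary N
  let HasTrail (n : ℕ) : Prop := ∃ p L q, IsEdgeWalk ends p L q ∧ L.Nodup ∧ L.length = n
  have hbound (n : ℕ) (hn : HasTrail n) : n ≤ Fintype.card E := by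
    obtain ⟨p, L, q, -, hL, rfl⟩ := hn
    exact hL.length_le_card
  obtain ⟨p, L, q, h, hL, hlen⟩ := Nat.findGreatest_spec (P := HasTrail) (Nat.zero_le _)
    ⟨p₀, [], p₀, .nil p₀, List.nodup_nil, rfl⟩
  refine ⟨p, L, q, h, hL, fun p' L' q' h' hL' => hlen ▸ ?_⟩
  exact Nat.le_findGreatest (hbound _ ⟨p', L', q', h', hL', rfl⟩) ⟨p', L', q', h', hL', rfl⟩

lemma exists_eulerTour [Fintype E] (hbd : edgeBoundary ends Finset.univ = 0)
    (hconn : ConnectedOn (Meets ends) Set.univ) :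
    ∃ L : List E, (L : Cycle E).Chain (Meets ends) ∧ L.Nodup ∧ ∀ e, e ∈ L := by
  classical
  obtain hE | ⟨⟨e₀⟩⟩ := isEmpty_or_nonempty E
  · exact ⟨[], Cycle.Chain.nil _, List.nodup_nil, hE.elim⟩
  obtain ⟨p₀, q₀, he₀⟩ := Sym2.exists.1 ⟨ends e₀, rfl⟩
  have : Nonempty N := ⟨p₀⟩
  obtain ⟨p, L, q, h, hL, hmax⟩ := exists_longest_isEdgeWalk ends
  have hext {p' q' L' e} (h' : IsEdgeWalk ends p' L' q') (hL' : L'.Perm L) (he : p' ∈ ends e) :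
      e ∈ L := by
    by_contra heL
    obtain ⟨r, hr⟩ := Sym2.mem_iff_exists.1 he
    have := hmax r (e :: L') q' (.cons (hr.trans Sym2.eq_swap) h')
      (List.nodup_cons.2 ⟨by rwa [hL'.mem_iff], hL'.nodup_iff.2 hL⟩)
    simp [hL'.length_eq] at this
  obtain rfl : p = q := by
    by_contra hpq
    have hcompl : edgeBoundary ends (Finset.univ \ L.toFinset) = endpointSum s(p, q) := by
      rw [edgeBoundary_sdiff (Finset.subset_univ _), hbd, zero_add, h.edgeBoundary_toFinset hL]
    obtain ⟨e, he, x, -, hex⟩ := exists_mem_of_edgeBoundary_apply_ne_zero (p := p) <|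
      hcompl ▸ (endpointSum_apply_ne_zero hpq).2 (.inl rfl)
    simp [hext h (.refl L) (hex ▸ Sym2.mem_mk_left p x)] at he
  refine ⟨L, h.chain_meets, hL, fun e => by_contra fun he => ?_⟩
  have hne : L ≠ [] := by
    rintro rfl
    simpa using hmax p₀ [e₀] q₀ (.cons he₀ (.nil q₀)) (List.nodup_singleton e₀)
  obtain ⟨u, ⟨-, hu⟩, w, ⟨-, hw⟩, r, hru, hrw⟩ := hconn {e | e ∈ L}
    (by simpa [Set.Nonempty] using List.exists_mem_of_ne_nil L hne) ⟨e, trivial, he⟩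
  obtain ⟨L', hL', h'⟩ := h.exists_perm_of_mem_ends hu hru
  exact hw (hext h' hL' hrw)

end EulerTour

section DoubledEdges

variable {V W N : Type*} {R : V → V → Prop} {A : Set V}

lemma ConnectedOn.mono {R' : V → V → Prop} (hA : ConnectedOn R A) (h : R ≤ R') :
    ConnectedOn R' A :=
  fun P hP hP' =>
    let ⟨u, hu, w, hw, huw⟩ := hA P hP hP'
    ⟨u, hu, w, hw, h u w huw⟩

lemma ConnectedOn.image {R' : W → W → Prop} (hA : ConnectedOn R A) (f : V → W)
    (hf : ∀ u ∈ A, ∀ w ∈ A, R u w → R' (f u) (f w)) : ConnectedOn R' (f '' A) := by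
  rintro P ⟨_, ⟨u, hu, rfl⟩, huP⟩ ⟨_, ⟨w, hw, rfl⟩, hwP⟩
  obtain ⟨u', ⟨hu', huP'⟩, w', ⟨hw', hwP'⟩, h⟩ := hA (f ⁻¹' P) ⟨u, hu, huP⟩ ⟨w, hw, hwP⟩
  exact ⟨f u', ⟨⟨u', hu', rfl⟩, huP'⟩, f w', ⟨⟨w', hw', rfl⟩, hwP'⟩, hf u' hu' w' hw' h⟩

lemma ConnectedOn.univ_of_forall_exists [Std.Symm R] (hA : ConnectedOn R A)
    (h : ∀ x ∉ A, ∃ y ∈ A, R x y) : ConnectedOn R Set.univ := by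
  rintro P ⟨x, -, hx⟩ ⟨z, -, hz⟩
  by_cases hAP : (A ∩ P).Nonempty
  · by_cases hAP' : (A \ P).Nonempty
    · obtain ⟨u, hu, w, hw, huw⟩ := hA P hAP hAP'
      exact ⟨u, ⟨trivial, hu.2⟩, w, ⟨trivial, hw.2⟩, huw⟩
    · obtain ⟨y, hy, hzy⟩ := h z fun hzA => hAP' ⟨z, hzA, hz⟩
      exact ⟨y, ⟨trivial, by_contra fun hyP => hAP' ⟨y, hy, hyP⟩⟩, z, ⟨trivial, hz⟩,
        Std.Symm.symm _ _ hzy⟩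
  · obtain ⟨y, hy, hxy⟩ := h x fun hxA => hAP ⟨x, hxA, hx⟩
    exact ⟨x, ⟨trivial, hx⟩, y, ⟨trivial, fun hyP => hAP ⟨y, hy, hyP⟩⟩, hxy⟩

variable {ends : V → Sym2 N} {J : Finset V} {j : V} {p : N}

section Doubling

variable [DecidableEq V]

/-- The multigraph with a parallel copy of every edge in `J` other than `j`, in which moreover the
edge `j` has become a loop at `p`. For a parity join `J ∋ j` all degrees become even, at the price
of one edge less than when `j` is doubled as well. -/
def doubledEnds (ends : V → Sym2 N) (J : Finset V) (j : V) (p : N) : V ⊕ J.erase j → Sym2 N :=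
  Sum.elim (Function.update ends j s(p, p)) fun i => ends i

lemma edgeBoundary_doubledEnds [Fintype V] (hJ : edgeBoundary ends Jᶜ = 0) (hj : j ∈ J) :
    edgeBoundary (doubledEnds ends J j p) Finset.univ = 0 := by
  have hupdate (v : V) : endpointSum (Function.update ends j s(p, p) v) =
      Function.update (fun v => endpointSum (ends v)) j 0 v := by
    obtain rfl | hv := eq_or_ne v j
    · simp
    · simp [hv]
  have hsplit : edgeBoundary (doubledEnds ends J j p) Finset.univ =
      edgeBoundary ends (Finset.univ.erase j) + edgeBoundary ends (J.erase j) := by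
    simp only [edgeBoundary, doubledEnds, Fintype.sum_sum_type, Sum.elim_inl, Sum.elim_inr, hupdate,
      Finset.sum_update_of_mem (Finset.mem_univ j), zero_add, Finset.sdiff_singleton_eq_erase]
    congr 1
    exact Finset.sum_coe_sort (J.erase j) fun v => endpointSum (ends v)
  rw [hsplit, edgeBoundary_erase (Finset.mem_univ j), edgeBoundary_erase hj,
    add_comm (edgeBoundary ends J), ZModModule.add_add_add_cancel,
    ← edgeBoundary_sdiff (Finset.subset_univ J), ← Finset.compl_eq_univ_sdiff, hJ]

lemma meets_of_meets_doubledEnds (hp : p ∈ ends j) {u w : V ⊕ J.erase j}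
    (h : Meets (doubledEnds ends J j p) u w) :
    Meets ends (Sum.elim id (↑) u) (Sum.elim id (↑) w) := by
  have hmem {q : N} (x : V ⊕ J.erase j) (hq : q ∈ doubledEnds ends J j p x) :
      q ∈ ends (Sum.elim id (↑) x) := by
    obtain v | i := x
    · obtain rfl | hv := eq_or_ne v j
      · obtain rfl : q = p := by simpa [doubledEnds] using hq
        exact hp
      · simpa [doubledEnds, hv] using hq
    · exact hq
  obtain ⟨q, hu, hw⟩ := h
  exact ⟨q, hmem u hu, hmem w hw⟩

instance : Std.Symm (Meets ends) := ⟨fun _ _ ⟨q, hu, hw⟩ => ⟨q, hw, hu⟩⟩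

lemma connectedOn_doubledEnds (hends : ∃ y ≠ j, p ∈ ends y)
    (hconn : ConnectedOn (Meets ends) {j}ᶜ) :
    ConnectedOn (Meets (doubledEnds ends J j p)) Set.univ := by
  have hmem {v : V} (hv : v ≠ j) : doubledEnds ends J j p (.inl v) = ends v := by
    simp [doubledEnds, hv]
  refine (hconn.image Sum.inl fun u hu w hw ⟨q, hqu, hqw⟩ =>
    ⟨q, (hmem hu).symm ▸ hqu, (hmem hw).symm ▸ hqw⟩).univ_of_forall_exists ?_
  rintro (v | i) hv
  · obtain rfl : v = j := by simpa using hv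
    obtain ⟨y, hy, hpy⟩ := hends
    exact ⟨.inl y, ⟨y, hy, rfl⟩, p, by simp [doubledEnds], (hmem hy).symm ▸ hpy⟩
  · have hi : i.1 ≠ j := Finset.ne_of_mem_erase i.2
    obtain ⟨q, r, hqr⟩ := Sym2.exists.1 ⟨ends i, rfl⟩
    have hq : q ∈ ends i := hqr ▸ Sym2.mem_mk_left q r
    exact ⟨.inl i, ⟨i, hi, rfl⟩, q, hq, (hmem hi).symm ▸ hq⟩

end Doubling

theorem exists_short_closed_cover_meets [Fintype V] (hcard : 2 ≤ Fintype.card V)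
    (hends : ∀ v, ∀ q ∈ ends v, ∃ y ≠ v, q ∈ ends y) (hconn : ConnectedOn (Meets ends) Set.univ)
    (hconn' : ∀ v, ConnectedOn (Meets ends) {v}ᶜ) :
    ∃ L : List V, (L : Cycle V).Chain (Meets ends) ∧ (∀ v, v ∈ L) ∧
      3 * L.length + 2 ≤ 4 * Fintype.card V := by
  classical
  obtain ⟨J, hJ, hJcard⟩ := exists_parityJoin_three_mul_card_le (card_edgeCut_ne_one hends hconn')
  obtain rfl | ⟨j, hj⟩ := J.eq_empty_or_nonempty
  · obtain ⟨L, hL, hnodup, hmem⟩ := exists_eulerTour (by simpa using hJ) hconn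
    have hlen : L.length ≤ Fintype.card V := hnodup.length_le_card
    exact ⟨L, hL, hmem, by omega⟩
  · obtain ⟨p, q, hpq⟩ := Sym2.exists.1 ⟨ends j, rfl⟩
    have hp : p ∈ ends j := hpq ▸ Sym2.mem_mk_left p q
    obtain ⟨L, hL, hnodup, hmem⟩ := exists_eulerTour (edgeBoundary_doubledEnds (p := p) hJ hj)
      (connectedOn_doubledEnds (hends j p hp) (hconn' j))
    refine ⟨L.map (Sum.elim id (↑)), ?_, fun v => List.mem_map.2 ⟨.inl v, hmem _, rfl⟩, ?_⟩
    · rw [← Cycle.map_coe, Cycle.chain_map]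
      exact hL.imp fun _ _ => meets_of_meets_doubledEnds hp
    · have hlen := hnodup.length_le_card
      rw [Fintype.card_sum, Fintype.card_coe, Finset.card_erase_of_mem hj] at hlen
      have := Finset.card_pos.2 ⟨j, hj⟩
      rw [List.length_map]
      omega

end DoubledEdges

section LineGraph

variable {V : Type*} {R : V → V → Prop}

/-- `R`, thought of as adjacency or equality in a graph, has no induced claw. -/
def IsClawFree (R : V → V → Prop) : Prop :=
  ∀ ⦃x a b c⦄, R x a → R x b → R x c → R a b ∨ R a c ∨ R b c

/-- `R`, thought of as adjacency or equality in a graph, has no induced diamond. -/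
def IsDiamondFree (R : V → V → Prop) : Prop :=
  ∀ ⦃x a b c⦄, R x a → R x b → R x c → R a b → R b c → b ≠ x → R a c

/-- In a diamond-free graph this is the unique maximal clique through the edge `vu`. -/
def edgeClique (R : V → V → Prop) (v u : V) : Set V := {w | R v w ∧ R u w}

lemma edgeClique_comm (v u : V) : edgeClique R v u = edgeClique R u v :=
  Set.ext fun _ => and_comm

variable [Std.Symm R]

lemma IsDiamondFree.edgeClique_eq (hR : IsDiamondFree R) {v u w : V} (hu : R v u) (hw : R v w)
    (huw : R u w) (huv : u ≠ v) (hwv : w ≠ v) : edgeClique R v u = edgeClique R v w :=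
  Set.ext fun _ => and_congr_right fun hz =>
    ⟨fun h => hR hw hu hz (symm_of R huw) h huv, fun h => hR hu hw hz huw h hwv⟩

/-- The maximal cliques through a vertex of a claw-free diamond-free graph are at most two. -/
lemma IsDiamondFree.exists_sym2_edgeClique (hdf : IsDiamondFree R) (hcf : IsClawFree R) {v : V}
    (hv : ∃ u ≠ v, R v u) :
    ∃ s : Sym2 (Set V), ∀ q, q ∈ s ↔ ∃ u ≠ v, R v u ∧ q = edgeClique R v u := by
  obtain ⟨u, huv, hu⟩ := hv
  by_cases! hw : ∃ w, R v w ∧ ¬R u w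
  · obtain ⟨w, hw, huw⟩ := hw
    have hwv : w ≠ v := by
      rintro rfl
      exact huw (symm_of R hu)
    refine ⟨s(edgeClique R v u, edgeClique R v w), fun q => Sym2.mem_iff.trans ⟨?_, ?_⟩⟩
    · rintro (rfl | rfl)
      exacts [⟨u, huv, hu, rfl⟩, ⟨w, hwv, hw, rfl⟩]
    · rintro ⟨y, hyv, hy, rfl⟩
      obtain h | h | h := hcf hu hw hy
      · exact (huw h).elim
      · exact .inl (hdf.edgeClique_eq hy hu (symm_of R h) hyv huv)
      · exact .inr (hdf.edgeClique_eq hy hw (symm_of R h) hyv hwv)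
  · refine ⟨s(edgeClique R v u, edgeClique R v u), fun q => Sym2.mem_iff.trans ⟨?_, ?_⟩⟩
    · rintro (rfl | rfl) <;> exact ⟨u, huv, hu, rfl⟩
    · rintro ⟨y, hyv, hy, rfl⟩
      exact .inl (hdf.edgeClique_eq hy hu (symm_of R (hw y hy)) hyv huv)

/-- A claw-free diamond-free graph is a line graph: its vertices are the edges of a multigraph whose
vertices are its maximal cliques. -/
theorem IsDiamondFree.exists_ends [Std.Refl R] (hdf : IsDiamondFree R) (hcf : IsClawFree R)
    (hR : ∀ v, ∃ u ≠ v, R v u) :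
    ∃ ends : V → Sym2 (Set V), (∀ u w, R u w ↔ Meets ends u w) ∧
      ∀ v, ∀ q ∈ ends v, ∃ y ≠ v, q ∈ ends y := by
  choose ends hends using fun v => hdf.exists_sym2_edgeClique hcf (hR v)
  refine ⟨ends, fun u w => ⟨fun huw => ?_, ?_⟩, fun v q hq => ?_⟩
  · obtain rfl | hne := eq_or_ne u w
    · obtain ⟨y, hy, huy⟩ := hR u
      exact ⟨_, (hends u _).2 ⟨y, hy, huy, rfl⟩, (hends u _).2 ⟨y, hy, huy, rfl⟩⟩
    · exact ⟨_, (hends u _).2 ⟨w, hne.symm, huw, rfl⟩,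
        (hends w _).2 ⟨u, hne, symm_of R huw, edgeClique_comm u w⟩⟩
  · rintro ⟨q, hu, hw⟩
    obtain ⟨a, -, ha, rfl⟩ := (hends u q).1 hu
    obtain ⟨b, -, -, hab⟩ := (hends w _).1 hw
    have hmem : u ∈ edgeClique R u a := ⟨refl_of R u, symm_of R ha⟩
    rw [hab] at hmem
    exact symm_of R hmem.1
  · obtain ⟨u, huv, hu, rfl⟩ := (hends v q).1 hq
    exact ⟨u, huv, (hends u _).2 ⟨v, huv.symm, symm_of R hu, edgeClique_comm v u⟩⟩

theorem IsDiamondFree.exists_short_closed_cover [Fintype V] [Std.Refl R] (hdf : IsDiamondFree R)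
    (hcf : IsClawFree R) (hcard : 2 ≤ Fintype.card V) (hconn : ConnectedOn R Set.univ)
    (hconn' : ∀ v, ConnectedOn R {v}ᶜ) :
    ∃ L : List V, (L : Cycle V).Chain R ∧ (∀ v, v ∈ L) ∧
      3 * L.length + 2 ≤ 4 * Fintype.card V := by
  have hR (v : V) : ∃ u ≠ v, R v u := by
    have := Fintype.one_lt_card_iff_nontrivial.1 hcard
    obtain ⟨w, hwv⟩ := exists_ne v
    obtain ⟨_, ⟨-, rfl⟩, u, ⟨-, huv⟩, h⟩ := hconn {v} ⟨v, by simp⟩ ⟨w, by simpa using hwv⟩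
    exact ⟨u, huv, h⟩
  obtain ⟨ends, hmeets, hends⟩ := hdf.exists_ends hcf hR
  obtain rfl : R = Meets ends := funext₂ fun u w => propext (hmeets u w)
  exact exists_short_closed_cover_meets hcard hends hconn hconn'

end LineGraph

section Segments

variable {V : Type*} {R : V → V → Prop} {K : Set V} {A B S T : List V}

/-- The first and the last entry of a list. -/
def listEnds (S : List V) : Set V := {y | y ∈ S.head? ∨ y ∈ S.getLast?}

lemma listEnds_reverse (S : List V) : listEnds S.reverse = listEnds S := by
  ext
  simp [listEnds, or_comm]

lemma listEnds_append_subset (hA : listEnds A ⊆ K) (hB : listEnds B ⊆ K) :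
    listEnds (A ++ B) ⊆ K := by
  rintro y (hy | hy)
  · rw [List.head?_append, Option.mem_def, Option.or_eq_some_iff] at hy
    exact hy.elim (fun h => hA (.inl h)) fun h => hB (.inl h.2)
  · rw [List.getLast?_append, Option.mem_def, Option.or_eq_some_iff] at hy
    exact hy.elim (fun h => hB (.inr h)) fun h => hA (.inr h.2)

lemma listEnds_subset_of_append_left (h : listEnds (A ++ B) ⊆ K) (hlast : ∀ y ∈ A.getLast?, y ∈ K) :
    listEnds A ⊆ K := by
  rintro y (hy | hy)
  · exact h (.inl (List.mem_head?_append_of_mem_head? hy))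
  · exact hlast y hy

lemma listEnds_subset_of_append_right (h : listEnds (A ++ B) ⊆ K) (hhead : ∀ y ∈ B.head?, y ∈ K) :
    listEnds B ⊆ K := by
  rintro y (hy | hy)
  · exact hhead y hy
  · exact h (.inr (List.mem_getLast?_append_of_mem_getLast? hy))

/-- `S` is a nonempty `R`-path with both ends in `K`. Moreover it can be cut at every entry `y ∈ K`
into two possibly empty paths with ends in `K`, one of them having `y` at the cut. -/
structure IsSegment (R : V → V → Prop) (K : Set V) (S : List V) : Prop where
  ne_nil : S ≠ []
  isChain : S.IsChain R
  listEnds_subset : listEnds S ⊆ K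
  exists_split : ∀ y ∈ S, y ∈ K → ∃ A B, S = A ++ B ∧ listEnds A ⊆ K ∧ listEnds B ⊆ K ∧
    (y ∈ A.getLast? ∨ y ∈ B.head?)

namespace IsSegment

lemma exists_mem_listEnds (hS : IsSegment R K S) : ∃ t ∈ S, t ∈ listEnds S :=
  ⟨S.head hS.ne_nil, List.head_mem _, .inl (List.head?_eq_some_head _)⟩

lemma singleton {k : V} (hk : k ∈ K) : IsSegment R K [k] where
  ne_nil := List.cons_ne_nil _ _
  isChain := List.isChain_singleton k
  listEnds_subset := by simpa [listEnds] using hk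
  exists_split y hy _ := ⟨[], [k], rfl, by simp [listEnds], by simpa [listEnds] using hk, by
    simpa [eq_comm] using hy⟩

lemma reverse [Std.Symm R] (hS : IsSegment R K S) : IsSegment R K S.reverse where
  ne_nil := by simpa using hS.ne_nil
  isChain := List.isChain_reverse.2 (hS.isChain.imp fun _ _ => symm_of R)
  listEnds_subset := listEnds_reverse S ▸ hS.listEnds_subset
  exists_split y hy hyK := by
    obtain ⟨A, B, rfl, hA, hB, h⟩ := hS.exists_split y (List.mem_reverse.1 hy) hyK
    refine ⟨B.reverse, A.reverse, List.reverse_append, ?_, ?_, ?_⟩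
    · rwa [listEnds_reverse]
    · rwa [listEnds_reverse]
    · simpa using h.symm

lemma append (hS : IsSegment R K S) (hT : IsSegment R K T)
    (h : ∀ u ∈ S.getLast?, ∀ v ∈ T.head?, R u v) : IsSegment R K (S ++ T) where
  ne_nil := List.append_ne_nil_of_left_ne_nil hS.ne_nil T
  isChain := List.isChain_append.2 ⟨hS.isChain, hT.isChain, h⟩
  listEnds_subset := listEnds_append_subset hS.listEnds_subset hT.listEnds_subset
  exists_split y hy hyK := by
    obtain hy | hy := List.mem_append.1 hy
    · obtain ⟨A, B, rfl, hA, hB, h⟩ := hS.exists_split y hy hyK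
      exact ⟨A, B ++ T, List.append_assoc A B T, hA, listEnds_append_subset hB hT.listEnds_subset,
        h.imp_right List.mem_head?_append_of_mem_head?⟩
    · obtain ⟨A, B, rfl, hA, hB, h⟩ := hT.exists_split y hy hyK
      exact ⟨S ++ A, B, (List.append_assoc S A B).symm,
        listEnds_append_subset hS.listEnds_subset hA, hB,
        h.imp_left List.mem_getLast?_append_of_mem_getLast?⟩

lemma exists_perm_getLast [Std.Symm R] (hS : IsSegment R K S) {u : V} (hu : u ∈ listEnds S) :
    ∃ S', S'.Perm S ∧ IsSegment R K S' ∧ u ∈ S'.getLast? := by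
  obtain hu | hu := hu
  · exact ⟨S.reverse, S.reverse_perm, hS.reverse, by simpa using hu⟩
  · exact ⟨S, .refl S, hS, hu⟩

lemma exists_perm_append [Std.Symm R] (hS : IsSegment R K S) (hT : IsSegment R K T) {u v : V}
    (hu : u ∈ listEnds S) (hv : v ∈ listEnds T) (huv : R u v) :
    ∃ U, U.Perm (S ++ T) ∧ IsSegment R K U := by
  obtain ⟨S', hSS', hS', hu⟩ := hS.exists_perm_getLast hu
  obtain ⟨T', hTT', hT', hv⟩ := hT.exists_perm_getLast hv
  refine ⟨S' ++ T'.reverse, hSS'.append (T'.reverse_perm.trans hTT'), hS'.append hT'.reverse ?_⟩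
  intro u' hu' v' hv'
  rw [List.head?_reverse] at hv'
  rwa [← Option.mem_unique hu hu', ← Option.mem_unique hv hv']

/-- A closed segment can be reopened at any of its entries in `K`. -/
lemma exists_perm_getLast_of_closed [Std.Symm R] (hS : IsSegment R K S)
    (hclosed : ∀ u ∈ S.getLast?, ∀ v ∈ S.head?, R u v) {y : V} (hy : y ∈ S) (hyK : y ∈ K) :
    ∃ S', S'.Perm S ∧ S'.IsChain R ∧ listEnds S' ⊆ K ∧ y ∈ S'.getLast? := by
  obtain ⟨A, B, rfl, hA, hB, h⟩ := hS.exists_split y hy hyK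
  have hchain : (B ++ A).IsChain R := by
    obtain ⟨hAR, hBR, -⟩ := List.isChain_append.1 hS.isChain
    exact List.isChain_append.2 ⟨hBR, hAR, fun u hu v hv => hclosed u
      (List.mem_getLast?_append_of_mem_getLast? hu) v (List.mem_head?_append_of_mem_head? hv)⟩
  have hends : listEnds (B ++ A) ⊆ K := listEnds_append_subset hB hA
  obtain h | h := h
  · exact ⟨B ++ A, List.perm_append_comm, hchain, hends,
      List.mem_getLast?_append_of_mem_getLast? h⟩
  · refine ⟨(B ++ A).reverse, (List.reverse_perm _).trans List.perm_append_comm,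
      List.isChain_reverse.2 (hchain.imp fun _ _ => symm_of R),
      listEnds_reverse (B ++ A) ▸ hends, ?_⟩
    rw [List.getLast?_reverse]
    exact List.mem_head?_append_of_mem_head? h

end IsSegment

/-- Two lists none of whose ends are related. -/
def EndsUnrelated (R : V → V → Prop) (S T : List V) : Prop :=
  ∀ u ∈ listEnds S, ∀ v ∈ listEnds T, ¬R u v

lemma exists_pairwise_endsUnrelated [Std.Symm R] {F : List (List V)}
    (hF : ∀ S ∈ F, IsSegment R K S) : ∃ F' : List (List V), (∀ S ∈ F', IsSegment R K S) ∧
      F'.flatten.Perm F.flatten ∧ F'.Pairwise (EndsUnrelated R) := by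
  induction hn : F.length using Nat.strong_induction_on generalizing F with | _ n ih
  by_cases hpw : F.Pairwise (EndsUnrelated R)
  · exact ⟨F, hF, .refl _, hpw⟩
  rw [List.pairwise_iff_forall_sublist] at hpw
  push Not at hpw
  obtain ⟨S, T, hsub, hST⟩ := hpw
  obtain ⟨G, hG⟩ := hsub.exists_perm_append
  simp only [EndsUnrelated, not_forall, not_not] at hST
  obtain ⟨u, hu, v, hv, huv⟩ := hST
  obtain ⟨U, hUperm, hU⟩ := (hF S (hG.mem_iff.2 (by simp))).exists_perm_append
    (hF T (hG.mem_iff.2 (by simp))) hu hv huv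
  obtain ⟨F', hF', hperm, hpw⟩ := ih (U :: G).length (by simp [← hn, hG.length_eq])
    (List.forall_mem_cons.2 ⟨hU, fun W hW => hF W (hG.mem_iff.2 (by simp [hW]))⟩) rfl
  refine ⟨F', hF', hperm.trans (.trans ?_ hG.flatten.symm), hpw⟩
  simpa using hUperm.append_right G.flatten

end Segments

section LocalCompletion

open scoped List

variable {V : Type*} {R : V → V → Prop} {x : V} {M S T : List V}

/-- The relation `R` together with all pairs inside the neighbourhood of `x`: Ryjáček's local
completion at `x`. -/
def localCompletion (R : V → V → Prop) (x u v : V) : Prop := R u v ∨ R x u ∧ R x v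

instance [Std.Refl R] : Std.Refl (localCompletion R x) := ⟨fun u => .inl (refl_of R u)⟩

instance [Std.Symm R] : Std.Symm (localCompletion R x) :=
  ⟨fun _ _ => Or.imp (symm_of R) And.symm⟩

lemma le_localCompletion (R : V → V → Prop) (x : V) : R ≤ localCompletion R x :=
  fun _ _ => .inl

lemma isSegment_of_isChain_localCompletion (hne : M ≠ [])
    (hM : M.IsChain (localCompletion R x)) (hends : listEnds M ⊆ {y | R x y})
    (hcut : ∀ A u v B, M = A ++ u :: v :: B → R x u → ¬R x v)
    (hsplice : ∀ A u k v B, M = A ++ u :: k :: v :: B → ¬R x k) :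
    IsSegment R {y | R x y} M where
  ne_nil := hne
  isChain := List.isChain_iff_forall_rel_of_append_cons_cons.2 fun u v A B h =>
    (List.isChain_iff_forall_rel_of_append_cons_cons.1 hM h).resolve_right
      fun huv => hcut A u v B h huv.1 huv.2
  listEnds_subset := hends
  exists_split y hy hxy := by
    obtain ⟨A, B, rfl⟩ := List.append_of_mem hy
    obtain rfl | ⟨A, u, rfl⟩ := A.eq_nil_or_concat
    · exact ⟨[], y :: B, rfl, by simp [listEnds], hends, .inr rfl⟩
    · rw [List.concat_eq_append] at *
      obtain _ | ⟨v, B⟩ := B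
      · exact ⟨A ++ [u] ++ [y], [], by simp, hends, by simp [listEnds], .inl (by simp)⟩
      · exact (hsplice A u y v B (by simp) hxy).elim

lemma IsClawFree.length_le_two_of_pairwise (hcf : IsClawFree R) {F : List (List V)}
    (hF : ∀ S ∈ F, IsSegment R {y | R x y} S) (hpw : F.Pairwise (EndsUnrelated R)) :
    F.length ≤ 2 := by
  by_contra! hlen
  obtain ⟨S, T, U, F, rfl⟩ : ∃ S T U F', F = S :: T :: U :: F' := by
    match F with
    | S :: T :: U :: F' => exact ⟨S, T, U, F', rfl⟩
  have hS : IsSegment R {y | R x y} S := hF S (by simp)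
  have hT : IsSegment R {y | R x y} T := hF T (by simp)
  have hU : IsSegment R {y | R x y} U := hF U (by simp)
  simp only [List.pairwise_cons, List.forall_mem_cons] at hpw
  obtain ⟨⟨hST, hSU, -⟩, ⟨hTU, -⟩, -⟩ := hpw
  obtain ⟨s, -, hs⟩ := hS.exists_mem_listEnds
  obtain ⟨t, -, ht⟩ := hT.exists_mem_listEnds
  obtain ⟨u, -, hu⟩ := hU.exists_mem_listEnds
  obtain h | h | h := hcf (hS.listEnds_subset hs) (hT.listEnds_subset ht) (hU.listEnds_subset hu)
  exacts [hST s hs t ht h, hSU s hs u hu h, hTU t ht u hu h]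

lemma IsClawFree.closed_of_endsUnrelated (hcf : IsClawFree R) (hS : IsSegment R {y | R x y} S)
    (hT : IsSegment R {y | R x y} T) (hST : EndsUnrelated R S T) :
    ∀ u ∈ S.getLast?, ∀ v ∈ S.head?, R u v := by
  intro u hu v hv
  obtain ⟨t, -, ht⟩ := hT.exists_mem_listEnds
  obtain h | h | h := hcf (hS.listEnds_subset (.inr hu)) (hS.listEnds_subset (.inl hv))
    (hT.listEnds_subset ht)
  exacts [h, (hST u (.inr hu) t ht h).elim, (hST v (.inl hv) t ht h).elim]

/-- The diamond `x, a, b, c` ties two segments together. -/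
lemma IsClawFree.exists_rel_of_diamond (hcf : IsClawFree R) {a b c : V} (ha : R x a) (hb : R x b)
    (hc : R x c) (hab : R a b) (hbc : R b c) (hac : ¬R a c) (haS : a ∈ S) (hbST : b ∈ S ++ T)
    (hcST : c ∈ S ++ T) (hT : IsSegment R {y | R x y} T) :
    ∃ y ∈ S, ∃ z ∈ T, R x y ∧ R x z ∧ R y z := by
  by_contra! h
  have hstay {u w : V} (hu : u ∈ S) (hw : w ∈ S ++ T) (hxu : R x u) (hxw : R x w)
      (huw : R u w) : w ∈ S :=
    (List.mem_append.1 hw).resolve_right fun hwT => h u hu w hwT hxu hxw huw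
  have hcS : c ∈ S := hstay (hstay haS hbST ha hb hab) hcST hb hc hbc
  obtain ⟨t, htT, ht⟩ := hT.exists_mem_listEnds
  have hxt : R x t := hT.listEnds_subset ht
  obtain hac' | hat | hct := hcf ha hc hxt
  exacts [hac hac', h a haS t htT ha hxt hat, h c hcS t htT hc hxt hct]

variable [Std.Symm R]

lemma IsClawFree.of_not_adj (hcf : IsClawFree R) {y a b : V} (hy : R x y) (ha : R y a) (hb : R y b)
    (hxa : ¬R x a) (hxb : ¬R x b) : R a b := by
  obtain h | h | h := hcf ha hb (symm_of R hy)
  exacts [h, (hxa (symm_of R h)).elim, (hxb (symm_of R h)).elim]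

protected lemma IsClawFree.localCompletion (hcf : IsClawFree R) :
    IsClawFree (localCompletion R x) := by
  intro y a b c ha hb hc
  by_cases hy : R x y
  · have hab := hcf.of_not_adj (a := a) (b := b) hy
    have hac := hcf.of_not_adj (a := a) (b := c) hy
    have hbc := hcf.of_not_adj (a := b) (b := c) hy
    unfold localCompletion at *
    tauto
  · have := hcf (x := y) (a := a) (b := b) (c := c)
    unfold localCompletion at *
    tauto

/-- Cut the path at its steps inside the neighbourhood of `x`, and splice out as singletons the
interior entries adjacent to `x`: their two neighbours are adjacent by claw-freeness. -/
lemma IsClawFree.exists_segments (hcf : IsClawFree R) (hne : M ≠ [])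
    (hM : M.IsChain (localCompletion R x)) (hends : listEnds M ⊆ {y | R x y}) :
    ∃ F : List (List V), (∀ S ∈ F, IsSegment R {y | R x y} S) ∧ F.flatten.Perm M := by
  induction hn : M.length using Nat.strong_induction_on generalizing M with | _ n ih
  by_cases! hcut : ∃ A u v B, M = A ++ u :: v :: B ∧ R x u ∧ R x v
  · obtain ⟨A, u, v, B, hsplit, hu, hv⟩ := hcut
    obtain rfl : M = (A ++ [u]) ++ v :: B := by simp [hsplit]
    obtain ⟨hA, hB, -⟩ := List.isChain_append.1 hM
    obtain ⟨F, hF, hFA⟩ := ih (A ++ [u]).length (by simp [← hn]) (by simp) hA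
      (listEnds_subset_of_append_left hends (by simpa using hu)) rfl
    obtain ⟨G, hG, hGB⟩ := ih (v :: B).length
      (by simp only [← hn, List.length_append, List.length_cons]; omega) (by simp) hB
      (listEnds_subset_of_append_right hends (by simpa using hv)) rfl
    exact ⟨F ++ G, List.forall_mem_append.2 ⟨hF, hG⟩, by simpa using hFA.append hGB⟩
  by_cases! hsplice : ∃ A u k v B, M = A ++ u :: k :: v :: B ∧ R x k
  · obtain ⟨A, u, k, v, B, rfl, hk⟩ := hsplice
    have hu : ¬R x u := fun hu => hcut A u k (v :: B) rfl hu hk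
    have hv : ¬R x v := fun hv => hcut (A ++ [u]) k v B (by simp) hk hv
    rw [List.isChain_append_cons_cons, List.isChain_cons_cons] at hM
    obtain ⟨hA, huk, hkv, hB⟩ := hM
    have huv : R u v := hcf.of_not_adj hk (symm_of R (huk.resolve_right fun h => hu h.1))
      (hkv.resolve_right fun h => hv h.2) hu hv
    obtain ⟨F, hF, hperm⟩ := ih (A ++ u :: v :: B).length (by simp [← hn]) (by simp)
      (List.isChain_append_cons_cons.2 ⟨hA, .inl huv, hB⟩) (by
        convert hends using 1
        simp [listEnds]) rfl
    refine ⟨[k] :: F, List.forall_mem_cons.2 ⟨.singleton hk, hF⟩, ?_⟩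
    calc ([k] :: F).flatten
      _ = k :: F.flatten := rfl
      _ ~ k :: (A ++ u :: v :: B) := hperm.cons k
      _ ~ A ++ u :: k :: v :: B := by simpa using (List.perm_middle (l₁ := A ++ [u])).symm
  exact ⟨[M], by simpa using isSegment_of_isChain_localCompletion hne hM hends hcut hsplice,
    by simp⟩

lemma isChain_and_listEnds_subset_of_chain_cons
    (hM : ((x :: M : List V) : Cycle V).Chain (localCompletion R x)) :
    M.IsChain (localCompletion R x) ∧ listEnds M ⊆ {y | R x y} := by
  rw [Cycle.chain_coe_cons, List.isChain_cons, List.isChain_append] at hM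
  obtain ⟨hhead, hM, -, hlast⟩ := hM
  refine ⟨hM, ?_⟩
  rintro y (hy | hy)
  · exact (hhead y (List.mem_head?_append_of_mem_head? hy)).elim id And.right
  · exact (hlast y hy x rfl).elim (symm_of R) And.left

variable [Std.Refl R]

lemma chain_cons_of_listEnds_subset (hM : M.IsChain R) (hends : listEnds M ⊆ {y | R x y}) :
    ((x :: M : List V) : Cycle V).Chain R := by
  rw [Cycle.chain_coe_cons, List.isChain_cons, List.isChain_append]
  refine ⟨fun y hy => ?_, hM, List.isChain_singleton x, fun u hu v hv => ?_⟩
  · obtain _ | ⟨m, M⟩ := M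
    · obtain rfl : x = y := by simpa using hy
      exact refl_of R x
    · exact hends (.inl hy)
  · obtain rfl : x = v := by simpa using hv
    exact symm_of R (hends (.inr hu))

lemma IsClawFree.exists_perm_chain_of_endsUnrelated (hcf : IsClawFree R)
    (hS : IsSegment R {y | R x y} S) (hT : IsSegment R {y | R x y} T) (hST : EndsUnrelated R S T)
    {y z : V} (hy : y ∈ S) (hz : z ∈ T) (hxy : R x y) (hxz : R x z) (hyz : R y z) :
    ∃ L, L ~ x :: (S ++ T) ∧ (L : Cycle V).Chain R := by
  obtain ⟨S', hSS', hS', hSends, hyS⟩ :=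
    hS.exists_perm_getLast_of_closed (hcf.closed_of_endsUnrelated hS hT hST) hy hxy
  obtain ⟨T', hTT', hT', hTends, hzT⟩ := hT.exists_perm_getLast_of_closed
    (hcf.closed_of_endsUnrelated hT hS fun u hu v hv h => hST v hv u hu (symm_of R h)) hz hxz
  refine ⟨x :: (S' ++ T'.reverse), (hSS'.append (T'.reverse_perm.trans hTT')).cons x,
    chain_cons_of_listEnds_subset ?_ ?_⟩
  · refine List.isChain_append.2
      ⟨hS', List.isChain_reverse.2 (hT'.imp fun _ _ => symm_of R), fun u hu v hv => ?_⟩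
    rw [List.head?_reverse] at hv
    rwa [← Option.mem_unique hyS hu, ← Option.mem_unique hzT hv]
  · exact listEnds_append_subset hSends (listEnds_reverse T' ▸ hTends)

lemma IsClawFree.exists_perm_chain_of_diamond (hcf : IsClawFree R)
    (hS : IsSegment R {y | R x y} S) (hT : IsSegment R {y | R x y} T) (hST : EndsUnrelated R S T)
    {a b c : V} (ha : R x a) (hb : R x b) (hc : R x c) (hab : R a b) (hbc : R b c) (hac : ¬R a c)
    (haST : a ∈ S ++ T) (hbST : b ∈ S ++ T) (hcST : c ∈ S ++ T) :
    ∃ L, L ~ x :: (S ++ T) ∧ (L : Cycle V).Chain R := by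
  obtain haS | haT := List.mem_append.1 haST
  · obtain ⟨y, hy, z, hz, hxy, hxz, hyz⟩ :=
      hcf.exists_rel_of_diamond ha hb hc hab hbc hac haS hbST hcST hT
    exact hcf.exists_perm_chain_of_endsUnrelated hS hT hST hy hz hxy hxz hyz
  · obtain ⟨z, hz, y, hy, hxz, hxy, hzy⟩ := hcf.exists_rel_of_diamond ha hb hc hab hbc hac haT
      (List.perm_append_comm.mem_iff.1 hbST) (List.perm_append_comm.mem_iff.1 hcST) hS
    exact hcf.exists_perm_chain_of_endsUnrelated hS hT hST hy hz hxy hxz (symm_of R hzy)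

theorem IsClawFree.exists_perm_chain_of_localCompletion (hcf : IsClawFree R) {a b c : V}
    (ha : R x a) (hb : R x b) (hc : R x c) (hab : R a b) (hbc : R b c) (hbx : b ≠ x)
    (hac : ¬R a c) {L : List V} (hL : (L : Cycle V).Chain (localCompletion R x))
    (hmem : ∀ v, v ∈ L) :
    ∃ L', L' ~ L ∧ (L' : Cycle V).Chain R := by
  obtain ⟨A, B, rfl⟩ := List.append_of_mem (hmem x)
  rw [Cycle.coe_eq_coe.2 List.isRotated_append, List.cons_append] at hL
  have hperm : x :: (B ++ A) ~ A ++ x :: B := List.perm_append_comm (l₁ := x :: B)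
  generalize B ++ A = M at hL hperm
  have hmemM {v : V} (hv : v ≠ x) : v ∈ M := by simpa [hv] using hperm.mem_iff.2 (hmem v)
  have haM : a ∈ M := hmemM fun h => hac (h ▸ hc)
  have hbM : b ∈ M := hmemM hbx
  have hcM : c ∈ M := hmemM fun h => hac (h ▸ symm_of R ha)
  obtain ⟨hM, hends⟩ := isChain_and_listEnds_subset_of_chain_cons hL
  obtain ⟨F₀, hF₀, hperm₀⟩ := hcf.exists_segments (List.ne_nil_of_mem haM) hM hends
  obtain ⟨F, hF, hFperm, hpw⟩ := exists_pairwise_endsUnrelated hF₀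
  have hFM := hFperm.trans hperm₀
  suffices h : ∃ L', L' ~ x :: F.flatten ∧ (L' : Cycle V).Chain R by
    obtain ⟨L', hL', hchain⟩ := h
    exact ⟨L', hL'.trans ((hFM.cons x).trans hperm), hchain⟩
  match F, hcf.length_le_two_of_pairwise hF hpw with
  | [], _ => exact (List.not_mem_nil (hFM.mem_iff.2 haM)).elim
  | [S], _ =>
    have hS := hF S (by simp)
    exact ⟨x :: S, by simp, chain_cons_of_listEnds_subset hS.isChain hS.listEnds_subset⟩
  | [S, T], _ =>
    have hS := hF S (by simp)
    have hT := hF T (by simp)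
    have hmemST {v : V} (hv : v ∈ M) : v ∈ S ++ T := by simpa using hFM.mem_iff.2 hv
    simpa using hcf.exists_perm_chain_of_diamond hS hT (by simpa using hpw) ha hb hc hab hbc hac
      (hmemST haM) (hmemST hbM) (hmemST hcM)

end LocalCompletion

section ClawFree

variable {V : Type*} {R : V → V → Prop}

theorem IsClawFree.exists_short_closed_cover [Fintype V] [hrefl : Std.Refl R] [hsymm : Std.Symm R]
    (hcf : IsClawFree R) (hcard : 2 ≤ Fintype.card V) (hconn : ConnectedOn R Set.univ)
    (hconn' : ∀ v, ConnectedOn R {v}ᶜ) :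
    ∃ L : List V, (L : Cycle V).Chain R ∧ (∀ v, v ∈ L) ∧
      3 * L.length + 2 ≤ 4 * Fintype.card V := by
  revert hrefl hsymm
  induction R using WellFoundedGT.induction with | _ R ih
  intro hrefl hsymm
  by_cases hdf : IsDiamondFree R
  · exact hdf.exists_short_closed_cover hcf hcard hconn hconn'
  · simp only [IsDiamondFree, not_forall] at hdf
    obtain ⟨x, a, b, c, ha, hb, hc, hab, hbc, hbx, hac⟩ := hdf
    have hlt : R < localCompletion R x :=
      (le_localCompletion R x).lt_of_not_ge fun h => hac (h a c (.inr ⟨ha, hc⟩))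
    obtain ⟨L, hL, hmem, hlen⟩ := ih _ hlt hcf.localCompletion (hconn.mono hlt.le)
      fun v => (hconn' v).mono hlt.le
    obtain ⟨L', hperm, hL'⟩ :=
      hcf.exists_perm_chain_of_localCompletion ha hb hc hab hbc hbx hac hL hmem
    exact ⟨L', hL', fun v => hperm.mem_iff.2 (hmem v), hperm.length_eq ▸ hlen⟩

end ClawFree

section ClosedAdjacency

variable {V : Type*} {G : SimpleGraph V}

instance : Std.Symm G.Adj := G.symm

lemma isClawFree_reflGen_adj (h : IsEmpty (completeBipartiteGraph (Fin 1) (Fin 3) ↪g G)) :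
    IsClawFree (Relation.ReflGen G.Adj) := by
  intro x a b c ha hb hc
  by_contra! hne
  have hx {y z : V} (hy : Relation.ReflGen G.Adj x y) (hz : Relation.ReflGen G.Adj x z)
      (hyz : ¬Relation.ReflGen G.Adj y z) : G.Adj x y ∧ G.Adj x z := by
    obtain _ | hy := hy
    · exact (hyz hz).elim
    · obtain _ | hz := hz
      · exact (hyz (.single hy.symm)).elim
      · exact ⟨hy, hz⟩
  obtain ⟨ha, hb⟩ := hx ha hb hne.1
  obtain ⟨-, hc⟩ := hx (.single ha) hc hne.2.1
  simp only [Relation.reflGen_iff, not_or] at hne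
  obtain ⟨⟨hab, hab'⟩, ⟨hac, hac'⟩, hbc, hbc'⟩ := hne
  refine h.false ⟨⟨Sum.elim (fun _ => x) ![a, b, c], ?_⟩, ?_⟩
  · refine (Function.injective_of_subsingleton _).sumElim ?_ fun _ i => ?_
    · simp only [Function.Injective, Fin.forall_fin_succ]
      simp [hab, hac, hbc, Ne.symm hab, Ne.symm hac, Ne.symm hbc]
    · fin_cases i
      exacts [ha.ne, hb.ne, hc.ne]
  · rintro (i | i) (j | j)
    · simp
    · fin_cases j <;> simpa
    · fin_cases i <;> simpa using Adj.symm ‹_›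
    · fin_cases i <;> fin_cases j <;> simp [*, adj_comm]

lemma connectedOn_of_connected_induce {A : Set V} (h : (G.induce A).Connected) :
    ConnectedOn (Relation.ReflGen G.Adj) A := by
  rintro P ⟨u, hu, huP⟩ ⟨w, hw, hwP⟩
  obtain ⟨p⟩ := h.preconnected ⟨u, hu⟩ ⟨w, hw⟩
  obtain ⟨d, -, hd, hd'⟩ := p.exists_boundary_dart (Subtype.val ⁻¹' P) huP hwP
  exact ⟨d.fst, ⟨d.fst.2, hd⟩, d.snd, ⟨d.snd.2, hd'⟩, .single d.adj⟩

lemma connectedOn_univ_of_connected (h : G.Connected) :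
    ConnectedOn (Relation.ReflGen G.Adj) Set.univ :=
  connectedOn_of_connected_induce ((induceUnivIso G).connected_iff.2 h)

lemma exists_walk_of_isChain_reflGen {v u : V} {L : List V}
    (h : (v :: (L ++ [u])).IsChain (Relation.ReflGen G.Adj)) :
    ∃ w : G.Walk v u, (∀ y ∈ L, y ∈ w.support) ∧ w.length ≤ L.length + 1 := by
  induction L generalizing v with
  | nil =>
    obtain _ | hadj := List.isChain_pair.1 h
    · exact ⟨.nil, by simp⟩
    · exact ⟨hadj.toWalk, by simp⟩
  | cons m L ih =>
    rw [List.cons_append, List.isChain_cons_cons] at h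
    obtain ⟨w, hw, hlen⟩ := ih h.2
    obtain _ | hadj := h.1
    · exact ⟨w, by simpa using hw, by simpa using hlen.trans (Nat.le_succ _)⟩
    · exact ⟨.cons hadj w, by grind [Walk.support_cons, Walk.start_mem_support], by simpa⟩

lemma exists_closed_walk_of_chain_reflGen {L : List V} (hne : L ≠ [])
    (h : (L : Cycle V).Chain (Relation.ReflGen G.Adj)) :
    ∃ (v : V) (w : G.Walk v v), (∀ u ∈ L, u ∈ w.support) ∧ w.length ≤ L.length := by
  obtain ⟨v, L, rfl⟩ := List.exists_cons_of_ne_nil hne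
  obtain ⟨w, hw, hlen⟩ := exists_walk_of_isChain_reflGen ((Cycle.chain_coe_cons _ _ _).1 h)
  exact ⟨v, w, List.forall_mem_cons.2 ⟨w.start_mem_support, hw⟩, hlen⟩

end ClosedAdjacency

/-- Every 2-vertex-connected claw-free simple graph on `n ≥ 1`
vertices has a spanning closed walk of length at most `4n/3 − 2/3`.
Claw-freeness is expressed as the absence of an induced-subgraph embedding of
`K_{1,3}` into `G`. -/
theorem spanning_closed_walk_clawfree_two_connected
    {V : Type*} [Fintype V]
    (G : SimpleGraph V)
    (hn : 1 ≤ Fintype.card V)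
    (hconn : G.Connected)
    (hclawfree : IsEmpty (completeBipartiteGraph (Fin 1) (Fin 3) ↪g G))
    (h2vc : ∀ v : V, (G.induce {u : V | u ≠ v}).Connected) :
    ∃ (v : V) (w : G.Walk v v), (∀ u : V, u ∈ w.support) ∧
      (w.length : ℝ) ≤ 4 * Fintype.card V / 3 - 2 / 3 := by
  have v₀ : V := Classical.choice hconn.nonempty
  obtain hsub | hnontrivial := subsingleton_or_nontrivial V
  · have hn' : (1 : ℝ) ≤ Fintype.card V := by exact_mod_cast hn
    exact ⟨v₀, .nil, fun u => by simp [Subsingleton.elim u v₀], by simp; linarith⟩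
  · obtain ⟨L, hL, hmem, hlen⟩ := (isClawFree_reflGen_adj hclawfree).exists_short_closed_cover
      Fintype.one_lt_card (connectedOn_univ_of_connected hconn)
      fun v => connectedOn_of_connected_induce (h2vc v)
    obtain ⟨v, w, hw, hwL⟩ :=
      exists_closed_walk_of_chain_reflGen (List.ne_nil_of_mem (hmem v₀)) hL
    have hlen' : (3 * w.length + 2 : ℝ) ≤ 4 * Fintype.card V := by
      exact_mod_cast (by omega : 3 * w.length + 2 ≤ 4 * Fintype.card V)
    exact ⟨v, w, fun u => hw u (hmem u), by linarith⟩
end
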